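/- arXiv:1609.07017 — 2 statements merged into one kernel-verified Lean document; each statement's English description precedes it below -/
import Mathlib

section
/- Let A be a nonzero Noetherian commutative ring, let R = A[x,y,u,v] be the polynomial ring, and set x₁ = xu, x₂ = yv, x₃ = xv + yu, I = (x₁,x₂,x₃)R. Then H³_I(R) ≅ H⁴_{(x,y,u,v)}(R) ≠ 0, yet 𝔥³_x(R) = 0 and 𝔥̲³_x(R) = 0. In particular, x₁, x₂, x₃ is not a Q-sequence in R. -/
open scoped BigOperators ENNReal
open MvPolynomial

universe u

/-- A filtration of `M` of length `h` whose factors are cyclic modules killed by `J`. -/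
def HasQLFiltration (S : Type u) [CommRing S] (J : Ideal S)
    (M : Type u) [AddCommGroup M] [Module S M] (h : ℕ) : Prop :=
  ∃ c : Fin (h + 1) → Submodule S M,
    Monotone c ∧ c 0 = ⊥ ∧ c (Fin.last h) = ⊤ ∧
    ∀ i : Fin h,
      (∃ m : M, c i.succ = c i.castSucc ⊔ Submodule.span S {m}) ∧
      ∀ a ∈ J, ∀ x ∈ c i.succ, a • x ∈ c i.castSucc

/-- The `J`-quasilength of `M`. -/
noncomputable def quasilength (S : Type u) [CommRing S] (J : Ideal S)
    (M : Type u) [AddCommGroup M] [Module S M] : ℕ∞ :=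
  sInf {n : ℕ∞ | ∃ h : ℕ, n = (h : ℕ∞) ∧ HasQLFiltration S J M h}

/-- The ideal `(x₁^{t₁}, …, x_d^{t_d})`. -/
def powerIdeal {R : Type u} [CommRing R] {d : ℕ} (x : Fin d → R) (t : Fin d → ℕ) : Ideal R :=
  Ideal.span (Set.range fun i => x i ^ t i)

/-- The content `𝔥^d_x(M)` of `M` with respect to `x₁, …, x_d`. -/
noncomputable def content {R : Type u} [CommRing R] {d : ℕ} (x : Fin d → R)
    (M : Type u) [AddCommGroup M] [Module R M] : ℝ≥0∞ :=
  ⨆ s : ℕ, ⨅ t : {t : Fin d → ℕ // ∀ i, s ≤ t i ∧ 0 < t i},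
    (quasilength R (Ideal.span (Set.range x))
        (M ⧸ (powerIdeal x (t : Fin d → ℕ) • (⊤ : Submodule R M))) : ℝ≥0∞) /
      ∏ i, ((t : Fin d → ℕ) i : ℝ≥0∞)

/-- The submodule `(I_t M)^lim = ⋃_k ((x₁^{t₁+k},…,x_d^{t_d+k})M :_M (x₁⋯x_d)^k)`. -/
noncomputable def limSubmodule {R : Type u} [CommRing R] {d : ℕ} (x : Fin d → R)
    (M : Type u) [AddCommGroup M] [Module R M] (t : Fin d → ℕ) : Submodule R M :=
  ⨆ k : ℕ, Submodule.comap (LinearMap.lsmul R M ((∏ i, x i) ^ k))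
    ((Ideal.span (Set.range fun i => x i ^ (t i + k))) • (⊤ : Submodule R M))

/-- The underlined content `𝔥̲^d_x(M)` of `M` with respect to `x₁, …, x_d`. -/
noncomputable def ucontent {R : Type u} [CommRing R] {d : ℕ} (x : Fin d → R)
    (M : Type u) [AddCommGroup M] [Module R M] : ℝ≥0∞ :=
  ⨆ s : ℕ, ⨅ t : {t : Fin d → ℕ // ∀ i, s ≤ t i ∧ 0 < t i},
    (quasilength R (Ideal.span (Set.range x))
        (M ⧸ limSubmodule x M (t : Fin d → ℕ)) : ℝ≥0∞) /
      ∏ i, ((t : Fin d → ℕ) i : ℝ≥0∞)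

/-- `x₁, …, x_d` is a Q-sequence in `S`. -/
def IsQSequence {d : ℕ} {S : Type u} [CommRing S] (x : Fin d → S) : Prop :=
  Ideal.span (Set.range x) ≠ ⊤ ∧
  ∀ t : ℕ, 0 < t →
    ((t : ℕ∞) ^ d) ≤ quasilength S (Ideal.span (Set.range x))
      (S ⧸ Ideal.span (Set.range fun i => x i ^ t))

section QL
variable {R : Type u} [CommRing R]

/-- `Reach I n a b`: `b` is obtained from `a` by `n` elementary steps. -/
inductive Reach (I : Ideal R) : ℕ → Ideal R → Ideal R → Prop
  | refl (a : Ideal R) : Reach I 0 a a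
  | step {n : ℕ} {a b : Ideal R} (h : Reach I n a b) (m : R) (hm : ∀ r ∈ I, r * m ∈ b) :
      Reach I (n + 1) a (b ⊔ Ideal.span {m})

namespace Reach
variable {I : Ideal R}

theorem trans {n n' : ℕ} {a b c : Ideal R} (h : Reach I n a b) (h' : Reach I n' b c) :
    Reach I (n + n') a c := by
  induction h' with
  | refl a => exact h
  | step _ m hm ih => exact (ih h).step m hm

theorem supr {n : ℕ} {a b : Ideal R} (h : Reach I n a b) (c : Ideal R) :
    Reach I n (a ⊔ c) (b ⊔ c) := by
  induction h with
  | refl a => exact .refl _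
  | step _ m hm ih =>
    rw [sup_right_comm]
    exact ih.step m fun r hr => Ideal.mem_sup_left (hm r hr)

theorem mulf {n : ℕ} {a b : Ideal R} (h : Reach I n a b) (f : R) (c : Ideal R) :
    Reach I n (Ideal.span {f} * a ⊔ c) (Ideal.span {f} * b ⊔ c) := by
  induction h with
  | refl a => exact .refl _
  | step _ m hm ih =>
    rw [Ideal.mul_sup, Ideal.span_singleton_mul_span_singleton, sup_right_comm]
    refine ih.step _ fun r hr => Ideal.mem_sup_left ?_
    rw [mul_left_comm]
    exact Ideal.mul_mem_mul (Ideal.mem_span_singleton_self f) (hm r hr)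

theorem mono {n : ℕ} {a b : Ideal R} (h : Reach I n a ⊤) (hab : a ≤ b) : Reach I n b ⊤ := by
  have := h.supr b
  rwa [sup_eq_right.2 hab, top_sup_eq] at this

theorem ext {n n' : ℕ} {a b : Ideal R} (f : R) (h : Reach I n (a ⊔ Ideal.span {f}) ⊤)
    (h' : Reach I n' b ⊤) (hf : ∀ r ∈ b, f * r ∈ a) : Reach I (n' + n) a ⊤ := by
  have h2 := h'.mulf f a
  rw [Ideal.mul_top, sup_comm _ a, sup_comm _ a, sup_eq_left.2] at h2
  · exact h2.trans h
  · rw [Ideal.span_singleton_mul_le_iff]; exact hf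

theorem base {a : Ideal R} (h : I ≤ a) : Reach I 1 a ⊤ := by
  have := (Reach.refl (I := I) a).step 1 fun r hr => by simpa using h hr
  simpa using this

theorem pq1 (p q : R) (h : I ≤ Ideal.span {p, q}) (s : ℕ) :
    Reach I s (Ideal.span {p ^ s, q}) ⊤ := by
  induction s with
  | zero => 
    have : Ideal.span {p ^ 0, q} = ⊤ := by
      rw [Ideal.eq_top_iff_one]; exact Ideal.subset_span (by simp)
    rw [this]; exact .refl _
  | succ s ih =>
    refine Reach.ext p ((base h).mono ?_) ih ?_
    · rw [Ideal.span_le]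
      rintro _ (rfl | rfl)
      · exact Ideal.mem_sup_right (Ideal.mem_span_singleton_self _)
      · exact Ideal.mem_sup_left (Ideal.subset_span (by simp))
    · intro r hr
      obtain ⟨c, d, rfl⟩ := Ideal.mem_span_pair.1 hr
      exact Ideal.mem_span_pair.2 ⟨c, d * p, by ring⟩

theorem pq (p q : R) (h : I ≤ Ideal.span {p, q}) (s t : ℕ) :
    Reach I (t * s) (Ideal.span {p ^ s, q ^ t}) ⊤ := by
  induction t with
  | zero => 
    have : Ideal.span {p ^ s, q ^ 0} = ⊤ := by
      rw [Ideal.eq_top_iff_one]; exact Ideal.subset_span (by simp)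
    rw [this, zero_mul]; exact .refl _
  | succ t ih =>
    rw [Nat.succ_mul]
    refine Reach.ext q ((pq1 p q h s).mono ?_) ih ?_
    · rw [Ideal.span_le]
      rintro _ (rfl | rfl)
      · exact Ideal.mem_sup_left (Ideal.subset_span (by simp))
      · exact Ideal.mem_sup_right (Ideal.mem_span_singleton_self _)
    · intro r hr
      obtain ⟨c, d, rfl⟩ := Ideal.mem_span_pair.1 hr
      exact Ideal.mem_span_pair.2 ⟨c * q, d, by ring⟩

theorem toFun {n : ℕ} {a b : Ideal R} (h : Reach I n a b) : ∃ c : ℕ → Ideal R,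
    c 0 = a ∧ c n = b ∧ ∀ i < n, ∃ m, c (i + 1) = c i ⊔ Ideal.span {m} ∧ ∀ r ∈ I, r * m ∈ c i := by
  induction h with
  | refl a => exact ⟨fun _ => a, rfl, rfl, by simp⟩
  | @step n a b _ m hm ih =>
    obtain ⟨c, h0, hn, hc⟩ := ih
    refine ⟨fun i => if i ≤ n then c i else b ⊔ Ideal.span {m}, by simp [h0], by simp, ?_⟩
    intro i hi
    rcases Nat.lt_succ_iff_lt_or_eq.1 hi with h | rfl
    · have h1 : i + 1 ≤ n := h
      have h2 : i ≤ n := h.le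
      simpa [h1, h2] using hc i h
    · exact ⟨m, by simp [hn], by simpa [hn] using hm⟩

theorem hasQL {n : ℕ} {a : Ideal R} (h : Reach I n a ⊤) {M : Type u} [AddCommGroup M] [Module R M]
    (π : R →ₗ[R] M) (hπ : Function.Surjective π) (ha : ∀ r ∈ a, π r = 0) :
    HasQLFiltration R I M n := by
  obtain ⟨c, h0, hn, hc⟩ := h.toFun
  refine ⟨fun i => Submodule.map π (c i), ?_, ?_, ?_, ?_⟩
  · rw [Fin.monotone_iff_le_succ]
    intro i
    obtain ⟨m, hm, -⟩ := hc i i.2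
    apply Submodule.map_mono
    simp only [Fin.val_castSucc, Fin.val_succ]
    rw [hm]
    exact le_sup_left
  · rw [eq_bot_iff]
    rintro _ ⟨r, hr, rfl⟩
    have hr : r ∈ c 0 := hr
    rw [h0] at hr
    simpa using ha r hr
  · simp only [Fin.val_last, hn]
    rw [Submodule.map_top, LinearMap.range_eq_top.2 hπ]
  · intro i
    obtain ⟨m, hm, hI⟩ := hc i i.2
    simp only [Fin.val_castSucc, Fin.val_succ]
    refine ⟨⟨π m, ?_⟩, ?_⟩
    · rw [hm, Submodule.map_sup, Ideal.span, Submodule.map_span, Set.image_singleton]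
    · rintro r hr _ ⟨s, hs, rfl⟩
      rw [← map_smul]
      refine Submodule.mem_map_of_mem ?_
      have hs : s ∈ c (i + 1) := hs
      rw [hm] at hs
      obtain ⟨p, hp, q, hq, rfl⟩ := Submodule.mem_sup.1 hs
      obtain ⟨d, rfl⟩ := Ideal.mem_span_singleton'.1 hq
      rw [smul_add]
      refine add_mem (Submodule.smul_mem _ _ hp) ?_
      rw [smul_eq_mul, mul_left_comm]
      exact Ideal.mul_mem_left _ _ (hI r hr)

theorem ql_le {n : ℕ} {a : Ideal R} (h : Reach I n a ⊤) {M : Type u} [AddCommGroup M] [Module R M]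
    (π : R →ₗ[R] M) (hπ : Function.Surjective π) (ha : ∀ r ∈ a, π r = 0) :
    quasilength R I M ≤ n := 
  sInf_le ⟨n, rfl, h.hasQL π hπ ha⟩

theorem K (x y z w : R) (h1 : I ≤ Ideal.span {x, y}) (h2 : I ≤ Ideal.span {z, w}) (t : ℕ) :
    Reach I (5 * t ^ 2) (Ideal.span {z ^ t, (y * w) ^ t, (x * w + y * z) ^ t}) ⊤ := by
  have e : 5 * t ^ 2 = ((2 * t) * t + (t * (2 * t))) + t * t := by ring
  rw [e]
  refine Reach.ext (w ^ t) (b := Ideal.span {z ^ t, y ^ t, (x * w + y * z) ^ t})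
    ((pq z w h2 t t).mono ?_) ?_ ?_
  · rw [Ideal.span_le]
    rintro _ (rfl | rfl)
    · exact Ideal.mem_sup_left (Ideal.subset_span (by simp))
    · exact Ideal.mem_sup_right (Ideal.mem_span_singleton_self _)
  · refine Reach.ext (x ^ (2 * t)) ((pq x y h1 (2 * t) t).mono ?_) (pq z w h2 t (2 * t)) ?_
    · rw [Ideal.span_le]
      rintro _ (rfl | rfl)
      · exact Ideal.mem_sup_right (Ideal.mem_span_singleton_self _)
      · exact Ideal.mem_sup_left (Ideal.subset_span (by simp))
    · intro r hr
      obtain ⟨c, d, rfl⟩ := Ideal.mem_span_pair.1 hr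
      set L := Ideal.span {z ^ t, y ^ t, (x * w + y * z) ^ t}
      have hz : z ^ t ∈ L := Ideal.subset_span (by simp)
      have hl : (x * w + y * z) ^ t ∈ L := Ideal.subset_span (by simp)
      have hyz : (-(y * z)) ^ t ∈ L := by
        have : (-(y * z)) ^ t = (-y) ^ t * z ^ t := by rw [← mul_pow]; ring
        rw [this]; exact Ideal.mul_mem_left _ _ hz
      have := Ideal.add_pow_mem_of_pow_mem_of_le (I := L) (m := t) (n := t) (k := 2 * t) hl hyz (by omega)
      have e2 : x ^ (2 * t) * (c * z ^ t + d * w ^ (2 * t)) =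
        (x ^ (2 * t) * c) * z ^ t + d * (x * w + y * z + -(y * z)) ^ (2 * t) := by
        rw [add_neg_cancel_right, mul_pow]; ring
      rw [e2]
      exact add_mem (Ideal.mul_mem_left _ _ hz) (Ideal.mul_mem_left _ _ this)
  · intro r hr
    induction hr using Submodule.span_induction with
    | mem r hr => 
      rcases hr with rfl | rfl | rfl
      · exact Ideal.mul_mem_left _ _ (Ideal.subset_span (by simp))
      · rw [← mul_pow, mul_comm]
        exact (Ideal.subset_span (by simp))
      · exact Ideal.mul_mem_left _ _ (Ideal.subset_span (by simp))
    | zero => simp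
    | add a b _ _ ha hb => rw [mul_add]; exact add_mem ha hb
    | smul c a _ ha => rw [smul_eq_mul, mul_left_comm]; exact Ideal.mul_mem_left _ _ ha

theorem M (x y z w : R) (h1 : I ≤ Ideal.span {x, y}) (h2 : I ≤ Ideal.span {z, w}) (t : ℕ) :
    Reach I (10 * t ^ 2) (Ideal.span {(x * z) ^ t, (y * w) ^ t, (x * w + y * z) ^ t}) ⊤ := by
  have e : 10 * t ^ 2 = 5 * t ^ 2 + 5 * t ^ 2 := by ring
  rw [e]
  refine Reach.ext (x ^ t) ((K z w x y h2 h1 t).mono ?_) (K x y z w h1 h2 t) ?_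
  · rw [Ideal.span_le]
    rintro _ (rfl | rfl | rfl)
    · exact Ideal.mem_sup_right (Ideal.mem_span_singleton_self _)
    · exact Ideal.mem_sup_left (Ideal.subset_span (by simp [mul_comm]))
    · exact Ideal.mem_sup_left (Ideal.subset_span (by simp [mul_comm, add_comm]))
  · intro r hr
    induction hr using Submodule.span_induction with
    | mem r hr => 
      rcases hr with rfl | rfl | rfl
      · rw [← mul_pow]
        exact (Ideal.subset_span (by simp))
      · exact Ideal.mul_mem_left _ _ (Ideal.subset_span (by simp))
      · exact Ideal.mul_mem_left _ _ (Ideal.subset_span (by simp))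
    | zero => simp
    | add a b _ _ ha hb => rw [mul_add]; exact add_mem ha hb
    | smul c a _ ha => rw [smul_eq_mul, mul_left_comm]; exact Ideal.mul_mem_left _ _ ha

end Reach

variable (x y z w : R)

theorem seq_le1 : Ideal.span (Set.range ![x * z, y * w, x * w + y * z]) ≤ Ideal.span {x, y} := by
  rw [Ideal.span_le]
  rintro _ ⟨i, rfl⟩
  rw [SetLike.mem_coe, Ideal.mem_span_pair]
  fin_cases i
  · exact ⟨z, 0, by simp; ring⟩
  · exact ⟨0, w, by simp; ring⟩
  · exact ⟨w, z, by simp; ring⟩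

theorem seq_le2 : Ideal.span (Set.range ![x * z, y * w, x * w + y * z]) ≤ Ideal.span {z, w} := by
  rw [Ideal.span_le]
  rintro _ ⟨i, rfl⟩
  rw [SetLike.mem_coe, Ideal.mem_span_pair]
  fin_cases i
  · exact ⟨x, 0, by simp⟩
  · exact ⟨0, y, by simp⟩
  · exact ⟨y, x, by simp; ring⟩

theorem seq_reach (t : ℕ) : Reach (Ideal.span (Set.range ![x * z, y * w, x * w + y * z]))
    (10 * t ^ 2) (Ideal.span (Set.range fun i => ![x * z, y * w, x * w + y * z] i ^ t)) ⊤ := by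
  refine (Reach.M x y z w (seq_le1 x y z w) (seq_le2 x y z w) t).mono (Ideal.span_mono ?_)
  rintro _ (rfl | rfl | rfl)
  · exact ⟨0, rfl⟩
  · exact ⟨1, rfl⟩
  · exact ⟨2, rfl⟩

theorem iSup_iInf_zero (q : (Fin 3 → ℕ) → ℕ∞) (hq : ∀ t, q (fun _ => t) ≤ (10 * t ^ 2 : ℕ)) :
    (⨆ s : ℕ, ⨅ t : {t : Fin 3 → ℕ // ∀ i, s ≤ t i ∧ 0 < t i},
      ((q t : ℝ≥0∞) / ∏ i, ((t : Fin 3 → ℕ) i : ℝ≥0∞))) = 0 := by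
  rw [ENNReal.iSup_eq_zero]
  intro s
  rw [← nonpos_iff_eq_zero]
  have key : ∀ t : ℕ, s ≤ t → 0 < t → (⨅ t : {t : Fin 3 → ℕ // ∀ i, s ≤ t i ∧ 0 < t i},
      ((q t : ℝ≥0∞) / ∏ i, ((t : Fin 3 → ℕ) i : ℝ≥0∞))) ≤ 10 / (t : ℝ≥0∞) := by
    intro t hs ht
    refine (iInf_le _ ⟨fun _ => t, fun _ => ⟨hs, ht⟩⟩).trans ?_
    have h1 : ((q fun _ => t) : ℝ≥0∞) ≤ 10 * (t : ℝ≥0∞) ^ 2 := by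
      have := ENat.toENNReal_le.2 (hq t)
      simpa using this
    simp only [Finset.prod_const, Finset.card_univ, Fintype.card_fin]
    have ht0 : (t : ℝ≥0∞) ≠ 0 := by simpa using ht.ne'
    refine (ENNReal.div_le_div_right h1 _).trans ?_
    rw [show (t : ℝ≥0∞) ^ 3 = t * t ^ 2 by ring]
    rw [ENNReal.mul_div_mul_right _ _ (by simpa using ht.ne') (by simp)]
  have lim : Filter.Tendsto (fun t : ℕ => 10 / (t : ℝ≥0∞)) Filter.atTop (nhds 0) := by
    have := ENNReal.Tendsto.const_div (a := 10) ENNReal.tendsto_nat_nhds_top (by simp)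
    simpa using this
  refine ge_of_tendsto lim ?_
  filter_upwards [Filter.eventually_ge_atTop (s + 1)] with t ht
  exact key t (by omega) (by omega)

theorem content_zero : content ![x * z, y * w, x * w + y * z] R = 0 := by
  refine iSup_iInf_zero (fun t => quasilength R _ (R ⧸ (powerIdeal _ t • (⊤ : Submodule R R)))) ?_
  intro t
  refine (seq_reach x y z w t).ql_le (Submodule.mkQ _) (Submodule.mkQ_surjective _) ?_
  intro r hr
  rw [Submodule.mkQ_apply, Submodule.Quotient.mk_eq_zero]
  simpa [powerIdeal] using hr

theorem ucontent_zero : ucontent ![x * z, y * w, x * w + y * z] R = 0 := by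
  refine iSup_iInf_zero (fun t => quasilength R _ (R ⧸ limSubmodule _ R t)) ?_
  intro t
  refine (seq_reach x y z w t).ql_le (Submodule.mkQ _) (Submodule.mkQ_surjective _) ?_
  intro r hr
  rw [Submodule.mkQ_apply, Submodule.Quotient.mk_eq_zero]
  refine Submodule.mem_iSup_of_mem 0 ?_
  simpa using hr

theorem not_Q : ¬ IsQSequence ![x * z, y * w, x * w + y * z] := by
  rintro ⟨-, h⟩
  have h1 := h 11 (by norm_num)
  have h2 := (seq_reach x y z w 11).ql_le (Submodule.mkQ _) (Submodule.mkQ_surjective _) (by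
    intro r hr
    rw [Submodule.mkQ_apply, Submodule.Quotient.mk_eq_zero]
    exact hr)
  have h3 := h1.trans h2
  have h4 : ((11 ^ 3 : ℕ) : ℕ∞) ≤ ((10 * 11 ^ 2 : ℕ) : ℕ∞) := by exact_mod_cast h3
  rw [Nat.cast_le] at h4
  norm_num at h4

end QL

section Comparison
open CategoryTheory Abelian Opposite

variable {R : Type u} [CommRing R]

/-- Elementary: two surjections with the same kernel have isomorphic targets. -/
theorem exists_equiv_of_ker {M N N' : Type*} [AddCommGroup M] [Module R M] [AddCommGroup N]
    [Module R N] [AddCommGroup N'] [Module R N'] (q : M →ₗ[R] N) (p : M →ₗ[R] N')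
    (hq : Function.Surjective q) (hp : Function.Surjective p) (h : ∀ z, q z = 0 ↔ p z = 0) :
    ∃ e : N ≃ₗ[R] N', ∀ z, e (q z) = p z := by
  have hk : LinearMap.ker q = LinearMap.ker p := by ext z; exact h z
  refine ⟨(q.quotKerEquivOfSurjective hq).symm.trans ((Submodule.quotEquivOfEq _ _ hk).trans
    (p.quotKerEquivOfSurjective hp)), fun z => ?_⟩
  have : (q.quotKerEquivOfSurjective hq).symm (q z) = Submodule.Quotient.mk z := by
    rw [LinearEquiv.symm_apply_eq]; rfl
  simp only [LinearEquiv.trans_apply, this]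
  rfl

section
variable {X Y : ModuleCat.{u} R} (P : ProjectiveResolution X) (n : ℕ)

/-- The functor whose derived functors give `Ext(-, Y)`. -/
noncomputable abbrev homFunctor (Y : ModuleCat.{u} R) : ModuleCat.{u} R ⥤ (ModuleCat.{u} R)ᵒᵖ :=
  ((linearYoneda R (ModuleCat.{u} R)).obj Y).rightOp

/-- The complex `Hom(P, Y)` in the opposite category. -/
noncomputable abbrev homCx (Y : ModuleCat.{u} R) : ChainComplex (ModuleCat.{u} R)ᵒᵖ ℕ :=
  ((homFunctor Y).mapHomologicalComplex _).obj P.complex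

/-- cocycles -/
noncomputable abbrev ZZ (Y : ModuleCat.{u} R) : ModuleCat.{u} R := ((homCx P Y).opcycles n).unop

/-- inclusion of cocycles -/
noncomputable def ii (Y : ModuleCat.{u} R) : ZZ P n Y ⟶ ModuleCat.of R (P.complex.X n ⟶ Y) :=
  ((homCx P Y).pOpcycles n).unop

/-- homology of the Hom complex is `Ext` -/
noncomputable def dIso (Y : ModuleCat.{u} R) : ((homCx P Y).homology n).unop ≅
    ((_root_.Ext R (ModuleCat.{u} R) n).obj (op X)).obj Y :=
  (P.isoLeftDerivedObj (homFunctor Y) n).unop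

/-- class map -/
noncomputable def qq (Y : ModuleCat.{u} R) :
    ZZ P n Y ⟶ ((_root_.Ext R (ModuleCat.{u} R) n).obj (op X)).obj Y :=
  ((homCx P Y).homologyι n).unop ≫ (dIso P n Y).hom

theorem ii_exact (f : P.complex.X n ⟶ Y) :
    (∃ z, ii P n Y z = f) ↔ P.complex.d (n + 1) n ≫ f = 0 := by
  have h : (ShortComplex.mk ((homCx P Y).d (n + 1) n) ((homCx P Y).pOpcycles n)
      (HomologicalComplex.d_pOpcycles _ _ _)).Exact :=
    ShortComplex.exact_of_g_is_cokernel _ ((homCx P Y).opcyclesIsCokernel (n + 1) n (by simp))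
  have h2 := (ShortComplex.ShortExact.moduleCat_exact_iff_function_exact _).1 h.unop
  exact (h2 f).symm

theorem ii_inj : Function.Injective (ii P n Y) := by
  have : Mono (ii P n Y) := by unfold ii; exact unop_mono_of_epi _
  exact (ModuleCat.mono_iff_injective _).1 this

theorem qq_surj : Function.Surjective (qq P n Y) := by
  have : Epi (qq P n Y) := by
    unfold qq
    have h1 : Epi ((homCx P Y).homologyι n).unop := unop_epi_of_mono _
    exact epi_comp _ _
  exact (ModuleCat.epi_iff_surjective _).1 this

theorem qq_eq_zero (z : ZZ P (n + 1) Y) :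
    qq P (n + 1) Y z = 0 ↔ ∃ g : P.complex.X n ⟶ Y, P.complex.d (n + 1) n ≫ g = ii P (n + 1) Y z := by
  have h : (ShortComplex.mk ((homCx P Y).homologyι (n + 1)) ((homCx P Y).fromOpcycles (n + 1) n)
      (by simp)).Exact :=
    ShortComplex.exact_of_f_is_kernel _ ((homCx P Y).homologyIsKernel (n + 1) n (by simp))
  have h2 := (ShortComplex.ShortExact.moduleCat_exact_iff_function_exact _).1 h.unop
  have h3 : qq P (n + 1) Y z = 0 ↔ ((homCx P Y).homologyι (n + 1)).unop z = 0 := by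
    unfold qq
    rw [ModuleCat.comp_apply]
    have hi := (ModuleCat.mono_iff_injective (dIso P (n + 1) Y).hom).1 inferInstance
    exact map_eq_zero_iff _ hi
  rw [h3]
  refine (h2 z).trans ?_
  have hd : ∀ g : P.complex.X n ⟶ Y,
      ii P (n + 1) Y (((homCx P Y).fromOpcycles (n + 1) n).unop g) = P.complex.d (n + 1) n ≫ g := by
    intro g
    have e : ((homCx P Y).fromOpcycles (n + 1) n).unop ≫ ((homCx P Y).pOpcycles (n + 1)).unop =
      ((homCx P Y).d (n + 1) n).unop := by
      rw [← unop_comp, HomologicalComplex.p_fromOpcycles]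
    exact congrArg (fun k => k.hom g) e
  constructor
  · rintro ⟨g, hg⟩
    exact ⟨g, (hd g).symm.trans (congrArg _ hg)⟩
  · rintro ⟨g, hg⟩
    refine ⟨g, ii_inj P (n + 1) ?_⟩
    rw [← hg]
    exact hd g

theorem zeta {X' : ModuleCat.{u} R} (P' : ProjectiveResolution X') (g : X' ⟶ X)
    (φ : P'.complex ⟶ P.complex) (comm : φ.f 0 ≫ P.π.f 0 = P'.π.f 0 ≫ g) (z : ZZ P n Y) :
    ∃ z' : ZZ P' n Y, ii P' n Y z' = φ.f n ≫ ii P n Y z ∧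
      qq P' n Y z' = (((_root_.Ext R (ModuleCat.{u} R) n).map g.op).app Y) (qq P n Y z) := by
  let ψ : homCx P' Y ⟶ homCx P Y := ((homFunctor Y).mapHomologicalComplex _).map φ
  let ζ : ZZ P n Y ⟶ ZZ P' n Y := (HomologicalComplex.opcyclesMap ψ n).unop
  refine ⟨ζ z, ?_, ?_⟩
  · have e : ζ ≫ ((homCx P' Y).pOpcycles n).unop = ((homCx P Y).pOpcycles n).unop ≫ (ψ.f n).unop := by
      rw [← unop_comp, ← unop_comp, HomologicalComplex.p_opcyclesMap]
    exact congrArg (fun k => k.hom z) e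
  · have e : ζ ≫ qq P' n Y = qq P n Y ≫ ((_root_.Ext R (ModuleCat.{u} R) n).map g.op).app Y := by
      have e1 := ProjectiveResolution.isoLeftDerivedObj_hom_naturality g P' P φ comm (homFunctor Y) n
      have e2 := HomologicalComplex.homologyι_naturality ψ n
      apply Quiver.Hom.op_inj
      change ((P'.isoLeftDerivedObj (homFunctor Y) n).hom ≫ (homCx P' Y).homologyι n) ≫
        HomologicalComplex.opcyclesMap ψ n = ((homFunctor Y).leftDerived n).map g ≫
        (P.isoLeftDerivedObj (homFunctor Y) n).hom ≫ (homCx P Y).homologyι n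
      refine (Category.assoc _ _ _).trans ?_
      refine (congrArg (fun k => (P'.isoLeftDerivedObj (homFunctor Y) n).hom ≫ k) e2.symm).trans ?_
      refine (Category.assoc _ _ _).symm.trans ?_
      refine Eq.trans ?_ (Category.assoc _ _ _)
      exact congrArg (fun k => k ≫ (homCx P Y).homologyι n) e1.symm
    exact congrArg (fun k => k.hom z) e

end

/-- class map to derived-category Ext -/
noncomputable def psi {X : ModuleCat.{u} R} (P : ProjectiveResolution X) (n : ℕ)
    (Y : ModuleCat.{u} R) : ZZ P n Y →ₗ[R] Abelian.Ext.{u} X Y n where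
  toFun z := P.extMk (ii P n Y z) (n + 1) rfl ((ii_exact P n _).1 ⟨z, rfl⟩)
  map_add' z z' := by
    rw [P.add_extMk]
    congr 1
    exact map_add _ _ _
  map_smul' r z := by
    rw [Abelian.Ext.smul_eq_comp_mk₀, P.extMk_comp_mk₀]
    congr 1
    exact (map_smul (ii P n Y).hom r z).trans (by simp)

theorem psi_surj {X : ModuleCat.{u} R} (P : ProjectiveResolution X) (n : ℕ)
    (Y : ModuleCat.{u} R) : Function.Surjective (psi P n Y) := by
  intro a
  obtain ⟨f, hf, rfl⟩ := P.extMk_surjective a (n + 1) rfl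
  obtain ⟨z, rfl⟩ := (ii_exact P n f).2 hf
  exact ⟨z, rfl⟩

theorem exists_cmp (n : ℕ) (X Y : ModuleCat.{u} R) :
    ∃ e : ((_root_.Ext R (ModuleCat.{u} R) (n + 1)).obj (op X)).obj Y ≃ₗ[R]
      Abelian.Ext.{u} X Y (n + 1), ∀ z, e (qq (projectiveResolution X) (n + 1) Y z) =
        psi (projectiveResolution X) (n + 1) Y z := by
  refine exists_equiv_of_ker (qq (projectiveResolution X) (n + 1) Y).hom
    (psi (projectiveResolution X) (n + 1) Y) (qq_surj _ _) (psi_surj _ _ _) fun z => ?_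
  refine (qq_eq_zero _ _ z).trans ?_
  exact (ProjectiveResolution.extMk_eq_zero_iff _ _ _ rfl
    ((ii_exact _ _ _).1 ⟨z, rfl⟩) n rfl).symm

/-- The comparison isomorphism between the two versions of `Ext`. -/
noncomputable def extCmp (n : ℕ) (X Y : ModuleCat.{u} R) :
    ((_root_.Ext R (ModuleCat.{u} R) (n + 1)).obj (op X)).obj Y ≃ₗ[R]
      Abelian.Ext.{u} X Y (n + 1) := (exists_cmp n X Y).choose

theorem extCmp_nat (n : ℕ) {X X' : ModuleCat.{u} R} (Y : ModuleCat.{u} R) (g : X' ⟶ X)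
    (a : ((_root_.Ext R (ModuleCat.{u} R) (n + 1)).obj (op X)).obj Y) :
    extCmp n X' Y ((((_root_.Ext R (ModuleCat.{u} R) (n + 1)).map g.op).app Y) a) =
      (Abelian.Ext.mk₀ g).comp (extCmp n X Y a) (zero_add _) := by
  obtain ⟨z, rfl⟩ := qq_surj (projectiveResolution X) (n + 1) a
  have comm := ProjectiveResolution.lift_commutes_zero g (projectiveResolution X') (projectiveResolution X)
  obtain ⟨z', h1, h2⟩ := zeta (projectiveResolution X) (n + 1) (projectiveResolution X') g _ comm z
  rw [← h2]
  have k1 := (exists_cmp n X' Y).choose_spec z'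
  have k2 := (exists_cmp n X Y).choose_spec z
  refine k1.trans ?_
  change _ = (Abelian.Ext.mk₀ g).comp ((exists_cmp n X Y).choose _) (zero_add _)
  rw [k2]
  let φ : ProjectiveResolution.Hom (projectiveResolution X') (projectiveResolution X) g :=
    ⟨ProjectiveResolution.lift g _ _, by simpa using comm⟩
  refine Eq.trans ?_ (ProjectiveResolution.mk₀_comp_extMk _ _ rfl
    ((ii_exact _ _ _).1 ⟨z, rfl⟩) φ).symm
  change ProjectiveResolution.extMk _ _ _ rfl ((ii_exact _ _ _).1 ⟨z', rfl⟩) = _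
  congr 1

end Comparison

section ExtComputation
open CategoryTheory Abelian Opposite

variable {R : Type u} [CommRing R]

/-- `R/J` as an object of the module category. -/
noncomputable abbrev QM (J : Ideal R) : ModuleCat.{u} R := ModuleCat.of R (R ⧸ J)

/-- The projection `R/J → R/J'`. -/
noncomputable def prQ {J J' : Ideal R} (h : J ≤ J') : QM J ⟶ QM J' :=
  ModuleCat.ofHom (Submodule.mapQ J J' LinearMap.id h)

@[simp] theorem prQ_mk {J J' : Ideal R} (h : J ≤ J') (r : R) :
    prQ h (Submodule.Quotient.mk r : R ⧸ J) = (Submodule.Quotient.mk r : R ⧸ J') := rfl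

/-- two maps out of `R/J` agree if they agree on classes -/
theorem QM_ext {J : Ideal R} {M : ModuleCat.{u} R} (f g : QM J ⟶ M)
    (h : ∀ r : R, f (Submodule.Quotient.mk r : R ⧸ J) = g (Submodule.Quotient.mk r : R ⧸ J)) :
    f = g := by
  apply ModuleCat.hom_ext
  apply LinearMap.ext
  intro z
  obtain ⟨r, rfl⟩ := Submodule.Quotient.mk_surjective J z
  exact h r

/-- the short complex given by multiplication by `a` -/
noncomputable abbrev stepSC (J J' : Ideal R) (a : R) (h : J ≤ J') (ha : a ∈ J') :
    ShortComplex (ModuleCat.{u} R) :=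
  ShortComplex.mk (a • 𝟙 (QM J)) (prQ h) (by
    apply QM_ext
    intro r
    change (Submodule.Quotient.mk (a * r) : R ⧸ J') = 0
    rw [Submodule.Quotient.mk_eq_zero]
    exact J'.mul_mem_right _ ha)

theorem stepSC_exact (J J' : Ideal R) (a : R) (h : J ≤ J') (ha : a ∈ J')
    (nzd : ∀ r, a * r ∈ J → r ∈ J) (hJ' : J' ≤ J ⊔ Ideal.span {a}) :
    (stepSC J J' a h ha).ShortExact := by
  apply ModuleCat.shortComplex_shortExact
  · intro z
    obtain ⟨r, rfl⟩ := Submodule.Quotient.mk_surjective J z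
    constructor
    · intro hz
      have hr : r ∈ J' := (Submodule.Quotient.mk_eq_zero J').1 hz
      obtain ⟨j, hj, b, hb, rfl⟩ := Submodule.mem_sup.1 (hJ' hr)
      obtain ⟨c, rfl⟩ := Ideal.mem_span_singleton'.1 hb
      refine ⟨(Submodule.Quotient.mk c : R ⧸ J), ?_⟩
      change (Submodule.Quotient.mk (a * c) : R ⧸ J) = _
      rw [Submodule.Quotient.eq]
      have : a * c - (j + c * a) = - j := by ring
      rw [this]
      exact J.neg_mem hj
    · rintro ⟨c, hc⟩
      obtain ⟨c, rfl⟩ := Submodule.Quotient.mk_surjective J c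
      rw [← hc]
      change (Submodule.Quotient.mk (a * c) : R ⧸ J') = 0
      rw [Submodule.Quotient.mk_eq_zero]
      exact J'.mul_mem_right _ ha
  · refine (injective_iff_map_eq_zero (stepSC J J' a h ha).f.hom).2 fun z hz => ?_
    obtain ⟨r, rfl⟩ := Submodule.Quotient.mk_surjective J z
    have hr : (Submodule.Quotient.mk (a * r) : R ⧸ J) = 0 := hz
    rw [Submodule.Quotient.mk_eq_zero] at hr
    exact (Submodule.Quotient.mk_eq_zero J).2 (nzd r hr)
  · intro z
    obtain ⟨r, rfl⟩ := Submodule.Quotient.mk_surjective J' z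
    exact ⟨(Submodule.Quotient.mk r : R ⧸ J), rfl⟩

/-- map of step short complexes -/
noncomputable abbrev stepMap {J J' K K' : Ideal R} {a b c : R} (h : J ≤ J') (ha : a ∈ J')
    (k : K ≤ K') (hb : b ∈ K') (hJK : J ≤ K) (hJK' : J' ≤ K') (hab : a = c * b) :
    stepSC J J' a h ha ⟶ stepSC K K' b k hb where
  τ₁ := c • prQ hJK
  τ₂ := prQ hJK
  τ₃ := prQ hJK'
  comm₁₂ := by
    apply QM_ext
    intro r
    change (Submodule.Quotient.mk (b * (c * r)) : R ⧸ K) = Submodule.Quotient.mk (a * r)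
    rw [hab]; congr 1; ring
  comm₂₃ := by
    apply QM_ext
    intro r
    rfl

/-- The inductive package on `Ext^i(R/D_k, R)`. -/
structure Good (D : ℕ → Ideal R) (w : R) (i : ℕ) : Prop where
  anti : ∀ {k l}, k ≤ l → D l ≤ D k
  pd : ∀ k, HasProjectiveDimensionLT (QM (D k)) (i + 1)
  ex : ∃ e : ∀ k, Abelian.Ext.{u} (QM (D k)) (ModuleCat.of R R) i,
    (∀ k z, ∃ r : R, z = r • e k) ∧ (∀ k (r : R), r • e k = 0 ↔ r ∈ D k) ∧
    ∀ k l (h : k ≤ l), (Abelian.Ext.mk₀ (prQ (anti h))).comp (e k) (zero_add _) =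
      w ^ (l - k) • e l

theorem Good.zero (D : ℕ → Ideal R) (hD : ∀ k, D k = ⊥) : Good D 1 0 := by
  obtain rfl : D = fun _ => ⊥ := funext hD
  refine ⟨fun _ => le_rfl, fun k => ?_, ?_⟩
  · rw [zero_add, ← projective_iff_hasProjectiveDimensionLT_one]
    have : Module.Projective R (R ⧸ (⊥ : Ideal R)) :=
      Module.Projective.of_equiv (Submodule.quotEquivOfEqBot (⊥ : Ideal R) rfl).symm
    exact (IsProjective.iff_projective (R := R) _).1 this
  · let f : QM (⊥ : Ideal R) ⟶ ModuleCat.of R R :=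
      ModuleCat.ofHom (Submodule.quotEquivOfEqBot (⊥ : Ideal R) rfl).toLinearMap
    have hf : ∀ r : R, f (Submodule.Quotient.mk r : R ⧸ (⊥ : Ideal R)) = r := fun r => rfl
    refine ⟨fun _ => Abelian.Ext.mk₀ f, ?_, ?_, ?_⟩
    · intro _ z
      obtain ⟨g, rfl⟩ := (Abelian.Ext.mk₀_bijective _ _).2 z
      refine ⟨g (Submodule.Quotient.mk 1 : R ⧸ (⊥ : Ideal R)), ?_⟩
      rw [← Abelian.Ext.mk₀_smul]
      congr 1
      apply QM_ext
      intro r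
      change _ = g (Submodule.Quotient.mk 1 : R ⧸ (⊥ : Ideal R)) * r
      rw [mul_comm, ← smul_eq_mul, ← map_smul, ← Submodule.Quotient.mk_smul, smul_eq_mul, mul_one]
    · intro _ r
      rw [← Abelian.Ext.mk₀_smul, Ideal.mem_bot]
      constructor
      · intro h
        have h2 : r • f = 0 := (Abelian.Ext.mk₀_bijective _ _).1 (by rw [h, Abelian.Ext.mk₀_zero])
        have h3 : r * 1 = 0 := congrArg
          (fun k => k.hom (Submodule.Quotient.mk 1 : R ⧸ (⊥ : Ideal R))) h2
        simpa using h3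
      · rintro rfl
        rw [zero_smul, Abelian.Ext.mk₀_zero]
    · intro k l h
      rw [one_pow, one_smul, Abelian.Ext.mk₀_comp_mk₀]
      congr 1
      apply QM_ext
      intro r
      rfl

theorem Good.step {D : ℕ → Ideal R} {w : R} {i : ℕ} (G : Good D w i) (a : R)
    (nzd : ∀ k r, a ^ k * r ∈ D k → r ∈ D k) (D' : ℕ → Ideal R)
    (hD' : ∀ k, D' k = D k ⊔ Ideal.span {a ^ k}) : Good D' (a * w) (i + 1) := by
  have h1 : ∀ k, D k ≤ D' k := fun k => by rw [hD']; exact le_sup_left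
  have h2 : ∀ k, a ^ k ∈ D' k := fun k => by
    rw [hD']; exact Ideal.mem_sup_right (Ideal.mem_span_singleton_self _)
  have hS : ∀ k, (stepSC (D k) (D' k) (a ^ k) (h1 k) (h2 k)).ShortExact := fun k =>
    stepSC_exact _ _ _ _ _ (nzd k) (hD' k).le
  have anti' : ∀ {k l}, k ≤ l → D' l ≤ D' k := by
    intro k l h
    rw [hD', hD']
    refine sup_le_sup (G.anti h) ?_
    rw [Ideal.span_singleton_le_span_singleton]
    exact pow_dvd_pow _ h
  refine ⟨anti', fun k => ?_, ?_⟩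
  · have := G.pd k
    exact (hS k).hasProjectiveDimensionLT_X₃ (i + 1) this
      (hasProjectiveDimensionLT_of_ge (QM (D k)) (i + 1) (i + 1 + 1) (by omega))
  · obtain ⟨e, gen, ann, tr⟩ := G.ex
    have hi : 1 + i = i + 1 := by omega
    refine ⟨fun k => (hS k).extClass.comp (e k) hi, ?_, ?_, ?_⟩
    · intro k z
      have := G.pd k
      have ss : Subsingleton (Abelian.Ext.{u} (QM (D k)) (ModuleCat.of R R) (i + 1)) :=
        HasProjectiveDimensionLT.subsingleton (QM (D k)) (i + 1) (i + 1) le_rfl _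
      obtain ⟨y, rfl⟩ := Abelian.Ext.contravariant_sequence_exact₃ (hS k) (ModuleCat.of R R) z
        (ss.elim _ _) hi
      obtain ⟨r, rfl⟩ := gen k y
      exact ⟨r, Abelian.Ext.comp_smul _ _ _ _⟩
    · intro k r
      have key : ∀ z : Abelian.Ext.{u} (QM (D k)) (ModuleCat.of R R) i,
          (Abelian.Ext.mk₀ (a ^ k • 𝟙 (QM (D k)))).comp z (zero_add _) = a ^ k • z := by
        intro z
        rw [Abelian.Ext.mk₀_smul, Abelian.Ext.smul_comp, Abelian.Ext.mk₀_id_comp]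
      refine (Eq.congr_left (Abelian.Ext.comp_smul (hS k).extClass (e k) hi r).symm).trans ?_
      constructor
      · intro h
        obtain ⟨z, hz⟩ := Abelian.Ext.contravariant_sequence_exact₁ (hS k) (ModuleCat.of R R) _ hi h
        obtain ⟨s, rfl⟩ := gen k z
        have hz' := (key (s • e k)).symm.trans hz
        rw [← sub_eq_zero, smul_smul, ← sub_smul, ann] at hz'
        have : r = a ^ k * s - (a ^ k * s - r) := by ring
        rw [this]
        exact (D' k).sub_mem ((D' k).mul_mem_right _ (h2 k)) (h1 k hz')
      · intro h
        rw [hD'] at h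
        obtain ⟨j, hj, b, hb, rfl⟩ := Submodule.mem_sup.1 h
        obtain ⟨c, rfl⟩ := Ideal.mem_span_singleton'.1 hb
        rw [add_smul, (ann k j).2 hj, zero_add, mul_comm, mul_smul, ← key]
        refine (Abelian.Ext.comp_assoc_of_second_deg_zero _ _ _ _).symm.trans ?_
        have := (hS k).extClass_comp
        refine (congrArg (fun t => Abelian.Ext.comp t (c • e k) hi) this).trans ?_
        rw [Abelian.Ext.zero_comp]
    · intro k l h
      have nat := ShortComplex.ShortExact.extClass_naturality (hS l) (hS k)
        (stepMap (c := a ^ (l - k)) (h1 l) (h2 l) (h1 k) (h2 k) (G.anti h) (anti' h)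
          (by rw [← pow_add]; congr 1; omega))
      have e1 : (Abelian.Ext.mk₀ (prQ (anti' h))).comp ((hS k).extClass.comp (e k) hi) (zero_add _) =
          ((Abelian.Ext.mk₀ (prQ (anti' h))).comp (hS k).extClass (zero_add _)).comp (e k) hi :=
        (Abelian.Ext.comp_assoc _ _ _ _ _ (by omega)).symm
      refine e1.trans ?_
      refine (congrArg (fun t => Abelian.Ext.comp t (e k) hi) nat.symm).trans ?_
      refine (Abelian.Ext.comp_assoc_of_second_deg_zero _ _ _ _).trans ?_
      have e2 : (Abelian.Ext.mk₀ (a ^ (l - k) • prQ (G.anti h))).comp (e k) (zero_add _) =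
          (a * w) ^ (l - k) • e l := by
        rw [Abelian.Ext.mk₀_smul, Abelian.Ext.smul_comp, tr k l h, smul_smul, mul_pow]
      refine (congrArg (fun t => Abelian.Ext.comp (hS l).extClass t hi) e2).trans ?_
      exact Abelian.Ext.comp_smul _ _ _ _

/-- Mayer--Vietoris short complex -/
noncomputable abbrev mvSC (P Q : Ideal R) : ShortComplex (ModuleCat.{u} R) :=
  ShortComplex.mk (X₁ := QM (P ⊓ Q)) (X₂ := ModuleCat.of R ((R ⧸ P) × (R ⧸ Q))) (X₃ := QM (P ⊔ Q))
    (ModuleCat.ofHom ((Submodule.mapQ (P ⊓ Q) P LinearMap.id inf_le_left).prod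
      (Submodule.mapQ (P ⊓ Q) Q LinearMap.id inf_le_right)))
    (ModuleCat.ofHom ((Submodule.mapQ P (P ⊔ Q) LinearMap.id le_sup_left).coprod
      (-(Submodule.mapQ Q (P ⊔ Q) LinearMap.id le_sup_right)))) (by
    apply QM_ext
    intro r
    change (Submodule.Quotient.mk r : R ⧸ (P ⊔ Q)) + -(Submodule.Quotient.mk r : R ⧸ (P ⊔ Q)) = 0
    exact add_neg_cancel _)

theorem mvSC_exact (P Q : Ideal R) : (mvSC P Q).ShortExact := by
  apply ModuleCat.shortComplex_shortExact
  · rintro ⟨z, z'⟩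
    obtain ⟨p, rfl⟩ := Submodule.Quotient.mk_surjective P z
    obtain ⟨q, rfl⟩ := Submodule.Quotient.mk_surjective Q z'
    constructor
    · intro h
      have h' : (Submodule.Quotient.mk p : R ⧸ (P ⊔ Q)) + -(Submodule.Quotient.mk q) = 0 := h
      rw [← sub_eq_add_neg, sub_eq_zero, Submodule.Quotient.eq] at h'
      obtain ⟨a, ha, b, hb, hab⟩ := Submodule.mem_sup.1 h'
      refine ⟨(Submodule.Quotient.mk (p - a) : R ⧸ (P ⊓ Q)), ?_⟩
      change ((Submodule.Quotient.mk (p - a) : R ⧸ P), (Submodule.Quotient.mk (p - a) : R ⧸ Q)) = _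
      refine Prod.ext ((Submodule.Quotient.eq P).2 ?_) ((Submodule.Quotient.eq Q).2 ?_)
      · have : p - a - p = -a := by ring
        rw [this]; exact P.neg_mem ha
      · have : p - a - q = b := by linear_combination -hab
        rw [this]; exact hb
    · rintro ⟨c, hc⟩
      rw [← hc]
      exact ShortComplex.moduleCat_zero_apply _ _
  · refine (injective_iff_map_eq_zero (mvSC P Q).f.hom).2 fun z hz => ?_
    obtain ⟨r, rfl⟩ := Submodule.Quotient.mk_surjective (P ⊓ Q) z
    have hr : ((Submodule.Quotient.mk r : R ⧸ P), (Submodule.Quotient.mk r : R ⧸ Q)) = (0, 0) := hz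
    rw [Prod.mk.injEq, Submodule.Quotient.mk_eq_zero, Submodule.Quotient.mk_eq_zero] at hr
    exact (Submodule.Quotient.mk_eq_zero _).2 hr
  · intro z
    obtain ⟨r, rfl⟩ := Submodule.Quotient.mk_surjective (P ⊔ Q) z
    refine ⟨((Submodule.Quotient.mk r : R ⧸ P), (0 : R ⧸ Q)), ?_⟩
    change (Submodule.Quotient.mk r : R ⧸ (P ⊔ Q)) +
      -(Submodule.mapQ Q (P ⊔ Q) LinearMap.id le_sup_right) 0 = _
    rw [map_zero, neg_zero, add_zero]

/-- map of Mayer--Vietoris complexes -/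
noncomputable abbrev mvMap {P Q P' Q' : Ideal R} (hP : P ≤ P') (hQ : Q ≤ Q') :
    mvSC P Q ⟶ mvSC P' Q' where
  τ₁ := prQ (inf_le_inf hP hQ)
  τ₂ := ModuleCat.ofHom ((Submodule.mapQ P P' LinearMap.id hP).prodMap
      (Submodule.mapQ Q Q' LinearMap.id hQ))
  τ₃ := prQ (sup_le_sup hP hQ)
  comm₁₂ := by
    apply QM_ext
    intro r
    rfl
  comm₂₃ := by
    apply ModuleCat.hom_ext
    apply LinearMap.ext
    rintro ⟨z, z'⟩
    obtain ⟨p, rfl⟩ := Submodule.Quotient.mk_surjective P z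
    obtain ⟨q, rfl⟩ := Submodule.Quotient.mk_surjective Q z'
    rfl

theorem pd_prod (P Q : Ideal R) (n : ℕ) (hP : HasProjectiveDimensionLT (QM P) n)
    (hQ : HasProjectiveDimensionLT (QM Q) n) :
    HasProjectiveDimensionLT (ModuleCat.of R ((R ⧸ P) × (R ⧸ Q))) n := by
  let S : ShortComplex (ModuleCat.{u} R) := ModuleCat.shortComplexOfCompEqZero
    (LinearMap.inl R (R ⧸ P) (R ⧸ Q)) (LinearMap.snd R (R ⧸ P) (R ⧸ Q)) (by ext; rfl)
  have hS : S.ShortExact := by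
    apply ModuleCat.shortComplex_shortExact
    · exact Function.Exact.inl_snd
    · exact LinearMap.inl_injective
    · exact LinearMap.snd_surjective
  exact hS.hasProjectiveDimensionLT_X₂ n hP hQ

theorem mv_bij (P Q : Ideal R) (hP : HasProjectiveDimensionLT (QM P) 3)
    (hQ : HasProjectiveDimensionLT (QM Q) 3) (Y : ModuleCat.{u} R) :
    Function.Bijective (Abelian.Ext.bilinearCompOfLinear R (QM (P ⊔ Q)) (QM (P ⊓ Q)) Y 1 3 4 rfl
      (mvSC_exact P Q).extClass) := by
  have pd := pd_prod P Q 3 hP hQ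
  have s3 : Subsingleton (Abelian.Ext.{u} (ModuleCat.of R ((R ⧸ P) × (R ⧸ Q))) Y 3) :=
    HasProjectiveDimensionLT.subsingleton _ 3 3 le_rfl _
  have s4 : Subsingleton (Abelian.Ext.{u} (ModuleCat.of R ((R ⧸ P) × (R ⧸ Q))) Y 4) :=
    HasProjectiveDimensionLT.subsingleton _ 3 4 (by omega) _
  constructor
  · refine (injective_iff_map_eq_zero _).2 fun z hz => ?_
    obtain ⟨y, rfl⟩ := Abelian.Ext.contravariant_sequence_exact₁ (mvSC_exact P Q) Y z rfl hz
    obtain rfl : y = 0 := s3.elim y 0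
    rw [Abelian.Ext.comp_zero]
  · intro z
    exact Abelian.Ext.contravariant_sequence_exact₃ (mvSC_exact P Q) Y z (s4.elim _ _) rfl

/-- Mayer--Vietoris isomorphism -/
noncomputable def mvEquiv (P Q : Ideal R) (hP : HasProjectiveDimensionLT (QM P) 3)
    (hQ : HasProjectiveDimensionLT (QM Q) 3) (Y : ModuleCat.{u} R) :
    Abelian.Ext.{u} (QM (P ⊓ Q)) Y 3 ≃ₗ[R] Abelian.Ext.{u} (QM (P ⊔ Q)) Y 4 :=
  LinearEquiv.ofBijective _ (mv_bij P Q hP hQ Y)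

theorem mvEquiv_nat {P Q P' Q' : Ideal R} (h : P ≤ P') (h' : Q ≤ Q')
    (hP : HasProjectiveDimensionLT (QM P) 3)
    (hQ : HasProjectiveDimensionLT (QM Q) 3) (hP' : HasProjectiveDimensionLT (QM P') 3)
    (hQ' : HasProjectiveDimensionLT (QM Q') 3) (Y : ModuleCat.{u} R)
    (z : Abelian.Ext.{u} (QM (P' ⊓ Q')) Y 3) :
    mvEquiv P Q hP hQ Y ((Abelian.Ext.mk₀ (prQ (inf_le_inf h h'))).comp z (zero_add _)) =
      (Abelian.Ext.mk₀ (prQ (sup_le_sup h h'))).comp (mvEquiv P' Q' hP' hQ' Y z) (zero_add _) := by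
  have nat := ShortComplex.ShortExact.extClass_naturality (mvSC_exact P Q) (mvSC_exact P' Q')
    (mvMap h h')
  have h4 : 1 + 3 = 4 := rfl
  change (mvSC_exact P Q).extClass.comp _ h4 =
    (Abelian.Ext.mk₀ (prQ (sup_le_sup h h'))).comp ((mvSC_exact P' Q').extClass.comp z h4) (zero_add _)
  have e1 : (Abelian.Ext.mk₀ (prQ (sup_le_sup h h'))).comp ((mvSC_exact P' Q').extClass.comp z h4)
      (zero_add _) = ((Abelian.Ext.mk₀ (prQ (sup_le_sup h h'))).comp (mvSC_exact P' Q').extClass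
        (zero_add _)).comp z h4 :=
    (Abelian.Ext.comp_assoc _ _ _ _ _ (by omega)).symm
  refine Eq.trans ?_ e1.symm
  refine Eq.trans ?_ (congrArg (fun t => Abelian.Ext.comp t z h4) nat)
  exact (Abelian.Ext.comp_assoc_of_second_deg_zero _ _ _ _).symm

end ExtComputation

section Monomial
variable {A : Type u} [CommRing A]

/-- The ideal generated by the `k`-th powers of the variables in `T`. -/
noncomputable def DT (T : Finset (Fin 4)) (k : ℕ) : Ideal (MvPolynomial (Fin 4) A) :=
  Ideal.span ((fun s => MvPolynomial.monomial s (1 : A)) ''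
    ((fun i => Finsupp.single i k) '' (T : Set (Fin 4))))

theorem mem_DT {T : Finset (Fin 4)} {k : ℕ} {f : MvPolynomial (Fin 4) A} :
    f ∈ DT T k ↔ ∀ m ∈ f.support, ∃ i ∈ T, k ≤ m i := by
  rw [DT, MvPolynomial.mem_ideal_span_monomial_image]
  simp

theorem DT_empty (k : ℕ) : DT (A := A) ∅ k = ⊥ := by
  simp [DT]

theorem DT_insert (a : Fin 4) (T : Finset (Fin 4)) (k : ℕ) :
    DT (A := A) (insert a T) k = DT T k ⊔ Ideal.span {MvPolynomial.X a ^ k} := by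
  rw [DT, Finset.coe_insert, Set.image_insert_eq, Set.image_insert_eq, Ideal.span_insert, sup_comm,
    MvPolynomial.X_pow_eq_monomial]
  rfl

theorem DT_union (S T : Finset (Fin 4)) (k : ℕ) :
    DT (A := A) (S ∪ T) k = DT S k ⊔ DT T k := by
  rw [DT, Finset.coe_union, Set.image_union, Set.image_union, Ideal.span_union]
  rfl

theorem X_pow_mem_DT {i : Fin 4} {T : Finset (Fin 4)} (h : i ∈ T) (k : ℕ) :
    (MvPolynomial.X i ^ k : MvPolynomial (Fin 4) A) ∈ DT T k := by
  rw [MvPolynomial.X_pow_eq_monomial]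
  exact Ideal.subset_span ⟨_, ⟨i, h, rfl⟩, rfl⟩

theorem DT_nzd {j : Fin 4} {T : Finset (Fin 4)} (h : j ∉ T) (k : ℕ) (f : MvPolynomial (Fin 4) A)
    (hf : MvPolynomial.X j ^ k * f ∈ DT T k) : f ∈ DT T k := by
  rw [mem_DT] at hf ⊢
  intro m hm
  obtain ⟨i, hi, hk⟩ := hf (Finsupp.single j k + m) (by
    rw [MvPolynomial.mem_support_iff] at hm ⊢
    rwa [MvPolynomial.X_pow_eq_monomial, MvPolynomial.coeff_monomial_mul, one_mul])
  refine ⟨i, hi, ?_⟩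
  have : j ≠ i := by rintro rfl; exact h hi
  simpa [this] using hk

theorem DT_good (T : Finset (Fin 4)) :
    Good (DT (A := A) T) (∏ i ∈ T, MvPolynomial.X i) T.card := by
  induction T using Finset.induction_on with
  | empty => simpa using Good.zero _ (DT_empty (A := A))
  | insert a T ha ih =>
    rw [Finset.prod_insert ha, Finset.card_insert_of_notMem ha]
    exact ih.step _ (fun k r => DT_nzd ha k r) _ (DT_insert a T)

theorem prod_pow_eq (T : Finset (Fin 4)) (n : ℕ) :
    (∏ i ∈ T, (MvPolynomial.X i : MvPolynomial (Fin 4) A)) ^ n =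
      MvPolynomial.monomial (∑ i ∈ T, Finsupp.single i n) 1 := by
  induction T using Finset.induction_on with
  | empty => simp
  | insert a T ha ih =>
    rw [Finset.prod_insert ha, Finset.sum_insert ha, mul_pow, ih, MvPolynomial.X_pow_eq_monomial,
      MvPolynomial.monomial_mul, one_mul]

theorem prod_not_mem [Nontrivial A] (l : ℕ) (hl : 0 < l) :
    (∏ i, (MvPolynomial.X i : MvPolynomial (Fin 4) A)) ^ (l - 1) ∉ DT Finset.univ l := by
  rw [prod_pow_eq, mem_DT]
  intro h
  obtain ⟨i, -, hi⟩ := h (∑ i, Finsupp.single i (l - 1)) (by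
    rw [MvPolynomial.mem_support_iff, MvPolynomial.coeff_monomial, if_pos rfl]; exact one_ne_zero)
  rw [Finsupp.finsetSum_apply, Finset.sum_eq_single i (fun j _ hj => Finsupp.single_eq_of_ne' hj)
    (fun h => absurd (Finset.mem_univ i) h), Finsupp.single_eq_same] at hi
  omega

/-- the four variables, in two groups -/
noncomputable abbrev PP (A : Type u) [CommRing A] (k : ℕ) : Ideal (MvPolynomial (Fin 4) A) := DT {0, 1} k

/-- the second group of variables -/
noncomputable abbrev QQ (A : Type u) [CommRing A] (k : ℕ) : Ideal (MvPolynomial (Fin 4) A) := DT {2, 3} k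

theorem PPQQ (k : ℕ) : PP A k ⊔ QQ A k = DT Finset.univ k := by
  rw [← DT_union]; congr 1

theorem inf_le_of_pow {J : Ideal (MvPolynomial (Fin 4) A)} {N : ℕ}
    (h : ∀ i ∈ ({0, 1} : Finset (Fin 4)), ∀ j ∈ ({2, 3} : Finset (Fin 4)),
      (MvPolynomial.X i * MvPolynomial.X j) ^ N ∈ J) : PP A N ⊓ QQ A N ≤ J := by
  rintro f ⟨hf1, hf2⟩
  have hf1 := mem_DT.1 hf1
  have hf2 := mem_DT.1 hf2
  rw [← MvPolynomial.support_sum_monomial_coeff f]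
  refine J.sum_mem fun m hm => ?_
  obtain ⟨i, hi, him⟩ := hf1 m hm
  obtain ⟨j, hj, hjm⟩ := hf2 m hm
  have hij : i ≠ j := by
    rintro rfl
    revert hi hj
    fin_cases i <;> simp
  have hle : Finsupp.single i N + Finsupp.single j N ≤ m := by
    intro t
    rw [Finsupp.add_apply, Finsupp.single_apply, Finsupp.single_apply]
    by_cases h1 : i = t
    · subst h1
      rw [if_pos rfl, if_neg (Ne.symm hij)]; omega
    · by_cases h2 : j = t
      · subst h2
        rw [if_pos rfl, if_neg h1]; omega
      · rw [if_neg h1, if_neg h2]; omega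
  have e : MvPolynomial.monomial m (f.coeff m) =
      MvPolynomial.monomial (m - (Finsupp.single i N + Finsupp.single j N)) (f.coeff m) *
        (MvPolynomial.X i * MvPolynomial.X j) ^ N := by
    rw [mul_pow, MvPolynomial.X_pow_eq_monomial, MvPolynomial.X_pow_eq_monomial,
      MvPolynomial.monomial_mul, MvPolynomial.monomial_mul, tsub_add_cancel_of_le hle, mul_one, mul_one]
  rw [e]
  exact J.mul_mem_left _ (h i hi j hj)

theorem exists_common_pow {S : Type*} [CommRing S] {J : Ideal S} {ι : Type*} [Fintype ι] (g : ι → S)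
    (h : ∀ i, g i ∈ J.radical) : ∃ N : ℕ, ∀ i, g i ^ N ∈ J := by
  choose n hn using h
  refine ⟨∑ i, n i, fun i => ?_⟩
  exact Ideal.pow_mem_of_pow_mem _ (hn i) (Finset.single_le_sum (fun _ _ => Nat.zero_le _) (Finset.mem_univ i))

variable (A) in
/-- the ideal I -/
noncomputable abbrev idI : Ideal (MvPolynomial (Fin 4) A) := Ideal.span (Set.range (![MvPolynomial.X 0 * MvPolynomial.X 2,
  MvPolynomial.X 1 * MvPolynomial.X 3, MvPolynomial.X 0 * MvPolynomial.X 3 +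
  MvPolynomial.X 1 * MvPolynomial.X 2] : Fin 3 → MvPolynomial (Fin 4) A))

variable (A) in
/-- the ideal m -/
noncomputable abbrev idM : Ideal (MvPolynomial (Fin 4) A) := Ideal.span {MvPolynomial.X 0, MvPolynomial.X 1,
  MvPolynomial.X 2, MvPolynomial.X 3}

theorem idI_le (k : ℕ) : idI A ≤ (PP A k ⊓ QQ A k).radical := by
  have key : ∀ i ∈ ({0, 1} : Finset (Fin 4)), ∀ j ∈ ({2, 3} : Finset (Fin 4)),
      (MvPolynomial.X i * MvPolynomial.X j) ∈ (PP A k ⊓ QQ A k).radical := by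
    intro i hi j hj
    refine ⟨k, ?_⟩
    rw [mul_pow]
    exact ⟨Ideal.mul_mem_right _ _ (X_pow_mem_DT hi k), Ideal.mul_mem_left _ _ (X_pow_mem_DT hj k)⟩
  rw [Ideal.span_le]
  rintro _ ⟨i, rfl⟩
  fin_cases i
  · exact key 0 (by simp) 2 (by simp)
  · exact key 1 (by simp) 3 (by simp)
  · exact Ideal.add_mem _ (key 0 (by simp) 3 (by simp)) (key 1 (by simp) 2 (by simp))

theorem idI_cof (J : Ideal (MvPolynomial (Fin 4) A)) (h : idI A ≤ J.radical) :
    ∃ k, PP A k ⊓ QQ A k ≤ J := by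
  have h1 : (MvPolynomial.X 0 * MvPolynomial.X 2 : MvPolynomial (Fin 4) A) ∈ J.radical :=
    h (Ideal.subset_span ⟨0, rfl⟩)
  have h2 : (MvPolynomial.X 1 * MvPolynomial.X 3 : MvPolynomial (Fin 4) A) ∈ J.radical :=
    h (Ideal.subset_span ⟨1, rfl⟩)
  have h3 : (MvPolynomial.X 0 * MvPolynomial.X 3 + MvPolynomial.X 1 * MvPolynomial.X 2 :
    MvPolynomial (Fin 4) A) ∈ J.radical := h (Ideal.subset_span ⟨2, rfl⟩)
  have h4 : (MvPolynomial.X 0 * MvPolynomial.X 3 : MvPolynomial (Fin 4) A) ∈ J.radical := by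
    have : (MvPolynomial.X 0 * MvPolynomial.X 3 : MvPolynomial (Fin 4) A) ^ 2 ∈ J.radical := by
      have e : (MvPolynomial.X 0 * MvPolynomial.X 3 : MvPolynomial (Fin 4) A) ^ 2 =
        (MvPolynomial.X 0 * MvPolynomial.X 3) * (MvPolynomial.X 0 * MvPolynomial.X 3 +
          MvPolynomial.X 1 * MvPolynomial.X 2) -
          (MvPolynomial.X 0 * MvPolynomial.X 2) * (MvPolynomial.X 1 * MvPolynomial.X 3) := by ring
      rw [e]
      exact Ideal.sub_mem _ (Ideal.mul_mem_left _ _ h3) (Ideal.mul_mem_left _ _ h2)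
    exact (Ideal.radical_isRadical J) ⟨2, this⟩
  have h5 : (MvPolynomial.X 1 * MvPolynomial.X 2 : MvPolynomial (Fin 4) A) ∈ J.radical := by
    have := Ideal.sub_mem _ h3 h4
    rwa [add_sub_cancel_left] at this
  obtain ⟨N, hN⟩ := exists_common_pow (J := J) (![MvPolynomial.X 0 * MvPolynomial.X 2,
    MvPolynomial.X 1 * MvPolynomial.X 3, MvPolynomial.X 0 * MvPolynomial.X 3,
    MvPolynomial.X 1 * MvPolynomial.X 2] : Fin 4 → MvPolynomial (Fin 4) A) (by
      intro i
      fin_cases i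
      exacts [h1, h2, h4, h5])
  refine ⟨N, inf_le_of_pow ?_⟩
  intro i hi j hj
  simp only [Finset.mem_insert, Finset.mem_singleton] at hi hj
  rcases hi with rfl | rfl <;> rcases hj with rfl | rfl
  exacts [hN 0, hN 2, hN 3, hN 1]

theorem idM_le (k : ℕ) : idM A ≤ (PP A k ⊔ QQ A k).radical := by
  rw [PPQQ, Ideal.span_le]
  have key : ∀ i, (MvPolynomial.X i : MvPolynomial (Fin 4) A) ∈ (DT Finset.univ k).radical :=
    fun i => ⟨k, X_pow_mem_DT (Finset.mem_univ i) k⟩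
  rintro _ (rfl | rfl | rfl | rfl) <;> exact key _

theorem idM_cof (J : Ideal (MvPolynomial (Fin 4) A)) (h : idM A ≤ J.radical) :
    ∃ k, PP A k ⊔ QQ A k ≤ J := by
  obtain ⟨N, hN⟩ := exists_common_pow (J := J) (fun i : Fin 4 => (MvPolynomial.X i :
    MvPolynomial (Fin 4) A)) (by
      intro i
      apply h
      apply Ideal.subset_span
      fin_cases i <;> simp)
  refine ⟨N, ?_⟩
  rw [PPQQ, DT, Ideal.span_le]
  rintro _ ⟨_, ⟨i, -, rfl⟩, rfl⟩
  have := hN i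
  rwa [MvPolynomial.X_pow_eq_monomial] at this

end Monomial

section Assembly
open CategoryTheory Abelian Opposite Limits localCohomology

section
variable {R : Type u} [CommRing R] (F : ℕ → Ideal R) (anti : ∀ {k l}, k ≤ l → F l ≤ F k)
  (I : Ideal R) (hI : ∀ k, I ≤ (F k).radical)

/-- A decreasing sequence of ideals as a diagram. -/
def seqDiag : ℕᵒᵖ ⥤ Ideal R where
  obj t := F (unop t)
  map w := ⟨⟨anti w.unop.down.down⟩⟩

/-- lift to ideals with radical containing `I`. -/
def seqSelf : ℕᵒᵖ ⥤ SelfLERadical I :=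
  ObjectProperty.lift _ (seqDiag F anti) fun k => hI (unop k)

theorem seq_initial (cof : ∀ J : Ideal R, I ≤ J.radical → ∃ k, F k ≤ J) :
    Functor.Initial (seqSelf F anti I hI) where
  out J' := by
    apply +allowSynthFailures zigzag_isConnected
    · obtain ⟨k, hk⟩ := cof J'.1 J'.2
      exact ⟨CostructuredArrow.mk (⟨⟨⟨hk⟩⟩⟩ : (seqSelf F anti I hI).obj (op k) ⟶ J')⟩
    · intro j1 j2
      apply Relation.ReflTransGen.single
      rcases le_total (unop j1.left) (unop j2.left) with h | h
      · right; exact ⟨CostructuredArrow.homMk (homOfLE h).op rfl⟩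
      · left; exact ⟨CostructuredArrow.homMk (homOfLE h).op rfl⟩

/-- local cohomology computed by a cofinal sequence -/
noncomputable def seqIso [IsNoetherianRing R] (cof : ∀ J : Ideal R, I ≤ J.radical → ∃ k, F k ≤ J) (i : ℕ) :
    ofDiagram.{u, 0} (seqSelf F anti I hI ⋙ selfLERadicalDiagram I) i ≅ localCohomology I i :=
  have := seq_initial F anti I hI cof
  isoOfFinal.{u, u, 0} (seqSelf F anti I hI) (selfLERadicalDiagram I) i ≪≫ isoSelfLERadical I i

/-- The direct system of Ext modules. -/
noncomputable abbrev extSys (i : ℕ) (Y : ModuleCat.{u} R) : ℕᵒᵖᵒᵖ ⥤ ModuleCat.{u} R :=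
  diagram (seqSelf F anti I hI ⋙ selfLERadicalDiagram I) i ⋙ (evaluation _ _).obj Y

/-- local cohomology as the colimit of the direct system -/
noncomputable def seqIsoObj [IsNoetherianRing R] (cof : ∀ J : Ideal R, I ≤ J.radical → ∃ k, F k ≤ J)
    (i : ℕ) (Y : ModuleCat.{u} R) :
    colimit (extSys F anti I hI i Y) ≅ (localCohomology I i).obj Y :=
  (colimitObjIsoColimitCompEvaluation _ Y).symm ≪≫ (seqIso F anti I hI cof i).app Y

/-- comparison with the other Ext -/
noncomputable def extSysEquiv (i : ℕ) (Y : ModuleCat.{u} R) (s : ℕᵒᵖᵒᵖ) :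
    (extSys F anti I hI (i + 1) Y).obj s ≃ₗ[R] Abelian.Ext.{u} (QM (F s.unop.unop)) Y (i + 1) :=
  extCmp i (QM (F s.unop.unop)) Y

theorem extSysEquiv_nat (i : ℕ) (Y : ModuleCat.{u} R) {s t : ℕᵒᵖᵒᵖ} (f : s ⟶ t)
    (z : (extSys F anti I hI (i + 1) Y).obj s) :
    extSysEquiv F anti I hI i Y t ((extSys F anti I hI (i + 1) Y).map f z) =
      (Abelian.Ext.mk₀ (prQ (anti f.unop.unop.down.down))).comp
        (extSysEquiv F anti I hI i Y s z) (zero_add _) :=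
  extCmp_nat i Y (prQ (anti f.unop.unop.down.down)) z

theorem extSys_nontrivial (i : ℕ) (w : R) (G : Good F w (i + 1))
    (hw : ∀ l, 0 < l → w ^ (l - 1) ∉ F l) :
    Nontrivial (colimit (extSys F anti I hI (i + 1) (ModuleCat.of R R)) : ModuleCat.{u} R) := by
  obtain ⟨e, gen, ann, tr⟩ := G.ex
  rw [← not_subsingleton_iff_nontrivial]
  intro hs
  have : PreservesFilteredColimitsOfSize.{0, 0} (forget (ModuleCat.{u} R)) :=
    preservesFilteredColimitsOfSize_shrink.{0, u, 0, u} _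
  let x := (extSysEquiv F anti I hI i (ModuleCat.of R R) (op (op 1))).symm (e 1)
  obtain ⟨k, f, g, hfg⟩ := Concrete.colimit_exists_of_rep_eq (extSys F anti I hI (i + 1) (ModuleCat.of R R))
    x (0 : (extSys F anti I hI (i + 1) (ModuleCat.of R R)).obj (op (op 1))) (hs.elim _ _)
  have h1 : 1 ≤ k.unop.unop := f.unop.unop.down.down
  rw [map_zero] at hfg
  have h2 := extSysEquiv_nat F anti I hI i (ModuleCat.of R R) f x
  rw [hfg, map_zero, LinearEquiv.apply_symm_apply] at h2
  have h3 := tr 1 k.unop.unop h1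
  have h4 := (ann _ _).1 (h3.symm.trans h2.symm)
  exact hw _ h1 h4

end

section
variable (A : Type u) [CommRing A]

theorem PP_anti {k l : ℕ} (h : k ≤ l) : PP A l ≤ PP A k := (DT_good (A := A) {0, 1}).anti h
theorem QQ_anti {k l : ℕ} (h : k ≤ l) : QQ A l ≤ QQ A k := (DT_good (A := A) {2, 3}).anti h
theorem PP_pd (k : ℕ) : HasProjectiveDimensionLT (QM (PP A k)) 3 := (DT_good (A := A) {0, 1}).pd k
theorem QQ_pd (k : ℕ) : HasProjectiveDimensionLT (QM (QQ A k)) 3 := (DT_good (A := A) {2, 3}).pd k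

/-- the direct system for `I` -/
noncomputable abbrev sys1 : ℕᵒᵖᵒᵖ ⥤ ModuleCat.{u} (MvPolynomial (Fin 4) A) :=
  extSys (fun k => PP A k ⊓ QQ A k) (fun h => inf_le_inf (PP_anti A h) (QQ_anti A h)) (idI A)
    idI_le 3 (ModuleCat.of _ (MvPolynomial (Fin 4) A))

/-- the direct system for `m` -/
noncomputable abbrev sys2 : ℕᵒᵖᵒᵖ ⥤ ModuleCat.{u} (MvPolynomial (Fin 4) A) :=
  extSys (fun k => PP A k ⊔ QQ A k) (fun h => sup_le_sup (PP_anti A h) (QQ_anti A h)) (idM A)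
    idM_le 4 (ModuleCat.of _ (MvPolynomial (Fin 4) A))

/-- comparison of the direct systems -/
noncomputable def sysEquiv (s : ℕᵒᵖᵒᵖ) : (sys1 A).obj s ≃ₗ[MvPolynomial (Fin 4) A] (sys2 A).obj s :=
  (extSysEquiv (fun k => PP A k ⊓ QQ A k) (fun h => inf_le_inf (PP_anti A h) (QQ_anti A h)) (idI A)
    idI_le 2 (ModuleCat.of _ (MvPolynomial (Fin 4) A)) s).trans
    ((mvEquiv _ _ (PP_pd A _) (QQ_pd A _) _).trans
      (extSysEquiv (fun k => PP A k ⊔ QQ A k) (fun h => sup_le_sup (PP_anti A h) (QQ_anti A h)) (idM A)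
    idM_le 3 (ModuleCat.of _ (MvPolynomial (Fin 4) A)) s).symm)

/-- comparison of the direct systems -/
noncomputable def sysIso : sys1 A ≅ sys2 A :=
  NatIso.ofComponents (fun s => (sysEquiv A s).toModuleIso) (by
    intro s t f
    apply ModuleCat.hom_ext
    apply LinearMap.ext
    intro z
    change sysEquiv A t ((sys1 A).map f z) = (sys2 A).map f (sysEquiv A s z)
    have n1 := extSysEquiv_nat (fun k => PP A k ⊓ QQ A k)
      (fun h => inf_le_inf (PP_anti A h) (QQ_anti A h)) (idI A)
      idI_le 2 (ModuleCat.of _ (MvPolynomial (Fin 4) A)) f z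
    have n2 := extSysEquiv_nat (fun k => PP A k ⊔ QQ A k)
      (fun h => sup_le_sup (PP_anti A h) (QQ_anti A h)) (idM A)
      idM_le 3 (ModuleCat.of _ (MvPolynomial (Fin 4) A)) f (sysEquiv A s z)
    have e : ∀ s z, (extSysEquiv (fun k => PP A k ⊔ QQ A k)
      (fun h => sup_le_sup (PP_anti A h) (QQ_anti A h)) (idM A)
      idM_le 3 (ModuleCat.of _ (MvPolynomial (Fin 4) A)) s) (sysEquiv A s z) =
      mvEquiv _ _ (PP_pd A _) (QQ_pd A _) _ (extSysEquiv (fun k => PP A k ⊓ QQ A k)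
      (fun h => inf_le_inf (PP_anti A h) (QQ_anti A h)) (idI A)
      idI_le 2 (ModuleCat.of _ (MvPolynomial (Fin 4) A)) s z) := by
      intro s z
      exact LinearEquiv.apply_symm_apply _ _
    apply (extSysEquiv (fun k => PP A k ⊔ QQ A k)
      (fun h => sup_le_sup (PP_anti A h) (QQ_anti A h)) (idM A)
      idM_le 3 (ModuleCat.of _ (MvPolynomial (Fin 4) A)) t).injective
    refine (e t _).trans ?_
    refine Eq.trans ?_ n2.symm
    refine (congrArg _ n1).trans ?_
    refine (mvEquiv_nat (PP_anti A f.unop.unop.down.down) (QQ_anti A f.unop.unop.down.down)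
      (PP_pd A _) (QQ_pd A _) (PP_pd A _) (QQ_pd A _) _ _).trans ?_
    exact congrArg (fun q => Abelian.Ext.comp _ q (zero_add _)) (e s z).symm)

theorem lc_iso [IsNoetherianRing A] : Nonempty ((localCohomology (idI A) 3).obj
    (ModuleCat.of _ (MvPolynomial (Fin 4) A)) ≅ (localCohomology (idM A) 4).obj
    (ModuleCat.of _ (MvPolynomial (Fin 4) A))) :=
  ⟨(seqIsoObj _ (fun h => inf_le_inf (PP_anti A h) (QQ_anti A h)) (idI A) idI_le idI_cof 3 _).symm ≪≫ HasColimit.isoOfNatIso (sysIso A) ≪≫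
    seqIsoObj _ (fun h => sup_le_sup (PP_anti A h) (QQ_anti A h)) (idM A) idM_le idM_cof 4 _⟩

theorem lc_nontrivial [IsNoetherianRing A] [Nontrivial A] : Nontrivial ((localCohomology (idM A) 4).obj
    (ModuleCat.of _ (MvPolynomial (Fin 4) A))) := by
  have G := DT_good (A := A) Finset.univ
  have hF : DT (A := A) Finset.univ = fun k => PP A k ⊔ QQ A k := funext fun k => (PPQQ k).symm
  rw [hF] at G
  have h := extSys_nontrivial (fun k => PP A k ⊔ QQ A k)
    (fun h => sup_le_sup (PP_anti A h) (QQ_anti A h)) (idM A) idM_le 3 _ G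
    (fun l hl => by
      rw [PPQQ]
      exact prod_not_mem l hl)
  exact (seqIsoObj (fun k => PP A k ⊔ QQ A k)
    (fun h => sup_le_sup (PP_anti A h) (QQ_anti A h)) (idM A) idM_le idM_cof 4
    (ModuleCat.of _ (MvPolynomial (Fin 4) A))).toLinearEquiv.toEquiv.symm.nontrivial
end

end Assembly

/-- In `R = A[x,y,u,v]` with `x₁ = xu`, `x₂ = yv`, `x₃ = xv + yu`
and `I = (x₁,x₂,x₃)`, one has `H³_I(R) ≅ H⁴_{(x,y,u,v)}(R) ≠ 0`, yet
`𝔥³_x(R) = 0` and `𝔥̲³_x(R) = 0`; in particular `x₁, x₂, x₃` is not a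
Q-sequence in `R`. -/
theorem content_zero_nonzero_localCohomology
    (A : Type u) [CommRing A] [IsNoetherianRing A] [Nontrivial A] :
    let R := MvPolynomial (Fin 4) A
    let x : R := X 0
    let y : R := X 1
    let u : R := X 2
    let v : R := X 3
    let xseq : Fin 3 → R := ![x * u, y * v, x * v + y * u]
    let I : Ideal R := Ideal.span (Set.range xseq)
    let m : Ideal R := Ideal.span {x, y, u, v}
    Nonempty ((localCohomology I 3).obj (ModuleCat.of R R) ≅
        (localCohomology m 4).obj (ModuleCat.of R R)) ∧
    Nontrivial ((localCohomology m 4).obj (ModuleCat.of R R)) ∧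
    content xseq R = 0 ∧
    ucontent xseq R = 0 ∧
    ¬ IsQSequence xseq := by
  intro R x y u v xseq I m
  exact ⟨lc_iso A, lc_nontrivial A, content_zero x y u v, ucontent_zero x y u v, not_Q x y u v⟩
end

section
/- Let R be a Noetherian ring such that R/√(0) contains a field. Then every module-finite extension S of R (an injective ring homomorphism R → S with S finitely generated as an R-module) is a robust R-algebra. Consequently, for every ideal I of R and every module-finite extension S of R, the contraction IS ∩ R is contained in the robust closure of I. -/
set_option synthInstance.maxHeartbeats 1000000
set_option maxHeartbeats 1000000
open scoped BigOperators ENNReal TensorProduct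

universe u

/-- `T` is a robust algebra over the (complete local domain) `D`: the image in `T`
of every system of parameters of `D` is a Q-sequence in `T`. -/
def IsRobustOver (D : Type u) [CommRing D] (T : Type u) [CommRing T] [Algebra D T] : Prop :=
  ∀ (d : ℕ) (x : Fin d → D), ringKrullDim D = d →
    (Ideal.span (Set.range x)).radical.IsMaximal →
    IsQSequence (fun i => algebraMap D T (x i))

/-- `D` is a complete local domain of `R`, i.e. `D ≅ (R_m)^∧ / q` (compatibly with the
structure maps) for some maximal ideal `m` of `R` and minimal prime `q` of `(R_m)^∧`. -/
def IsCompleteLocalDomainOf (R : Type u) [CommRing R] (D : Type u) [CommRing D]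
    [Algebra R D] : Prop :=
  ∃ (m : Ideal R) (hm : m.IsMaximal),
    haveI : m.IsPrime := hm.isPrime
    ∃ q ∈ minimalPrimes (AdicCompletion (IsLocalRing.maximalIdeal (Localization.AtPrime m))
        (Localization.AtPrime m)),
      ∃ e : D ≃+* (AdicCompletion (IsLocalRing.maximalIdeal (Localization.AtPrime m))
          (Localization.AtPrime m) ⧸ q),
        ∀ r : R, e (algebraMap R D r) =
          Ideal.Quotient.mk q (algebraMap (Localization.AtPrime m)
            (AdicCompletion (IsLocalRing.maximalIdeal (Localization.AtPrime m))
              (Localization.AtPrime m)) (algebraMap R (Localization.AtPrime m) r))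

/-- `T` is a robust `R`-algebra: `D ⊗_R T` is robust over `D` for every complete
local domain `D` of `R`. -/
def IsRobustAlgebra (R : Type u) [CommRing R] (T : Type u) [CommRing T] [Algebra R T] : Prop :=
  ∀ (D : Type u) [CommRing D] [Algebra R D], IsCompleteLocalDomainOf R D →
    IsRobustOver D (D ⊗[R] T)

/-- `S` is a forcing algebra for `(M, N, u)`. -/
def IsForcingAlgebra (D : Type u) [CommRing D] (M : Type u) [AddCommGroup M] [Module D M]
    (N : Submodule D M) (u : M) (S : Type u) [CommRing S] [Algebra D S] : Prop :=
  (1 : S) ⊗ₜ[D] u ∈ N.baseChange S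

/-- The immediate robust closure `N^▫` of `N` in `M` (over a complete local domain `D`):
the submodule generated by `N` and all `u` admitting a robust forcing algebra. -/
noncomputable def immediateRobustClosure (D : Type u) [CommRing D] (M : Type u)
    [AddCommGroup M] [Module D M] (N : Submodule D M) : Submodule D M :=
  N ⊔ Submodule.span D {u : M |
    ∃ (S : Type u) (_ : CommRing S) (_ : Algebra D S),
      IsForcingAlgebra D M N u S ∧ IsRobustOver D S}

/-- The robust closure of `N` in `M` over a complete local domain `D`:
the (stabilizing) union of the iterated immediate robust closures `N^(j)`. -/
noncomputable def robustClosureCLD (D : Type u) [CommRing D] (M : Type u)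
    [AddCommGroup M] [Module D M] (N : Submodule D M) : Submodule D M :=
  ⨆ j : ℕ, (immediateRobustClosure D M)^[j] N

/-- `u` lies in the robust closure of `N` in `M` over the Noetherian ring `R`:
for every complete local domain `D` of `R`, the image of `u` in `D ⊗_R M` lies in the
robust closure, computed over `D`, of the image of `D ⊗_R N`. -/
def MemRobustClosure (R : Type u) [CommRing R] (M : Type u) [AddCommGroup M] [Module R M]
    (N : Submodule R M) (u : M) : Prop :=
  ∀ (D : Type u) [CommRing D] [Algebra R D], IsCompleteLocalDomainOf R D →
    (1 : D) ⊗ₜ[R] u ∈ robustClosureCLD D (D ⊗[R] M) (N.baseChange D)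


namespace Rob

/-- length of the quotient -/
noncomputable abbrev ql (D : Type*) [CommRing D] {T : Type*} [CommRing T] [Algebra D T] (I : Ideal T) : ℕ∞ :=
  Module.length D (T ⧸ I)

section len
variable (D : Type*) [CommRing D] {T : Type*} [CommRing T] [Algebra D T]

lemma ql_mono {I J : Ideal T} (h : I ≤ J) : ql D J ≤ ql D I :=
  Module.length_le_of_surjective (Ideal.Quotient.factorₐ D h).toLinearMap
    (Ideal.Quotient.factor_surjective h)

/-- multiplication by y from T/Q to T/I -/
noncomputable def mulMap (I Q : Ideal T) (y : T) (h : ∀ z ∈ Q, y * z ∈ I) : (T ⧸ Q) →ₗ[D] (T ⧸ I) :=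
  (Submodule.mapQ Q I (LinearMap.mulLeft T y) (by intro z hz; simpa using h z hz)).restrictScalars D

lemma mulMap_mk (I Q : Ideal T) (y : T) (h : ∀ z ∈ Q, y * z ∈ I) (z : T) :
    mulMap D I Q y h (Ideal.Quotient.mk Q z) = Ideal.Quotient.mk I (y * z) := rfl

lemma exact_mulMap (I Q : Ideal T) (y : T) (h : ∀ z ∈ Q, y * z ∈ I) :
    Function.Exact (mulMap D I Q y h)
      (Ideal.Quotient.factorₐ D (le_sup_left : I ≤ I ⊔ Ideal.span {y})).toLinearMap := by
  intro b
  obtain ⟨b, rfl⟩ := Ideal.Quotient.mk_surjective b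
  constructor
  · intro hb
    have : b ∈ I ⊔ Ideal.span {y} := by
      rw [← Ideal.Quotient.eq_zero_iff_mem]; exact hb
    obtain ⟨i, hi, z, hz, rfl⟩ := Submodule.mem_sup.1 this
    obtain ⟨w, rfl⟩ := Ideal.mem_span_singleton'.1 hz
    refine ⟨Ideal.Quotient.mk Q w, ?_⟩
    rw [mulMap_mk, Ideal.Quotient.eq]
    have : y * w - (i + w * y) = - i := by ring
    rw [this]; exact I.neg_mem hi
  · rintro ⟨z, hz⟩
    obtain ⟨z, rfl⟩ := Ideal.Quotient.mk_surjective z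
    rw [mulMap_mk] at hz
    rw [← hz]
    show Ideal.Quotient.mk (I ⊔ Ideal.span {y}) (y * z) = 0
    rw [Ideal.Quotient.eq_zero_iff_mem]
    exact Ideal.mul_mem_right _ _ (Ideal.mem_sup_right (Ideal.mem_span_singleton_self y))

lemma ql_le_add {I J : Ideal T} {y : T} (h : ∀ z ∈ J, y * z ∈ I) :
    ql D I ≤ ql D (I ⊔ Ideal.span {y}) + ql D J := by
  have hex := exact_mulMap D I J y h
  set f := mulMap D I J y h
  set g := (Ideal.Quotient.factorₐ D (le_sup_left : I ≤ I ⊔ Ideal.span {y})).toLinearMap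
  have hg : Function.Surjective g := Ideal.Quotient.factor_surjective (le_sup_left : I ≤ I ⊔ Ideal.span {y})
  have := Module.length_eq_add_of_exact (LinearMap.range f).subtype g
    (Submodule.subtype_injective _) hg (by
      intro b; rw [hex b]; simp)
  rw [ql, this, add_comm]
  gcongr
  exact Module.length_le_of_surjective f.rangeRestrict f.surjective_rangeRestrict

lemma ql_ge_add {I Q : Ideal T} {y : T} (h : ∀ z, y * z ∈ I → z ∈ Q) :
    ql D (I ⊔ Ideal.span {y}) + ql D Q ≤ ql D I := by
  set C : Ideal T := I.colon {y} with hC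
  have hmem : ∀ z, z ∈ C ↔ y * z ∈ I := by
    intro z; rw [hC, Submodule.mem_colon_singleton, smul_eq_mul, mul_comm]
  have hCQ : C ≤ Q := fun z hz => h z ((hmem z).1 hz)
  have hex := exact_mulMap D I C y (fun z hz => (hmem z).1 hz)
  have hinj : Function.Injective (mulMap D I C y (fun z hz => (hmem z).1 hz)) := by
    rw [injective_iff_map_eq_zero]
    intro z hz
    obtain ⟨z, rfl⟩ := Ideal.Quotient.mk_surjective z
    rw [mulMap_mk, Ideal.Quotient.eq_zero_iff_mem] at hz
    rw [Ideal.Quotient.eq_zero_iff_mem, hmem]; exact hz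
  have := Module.length_eq_add_of_exact _ _ hinj (Ideal.Quotient.factor_surjective (le_sup_left : I ≤ I ⊔ Ideal.span {y})) hex
  rw [ql, ql, ql, this, add_comm]
  gcongr
  exact ql_mono D hCQ

lemma ql_chain {ι : Type*} [DecidableEq ι] (B : Finset ι) (deg : ι → ℕ) (m : ι → T) (I J : Ideal T)
    (H : ∀ a ∈ B, ∀ y ∈ J, m a * y ∈ I ⊔ Ideal.span (m '' {b | b ∈ B ∧ deg a < deg b})) :
    ql D I ≤ ql D (I ⊔ Ideal.span (m '' B)) + B.card * ql D J := by
  induction B using Finset.induction_on_min_value deg with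
  | empty => simp
  | insert a s ha hmin ih =>
    have ih' := ih (by
      intro b hb y hy
      refine (?_ : _ ≤ (_ : Ideal T)) (H b (Finset.mem_insert_of_mem hb) y hy)
      refine sup_le_sup_left (Ideal.span_mono (Set.image_mono ?_)) _
      rintro c ⟨hc, hd⟩
      refine ⟨?_, hd⟩
      rcases Finset.mem_insert.1 hc with rfl | hc
      · exact absurd (hmin b hb) (by omega)
      · exact hc)
    refine ih'.trans ?_
    have : ql D (I ⊔ Ideal.span (m '' s)) ≤ ql D (I ⊔ Ideal.span (m '' s) ⊔ Ideal.span {m a}) + ql D J := by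
      apply ql_le_add
      intro z hz
      refine (?_ : _ ≤ (_ : Ideal T)) (H a (Finset.mem_insert_self _ _) z hz)
      refine sup_le_sup_left (Ideal.span_mono (Set.image_mono ?_)) _
      rintro c ⟨hc, hd⟩
      rcases Finset.mem_insert.1 hc with rfl | hc
      · exact absurd hd (by omega)
      · exact hc
    have e : I ⊔ Ideal.span (m '' s) ⊔ Ideal.span {m a} = I ⊔ Ideal.span (m '' (insert a s : Finset ι)) := by
      rw [sup_assoc, ← Ideal.span_union, Finset.coe_insert, Set.image_insert_eq, Set.union_singleton]
    rw [e] at this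
    rw [Finset.card_insert_of_notMem ha]
    calc _ ≤ ql D (I ⊔ Ideal.span (m '' (insert a s : Finset ι))) + ql D J + s.card * ql D J := by gcongr
      _ = _ := by push_cast; ring
end len

/-- equational data of a quasilength filtration -/
def QLD {T : Type*} [CommRing T] {d : ℕ} (x : Fin d → T) (t h : ℕ) : Prop :=
  ∃ (m : Fin h → T) (c : Fin h → Fin d → Fin h → T) (e : Fin h → Fin d → Fin d → T)
    (u : Fin h → T) (v : Fin d → T),
    (∀ i j l, i ≤ l → c i j l = 0) ∧
    (∀ i j, x j * m i = ∑ l, c i j l * m l + ∑ s, e i j s * x s ^ t) ∧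
    1 = ∑ l, u l * m l + ∑ s, v s * x s ^ t

lemma QLD.map {T T' : Type*} [CommRing T] [CommRing T'] {d : ℕ} {x : Fin d → T} {t h : ℕ}
    (H : QLD x t h) (f : T →+* T') : QLD (fun i => f (x i)) t h := by
  obtain ⟨m, c, e, u, v, h1, h2, h3⟩ := H
  refine ⟨fun i => f (m i), fun i j l => f (c i j l), fun i j l => f (e i j l), fun i => f (u i),
    fun i => f (v i), ?_, ?_, ?_⟩
  · intro i j l hl; simp [h1 i j l hl]
  · intro i j
    have := congrArg f (h2 i j)
    simpa using this
  · have := congrArg f h3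
    simpa using this

section
variable (D : Type*) [CommRing D] {T : Type*} [CommRing T] [Algebra D T]
/-- Frobenius power ideal -/
abbrev fp {d : ℕ} (x : Fin d → T) (t : ℕ) : Ideal T := Ideal.span (Set.range fun i => x i ^ t)

lemma QLD.ql_le {d : ℕ} {x : Fin d → T} {t h : ℕ} (H : QLD x t h) :
    ql D (fp x t) ≤ h * ql D (Ideal.span (Set.range x)) := by
  obtain ⟨m, c, e, u, v, h1, h2, h3⟩ := H
  have key := ql_chain D (Finset.univ : Finset (Fin h)) (fun i => h - i.1) m (fp x t)
    (Ideal.span (Set.range x)) (by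
      intro a _ y hy
      set P := fp x t ⊔ Ideal.span (m '' {b | b ∈ Finset.univ ∧ h - a.1 < h - b.1})
      have : Ideal.span (Set.range x) ≤ P.colon {m a} := by
        rw [Ideal.span_le]
        rintro _ ⟨j, rfl⟩
        rw [SetLike.mem_coe, Submodule.mem_colon_singleton, smul_eq_mul, h2]
        refine P.add_mem (P.sum_mem ?_) (P.sum_mem ?_)
        · intro l _
          by_cases hl : a ≤ l
          · simp [h1 a j l hl]
          · refine P.mul_mem_left _ (Ideal.mem_sup_right (Ideal.subset_span ⟨l, ⟨Finset.mem_univ _, ?_⟩, rfl⟩))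
            have : l.1 < a.1 := by simpa using hl
            omega
        · intro s _
          exact P.mul_mem_left _ (Ideal.mem_sup_left (Ideal.subset_span ⟨s, rfl⟩))
      have := this hy
      rw [Submodule.mem_colon_singleton, smul_eq_mul, mul_comm] at this
      exact this)
  have htop : fp x t ⊔ Ideal.span (m '' (Finset.univ : Finset (Fin h))) = ⊤ := by
    rw [Ideal.eq_top_iff_one, h3]
    refine Ideal.add_mem _ (Ideal.sum_mem _ ?_) (Ideal.sum_mem _ ?_)
    · intro l _
      exact Ideal.mul_mem_left _ _ (Ideal.mem_sup_right (Ideal.subset_span ⟨l, by simp, rfl⟩))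
    · intro s _
      exact Ideal.mul_mem_left _ _ (Ideal.mem_sup_left (Ideal.subset_span ⟨s, rfl⟩))
  rw [htop] at key
  have h0 : ql D (⊤ : Ideal T) = 0 := by
    rw [ql, Module.length_eq_zero_iff]
    exact Ideal.Quotient.subsingleton_iff.2 rfl
  rw [h0] at key
  simpa using key

lemma ql_monomial {d : ℕ} (y : Fin d → T) {t N : ℕ} (htN : t < N) :
    ql D (fp y N) ≤ ql D (fp y t) + ((N ^ d - t ^ d : ℕ) : ℕ∞) * ql D (Ideal.span (Set.range y)) := by
  classical
  set B : Finset (Fin d → ℕ) := Fintype.piFinset (fun _ => Finset.range N) \ Fintype.piFinset (fun _ => Finset.range t)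
  have hcard : B.card = N ^ d - t ^ d := by
    rw [Finset.card_sdiff_of_subset]
    · simp
    · intro a ha; simp at ha ⊢; intro i; exact (ha i).trans htN
  have hB : ∀ a, a ∈ B ↔ (∀ i, a i < N) ∧ ∃ i, t ≤ a i := by
    intro a; simp [B]
  have key := ql_chain D B (fun a => ∑ i, a i) (fun a => ∏ i, y i ^ a i) (fp y N)
    (Ideal.span (Set.range y)) (by
      intro a ha z hz
      set P := fp y N ⊔ Ideal.span ((fun a : Fin d → ℕ => ∏ i, y i ^ a i) '' {b | b ∈ B ∧ ∑ i, a i < ∑ i, b i})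
      have : Ideal.span (Set.range y) ≤ P.colon {∏ i, y i ^ a i} := by
        rw [Ideal.span_le]
        rintro _ ⟨j, rfl⟩
        rw [SetLike.mem_coe, Submodule.mem_colon_singleton, smul_eq_mul]
        have e : y j * ∏ i, y i ^ a i = ∏ i, y i ^ (a + Pi.single j 1 : Fin d → ℕ) i := by
          simp only [Pi.add_apply, pow_add, Finset.prod_mul_distrib]
          rw [mul_comm]; congr 1
          rw [Finset.prod_eq_single j]
          · simp
          · intro b _ hb; simp [hb]
          · simp
        rw [e]
        rw [hB] at ha
        by_cases hj : a j + 1 < N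
        · refine Ideal.mem_sup_right (Ideal.subset_span ⟨a + Pi.single j 1, ⟨?_, ?_⟩, rfl⟩)
          · rw [hB]
            obtain ⟨h1, i, hi⟩ := ha
            refine ⟨?_, i, hi.trans (by simp)⟩
            intro k
            by_cases hk : k = j
            · subst hk; simpa using hj
            · simpa [hk] using h1 k
          · simp [Finset.sum_add_distrib]
        · have hjN : a j + 1 = N := by have := ha.1 j; omega
          refine Ideal.mem_sup_left (Ideal.mem_of_dvd _ ?_ (Ideal.subset_span ⟨j, rfl⟩))
          rw [← hjN]
          have h5 := Finset.dvd_prod_of_mem (fun i => y i ^ (a + Pi.single j 1 : Fin d → ℕ) i) (Finset.mem_univ j)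
          have e2 : a j + 1 = (a + Pi.single j 1 : Fin d → ℕ) j := by simp
          rw [e2]; exact h5
      have := this hz
      rw [Submodule.mem_colon_singleton, smul_eq_mul, mul_comm] at this
      exact this)
  rw [hcard] at key
  refine key.trans ?_
  gcongr
  apply ql_mono
  rw [Ideal.span_le]
  rintro _ ⟨i, rfl⟩
  refine Ideal.mem_sup_right (Ideal.subset_span ⟨Pi.single i t, ?_, ?_⟩)
  · rw [Finset.mem_coe, hB]
    refine ⟨?_, i, by simp⟩
    intro k
    by_cases hk : k = i
    · subst hk; simpa using htN
    · simp [hk]; omega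
  · simp only
    rw [Finset.prod_eq_single i]
    · simp
    · intro b _ hb; simp [hb]
    · simp
end
end Rob

namespace Rob

lemma AR_prime {D : Type*} [CommRing D] [IsNoetherianRing D] (p J : Ideal D) [p.IsPrime] (y : D) (hy : y ∉ p) :
    ∃ c, 1 ≤ c ∧ ∀ n, c ≤ n → ∀ z, y * z ∈ p ⊔ J ^ n → z ∈ p ⊔ J ^ (n - c) := by
  obtain ⟨k, hk⟩ := Ideal.exists_pow_inf_eq_pow_smul (M := D ⧸ p) J (Submodule.span D {Ideal.Quotient.mk p y})
  refine ⟨k + 1, by omega, fun n hn z hz => ?_⟩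
  have h1 : Ideal.Quotient.mk p (y * z) ∈ (J ^ n • ⊤ ⊓ (Submodule.span D {Ideal.Quotient.mk p y}) : Submodule D (D ⧸ p)) := by
    constructor
    · obtain ⟨a, ha, b, hb, hab⟩ := Submodule.mem_sup.1 hz
      rw [← hab, map_add, Ideal.Quotient.eq_zero_iff_mem.2 ha, zero_add]
      have : Ideal.Quotient.mk p b = b • (1 : D ⧸ p) := by
        rw [Algebra.smul_def, mul_one]; rfl
      rw [this]
      exact Submodule.smul_mem_smul hb trivial
    · rw [SetLike.mem_coe, Submodule.mem_span_singleton]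
      exact ⟨z, by rw [Algebra.smul_def, mul_comm, map_mul]; rfl⟩
  rw [hk n (by omega)] at h1
  have h2 := Submodule.smul_mono le_rfl inf_le_right h1
  obtain ⟨j, hj, hj2⟩ := Submodule.mem_smul_span_singleton.1 h2
  have h3 : Ideal.Quotient.mk p (j * y) = Ideal.Quotient.mk p (y * z) := by
    rw [← hj2, Algebra.smul_def, map_mul]; rfl
  rw [Ideal.Quotient.eq] at h3
  have h4 : y * (j - z) ∈ p := by convert h3 using 1; ring
  have h5 := (Ideal.IsPrime.mem_or_mem ‹_› h4).resolve_left hy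
  have : z = -(j - z) + j := by ring
  rw [this]
  exact Ideal.add_mem _ (Ideal.mem_sup_left (p.neg_mem h5))
    (Ideal.mem_sup_right (Ideal.pow_le_pow_right (by omega) hj))

lemma pow_bern (b c d : ℕ) : (b + c) ^ (d + 1) ≤ b ^ (d + 1) + (d + 1) * c * (b + c) ^ d := by
  induction d with
  | zero => simp
  | succ d ih =>
    have h1 : b ^ (d + 1) ≤ (b + c) ^ (d + 1) := Nat.pow_le_pow_left (by omega) _
    calc (b + c) ^ (d + 1 + 1) = (b + c) ^ (d + 1) * (b + c) := by ring
      _ ≤ (b ^ (d + 1) + (d + 1) * c * (b + c) ^ d) * (b + c) := Nat.mul_le_mul_right _ ih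
      _ = b ^ (d + 2) + c * b ^ (d + 1) + (d + 1) * c * (b + c) ^ (d + 1) := by ring
      _ ≤ b ^ (d + 2) + c * (b + c) ^ (d + 1) + (d + 1) * c * (b + c) ^ (d + 1) := by gcongr
      _ = _ := by ring

lemma growth {D : Type*} [CommRing D] [IsNoetherianRing D] [IsLocalRing D] (J : Ideal D)
    (hJ : J ≤ IsLocalRing.maximalIdeal D) (d : ℕ) :
    ∀ (p : LTSeries (PrimeSpectrum D)), p.length = d →
      ∃ C : ℕ, ∀ n, 1 ≤ n → ((n ^ d : ℕ) : ℕ∞) ≤ C * ql D (p.head.asIdeal ⊔ J ^ n) := by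
  have hone : ∀ (p : PrimeSpectrum D) n, 1 ≤ n → 1 ≤ ql D (p.asIdeal ⊔ J ^ n) := by
    intro p n hn
    rw [ENat.one_le_iff_ne_zero, ← pos_iff_ne_zero, ql, Module.length_pos_iff, Ideal.Quotient.nontrivial_iff]
    intro htop
    have : p.asIdeal ⊔ J ^ n ≤ IsLocalRing.maximalIdeal D :=
      sup_le (IsLocalRing.le_maximalIdeal p.2.ne_top) ((Ideal.pow_le_self (by omega)).trans hJ)
    rw [htop] at this
    exact (Ideal.IsPrime.ne_top inferInstance : IsLocalRing.maximalIdeal D ≠ ⊤) (top_le_iff.1 this)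
  induction d with
  | zero =>
    intro p _
    exact ⟨1, fun n hn => by simpa using hone p.head n hn⟩
  | succ d ih =>
    intro p hp
    have hp0 : p.length ≠ 0 := by omega
    obtain ⟨C', hC'⟩ := ih (p.tail hp0) (by simp [hp])
    rw [RelSeries.head_tail] at hC'
    have hlt : p.head < p 1 := p.strictMono (by
      rw [Fin.lt_def]
      have : ((1 : Fin (p.length + 1)) : ℕ) = 1 := by
        rw [Fin.val_one']; apply Nat.mod_eq_of_lt; omega
      rw [this]; exact Nat.zero_lt_one)
    set p0 := p.head
    set p1 := p 1
    obtain ⟨y, hy1, hy0⟩ := Set.exists_of_ssubset (show (p0.asIdeal : Set D) ⊂ p1.asIdeal from hlt)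
    obtain ⟨c, hc1, hc⟩ := AR_prime p0.asIdeal J y hy0
    refine ⟨C' * ((d + 1) * c) + c ^ (d + 1), ?_⟩
    intro n
    induction n using Nat.strong_induction_on with
    | _ n ihn =>
      intro hn
      by_cases hnc : n ≤ c
      · calc ((n ^ (d + 1) : ℕ) : ℕ∞) ≤ ((C' * ((d + 1) * c) + c ^ (d + 1) : ℕ) : ℕ∞) * 1 := by
              rw [mul_one]
              exact_mod_cast (Nat.pow_le_pow_left hnc _).trans (Nat.le_add_left _ _)
          _ ≤ _ := by gcongr; exact hone p0 n hn
      · obtain ⟨b, rfl⟩ : ∃ b, n = b + c := ⟨n - c, by omega⟩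
        have h1 := ihn b (by omega) (by omega)
        have h2 := hC' (b + c) hn
        have h3 := ql_ge_add D (I := p0.asIdeal ⊔ J ^ (b + c)) (Q := p0.asIdeal ⊔ J ^ b) (y := y) (by
          intro z hz; simpa using hc (b + c) (by omega) z hz)
        have h4 : ql D (p1.asIdeal ⊔ J ^ (b + c)) ≤ ql D (p0.asIdeal ⊔ J ^ (b + c) ⊔ Ideal.span {y}) := by
          apply ql_mono
          refine sup_le (sup_le (le_sup_of_le_left (le_of_lt hlt)) le_sup_right) ?_
          rw [Ideal.span_le, Set.singleton_subset_iff]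
          exact Ideal.mem_sup_left hy1
        set C := C' * ((d + 1) * c) + c ^ (d + 1) with hC
        calc (((b + c) ^ (d + 1) : ℕ) : ℕ∞) ≤ ((b ^ (d + 1) + (d + 1) * c * (b + c) ^ d : ℕ) : ℕ∞) := by
              exact_mod_cast pow_bern b c d
          _ = ((b ^ (d + 1) : ℕ) : ℕ∞) + (((d + 1) * c : ℕ) : ℕ∞) * (((b + c) ^ d : ℕ) : ℕ∞) := by push_cast; ring
          _ ≤ C * ql D (p0.asIdeal ⊔ J ^ b) + (((d + 1) * c : ℕ) : ℕ∞) * (C' * ql D (p1.asIdeal ⊔ J ^ (b + c))) := by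
              gcongr
          _ = C * ql D (p0.asIdeal ⊔ J ^ b) + ((C' * ((d + 1) * c) : ℕ) : ℕ∞) * ql D (p1.asIdeal ⊔ J ^ (b + c)) := by
              push_cast; ring
          _ ≤ C * ql D (p0.asIdeal ⊔ J ^ b) + C * ql D (p0.asIdeal ⊔ J ^ (b + c) ⊔ Ideal.span {y}) := by
              gcongr
              omega
          _ = C * (ql D (p0.asIdeal ⊔ J ^ (b + c) ⊔ Ideal.span {y}) + ql D (p0.asIdeal ⊔ J ^ b)) := by ring
          _ ≤ _ := by gcongr

lemma ql_fin {D : Type*} [CommRing D] [IsNoetherianRing D] {T : Type*} [CommRing T] [Algebra D T]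
    [Module.Finite D T] (J : Ideal D) (hJ : J.radical.IsMaximal) :
    ql D (J.map (algebraMap D T)) ≠ ⊤ := by
  have hA : IsArtinianRing (D ⧸ J) := by
    rw [isArtinianRing_iff_isNoetherianRing_krullDimLE_zero]
    refine ⟨inferInstance, ?_⟩
    rw [Ring.krullDimLE_zero_iff]
    intro P hP
    have hle : J ≤ P.comap (Ideal.Quotient.mk J) := fun a ha => by
      rw [Ideal.mem_comap, Ideal.Quotient.eq_zero_iff_mem.2 ha]; exact P.zero_mem
    have h1 : J.radical ≤ P.comap (Ideal.Quotient.mk J) :=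
      (Ideal.IsPrime.radical_le_iff (Ideal.comap_isPrime _ P)).2 hle
    have h2 : J.radical = P.comap (Ideal.Quotient.mk J) :=
      hJ.eq_of_le (Ideal.comap_isPrime _ P).ne_top h1
    have h3 : (P.comap (Ideal.Quotient.mk J)).IsMaximal := h2 ▸ hJ
    exact Ideal.isMaximal_of_isIntegral_of_isMaximal_comap (R := D) P h3
  have : Module.Finite (D ⧸ J) (T ⧸ J.map (algebraMap D T)) := Module.Finite.of_restrictScalars_finite D _ _
  have : IsArtinian D (T ⧸ J.map (algebraMap D T)) :=
    isArtinian_of_surjective_algebraMap (R := D ⧸ J) Ideal.Quotient.mk_surjective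
  exact Module.length_ne_top

lemma ql_lower {D : Type*} [CommRing D] [IsNoetherianRing D] {T : Type*} [CommRing T] [Algebra D T]
    [Module.Finite D T] (hinj : Function.Injective (algebraMap D T)) (J : Ideal D) :
    ∃ k, ∀ n, k ≤ n → ql D (J ^ (n - k)) ≤ ql D ((J ^ n).map (algebraMap D T)) := by
  obtain ⟨k, hk⟩ := Ideal.exists_pow_inf_eq_pow_smul (M := T) J (LinearMap.range (Algebra.linearMap D T))
  refine ⟨k, fun n hn => ?_⟩
  have hle : ((J ^ n).map (algebraMap D T)).comap (algebraMap D T) ≤ J ^ (n - k) := by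
    intro z hz
    have h1 : algebraMap D T z ∈ (J ^ n • ⊤ ⊓ LinearMap.range (Algebra.linearMap D T) : Submodule D T) := by
      constructor
      · rw [Ideal.smul_top_eq_map]; exact hz
      · exact ⟨z, rfl⟩
    rw [hk n hn] at h1
    have h2 := Submodule.smul_mono le_rfl inf_le_right h1
    rw [LinearMap.range_eq_map, ← Submodule.map_smul''] at h2
    obtain ⟨w, hw, hwz⟩ := h2
    have := hinj hwz
    subst this
    simpa using hw
  refine (ql_mono D hle).trans ?_
  exact Module.length_le_of_injective
    (Ideal.quotientMapₐ _ (Algebra.ofId D T) le_rfl).toLinearMap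
    (Ideal.quotientMap_injective (f := algebraMap D T))

lemma arith {N d h t C A k : ℕ} (hN : 2 ≤ N) (htN : t ^ d ≤ N ^ d)
    (H : ∀ e, k < N ^ e → (N ^ e - k) ^ d ≤ C * ((h + (N ^ d - t ^ d)) ^ e * A)) : t ^ d ≤ h := by
  by_contra hlt
  push Not at hlt
  set H' := h + (N ^ d - t ^ d) with hH'
  have hHN : H' < N ^ d := by omega
  have hNd : (0 : ℝ) < (N : ℝ) ^ d := by positivity
  have h1 : Filter.Tendsto (fun e : ℕ => (2 : ℝ) ^ d * C * A * ((H' : ℝ) / (N : ℝ) ^ d) ^ e) Filter.atTop (nhds 0) := by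
    have : ((H' : ℝ) / (N : ℝ) ^ d) < 1 := by
      rw [div_lt_one hNd]; exact_mod_cast hHN
    simpa using (tendsto_pow_atTop_nhds_zero_of_lt_one (by positivity) this).const_mul ((2 : ℝ) ^ d * C * A)
  have h2 := h1.eventually (gt_mem_nhds (show (0 : ℝ) < 1 by norm_num))
  have h3 := (tendsto_pow_atTop_atTop_of_one_lt (show 1 < N by omega)).eventually (Filter.eventually_gt_atTop (2 * k))
  obtain ⟨e, he1, he2⟩ := (h2.and h3).exists
  have h4 := H e (by omega)
  have h5 : N ^ e ≤ 2 * (N ^ e - k) := by omega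
  have h6 : (N ^ e) ^ d ≤ 2 ^ d * (C * (H' ^ e * A)) := by
    calc (N ^ e) ^ d ≤ (2 * (N ^ e - k)) ^ d := Nat.pow_le_pow_left h5 d
      _ = 2 ^ d * (N ^ e - k) ^ d := by rw [mul_pow]
      _ ≤ _ := Nat.mul_le_mul_left _ h4
  have h7 : (((N : ℝ) ^ d) ^ e) ≤ 2 ^ d * C * A * (H' : ℝ) ^ e := by
    have : ((N : ℝ) ^ e) ^ d ≤ 2 ^ d * (C * ((H' : ℝ) ^ e * A)) := by exact_mod_cast h6
    calc _ = ((N : ℝ) ^ e) ^ d := by rw [← pow_mul, ← pow_mul, mul_comm]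
      _ ≤ _ := this
      _ = _ := by ring
  rw [div_pow, mul_div_assoc', div_lt_one (by positivity)] at he1
  linarith

theorem charp {D : Type*} [CommRing D] [IsNoetherianRing D] [IsLocalRing D] {T : Type*} [CommRing T] [Algebra D T]
    [Module.Finite D T] (hinj : Function.Injective (algebraMap D T)) (p : ℕ) [Fact p.Prime] [CharP T p]
    {d : ℕ} (hd : (d : WithBot ℕ∞) ≤ ringKrullDim D) (x : Fin d → D)
    (hx : (Ideal.span (Set.range x)).radical.IsMaximal) {t h : ℕ}
    (H : QLD (fun i => algebraMap D T (x i)) t h) : t ^ d ≤ h := by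
  set J := Ideal.span (Set.range x)
  have hJm : J ≤ IsLocalRing.maximalIdeal D :=
    Ideal.le_radical.trans (IsLocalRing.le_maximalIdeal hx.ne_top)
  obtain ⟨l, hl⟩ := Order.le_krullDim_iff.1 hd
  obtain ⟨C, hC⟩ := growth J hJm d l hl
  obtain ⟨k, hk⟩ := ql_lower (T := T) hinj J
  set y : Fin d → T := fun i => algebraMap D T (x i) with hy
  have hmap : J.map (algebraMap D T) = Ideal.span (Set.range y) := by
    rw [Ideal.map_span, ← Set.range_comp]; rfl
  have hpow1 : ∀ n, fp y n ≤ (J ^ n).map (algebraMap D T) := by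
    intro n
    rw [Ideal.span_le]
    rintro _ ⟨i, rfl⟩
    rw [Ideal.map_pow]
    exact Ideal.pow_mem_pow (Ideal.mem_map_of_mem _ (Ideal.subset_span (Set.mem_range_self i))) n
  have hlow : ∀ n, k < n → (((n - k) ^ d : ℕ) : ℕ∞) ≤ C * ql D (fp y n) := by
    intro n hn
    refine (hC (n - k) (by omega)).trans ?_
    gcongr
    refine (ql_mono D le_sup_right).trans ((hk n hn.le).trans (ql_mono D (hpow1 n)))
  have hfin := ql_fin (T := T) J hx
  rw [hmap] at hfin
  obtain ⟨A, hA⟩ := ENat.ne_top_iff_exists.1 hfin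
  have hp := (Fact.out : p.Prime)
  have hp2 := hp.two_le
  set N := p ^ (t + 1) with hN
  have htN : t < N := (Nat.lt_pow_self hp2).trans (Nat.pow_lt_pow_right hp2 (by omega))
  have hN2 : 2 ≤ N := hp2.trans (Nat.le_self_pow (by omega) p)
  have hup : ∀ e, ql D (fp y (N ^ e)) ≤ (((h + (N ^ d - t ^ d)) ^ e * A : ℕ) : ℕ∞) := by
    intro e
    induction e with
    | zero => simp [hA, fp]
    | succ e ih =>
      have hq : N ^ e = p ^ ((t + 1) * e) := by rw [hN, pow_mul]
      have hF := (H.map (iterateFrobenius T p ((t + 1) * e))).ql_le D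
      have hF' : (fun i => iterateFrobenius T p ((t + 1) * e) (y i)) = fun i => y i ^ (N ^ e) := by
        funext i; rw [iterateFrobenius_def, hq]
      rw [hF'] at hF
      have hM := ql_monomial D (fun i => y i ^ (N ^ e)) htN
      have h1 : fp (fun i => y i ^ (N ^ e)) N = fp y (N ^ (e + 1)) := by
        simp only [fp, ← pow_mul, pow_succ]
      rw [h1] at hM
      refine hM.trans ?_
      calc _ ≤ (h : ℕ∞) * ql D (fp y (N ^ e)) + ((N ^ d - t ^ d : ℕ) : ℕ∞) * ql D (fp y (N ^ e)) := by
            gcongr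
        _ = ((h + (N ^ d - t ^ d) : ℕ) : ℕ∞) * ql D (fp y (N ^ e)) := by push_cast; ring
        _ ≤ ((h + (N ^ d - t ^ d) : ℕ) : ℕ∞) * (((h + (N ^ d - t ^ d)) ^ e * A : ℕ) : ℕ∞) := by gcongr
        _ = _ := by push_cast; ring
  refine arith hN2 (Nat.pow_le_pow_left htN.le d) (C := C) (A := A) (k := k) ?_
  intro e he
  have := (hlow _ he).trans (mul_le_mul_right (hup e) _)
  exact_mod_cast this
end Rob

namespace Rob

lemma fieldaux {F : Type*} [Field F] (z a b c : F) (h : b ≠ 0) : z * (a * c) = z * (b * c) * (a / b) := by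
  field_simp

lemma lemS_core (Z W : Type*) [CommRing Z] [IsDomain Z] [IsIntegrallyClosed Z] [CharZero Z]
    [CommRing W] [IsDomain W] [Algebra Z W] (hinj : Function.Injective (algebraMap Z W))
    [Algebra.IsAlgebraic Z W] {ι : Type*} [Finite ι] (w : ι → W)
    (hw : Algebra.adjoin ℤ (Set.range w) = ⊤) :
    ∃ (θ : W) (g : Polynomial Z) (h : Z) (a : ι → Polynomial Z),
      Polynomial.aeval θ g = 0 ∧ Polynomial.aeval θ (Polynomial.derivative g) ≠ 0 ∧ h ≠ 0 ∧
      (∀ i, algebraMap Z W h * w i = Polynomial.aeval θ (a i)) ∧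
      (∀ P : Polynomial Z, Polynomial.aeval θ P = 0 → g ∣ P) := by
  classical
  have hf : FaithfulSMul Z W := (faithfulSMul_iff_algebraMap_injective Z W).2 hinj
  let L := FractionRing Z
  let F := FractionRing W
  have : FaithfulSMul Z F := by
    rw [faithfulSMul_iff_algebraMap_injective, IsScalarTower.algebraMap_eq Z W F]
    exact (IsFractionRing.injective W F).comp hinj
  let _ : Algebra L F := FractionRing.liftAlgebra Z F
  have : IsScalarTower Z L F := FractionRing.isScalarTower_liftAlgebra Z F
  have hWFalg : Algebra.IsAlgebraic L F := by
    have h1 : Algebra.IsAlgebraic Z F := by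
      have : Algebra.IsAlgebraic W F := IsLocalization.isAlgebraic (R := W) (S := F) (nonZeroDivisors W)
      exact Algebra.IsAlgebraic.trans Z W F
    exact Algebra.IsAlgebraic.extendScalars (R := Z) (IsFractionRing.injective Z L)
  have hCL : CharZero L := charZero_of_injective_algebraMap (IsFractionRing.injective Z L)
  -- finite dimensional
  have hadj : IntermediateField.adjoin L (Set.range fun i => algebraMap W F (w i)) = ⊤ := by
    set E := IntermediateField.adjoin L (Set.range fun i => algebraMap W F (w i))
    have hW : ∀ x : W, algebraMap W F x ∈ E := by
      intro x
      have hx : x ∈ Algebra.adjoin ℤ (Set.range w) := hw ▸ trivial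
      induction hx using Algebra.adjoin_induction with
      | mem x hx =>
        obtain ⟨i, rfl⟩ := hx
        exact IntermediateField.subset_adjoin _ _ ⟨i, rfl⟩
      | algebraMap r => simp
      | add x y _ _ hx hy => rw [map_add]; exact add_mem hx hy
      | mul x y _ _ hx hy => rw [map_mul]; exact mul_mem hx hy
    rw [eq_top_iff]
    intro x _
    obtain ⟨a, b, hb, rfl⟩ := IsFractionRing.div_surjective (A := W) x
    exact div_mem (hW a) (hW b)
  have hfd : FiniteDimensional L F := by
    have := IntermediateField.finiteDimensional_adjoin (K := L) (L := F) (S := Set.range fun i => algebraMap W F (w i))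
      (fun x _ => (Algebra.IsAlgebraic.isAlgebraic x).isIntegral)
    rw [hadj] at this
    exact IntermediateField.topEquiv.toLinearEquiv.finiteDimensional
  obtain ⟨α, hα⟩ := Field.exists_primitive_element L F
  -- scale α
  obtain ⟨z, hz0, θ, hθint, hθ⟩ : ∃ z : Z, z ≠ 0 ∧ ∃ θ : W, IsIntegral Z θ ∧ algebraMap W F θ = algebraMap Z F z * α := by
    obtain ⟨a, b, hb, hab⟩ := IsFractionRing.div_surjective (A := W) α
    have hb0 : b ≠ 0 := nonZeroDivisors.ne_zero hb
    obtain ⟨b', z1, hz1, hbb⟩ : ∃ (b' : W) (z1 : Z), z1 ≠ 0 ∧ b * b' = algebraMap Z W z1 := by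
      have := (Algebra.IsAlgebraic.isAlgebraic (R := Z) b).exists_nonzero_dvd (mem_nonZeroDivisors_of_ne_zero hb0)
      obtain ⟨r, hr, c, hc⟩ := this
      exact ⟨c, r, hr, hc.symm⟩
    obtain ⟨z2, hz2, hintg⟩ := IsAlgebraic.exists_integral_multiple (Algebra.IsAlgebraic.isAlgebraic (R := Z) (a * b'))
    refine ⟨z2 * z1, mul_ne_zero hz2 hz1, z2 • (a * b'), hintg, ?_⟩
    have hb0' : algebraMap W F b ≠ 0 := by simpa using hb0
    rw [← hab, Algebra.smul_def, map_mul, map_mul, map_mul, ← IsScalarTower.algebraMap_apply,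
      IsScalarTower.algebraMap_apply Z W F z1, ← hbb, map_mul]
    exact fieldaux _ _ _ _ hb0'
  have hzF : algebraMap Z F z ≠ 0 := by
    rw [Ne, map_eq_zero_iff _ (FaithfulSMul.algebraMap_injective Z F)]; exact hz0
  -- generator
  have hgen : IntermediateField.adjoin L {algebraMap W F θ} = ⊤ := by
    rw [eq_top_iff, ← hα, IntermediateField.adjoin_le_iff, Set.singleton_subset_iff]
    have : α = algebraMap W F θ / algebraMap L F (algebraMap Z L z) := by
      rw [hθ, ← IsScalarTower.algebraMap_apply, mul_div_cancel_left₀ _ hzF]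
    rw [this]
    exact div_mem (IntermediateField.mem_adjoin_simple_self _ _) (algebraMap_mem _ _)
  have hgen' : ∀ x : F, ∃ P : Polynomial L, x = Polynomial.aeval (algebraMap W F θ) P := by
    intro x
    have hx : x ∈ IntermediateField.adjoin L {algebraMap W F θ} := hgen ▸ trivial
    rw [← IntermediateField.mem_toSubalgebra, IntermediateField.adjoin_simple_toSubalgebra_of_isAlgebraic
      (Algebra.IsAlgebraic.isAlgebraic _), Algebra.adjoin_singleton_eq_range_aeval] at hx
    obtain ⟨P, hP⟩ := hx
    exact ⟨P, hP.symm⟩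
  choose P hP using fun i => hgen' (algebraMap W F (w i))
  obtain ⟨_⟩ := nonempty_fintype ι
  -- common denominators
  have hden : ∀ i, ∃ b : Z, b ≠ 0 ∧ ∃ Q : Polynomial Z, algebraMap Z W b * w i = Polynomial.aeval θ Q := by
    intro i
    obtain ⟨b, hbm, hb⟩ := IsLocalization.integerNormalization_spec (nonZeroDivisors Z) (P i)
    refine ⟨b, nonZeroDivisors.ne_zero hbm, IsLocalization.integerNormalization (nonZeroDivisors Z) (P i), ?_⟩
    have hmapA : ∀ Q : Polynomial Z, Polynomial.aeval (algebraMap W F θ) (Q.map (algebraMap Z L)) = Polynomial.aeval (algebraMap W F θ) Q :=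
      fun Q => Polynomial.aeval_map_algebraMap _ _ _
    apply IsFractionRing.injective W F
    rw [map_mul, hP, ← Polynomial.aeval_algebraMap_apply, ← hmapA (IsLocalization.integerNormalization (nonZeroDivisors Z) (P i)), hb,
      ← IsScalarTower.algebraMap_apply, Algebra.smul_def, map_mul]
    congr 1
    rw [IsScalarTower.algebraMap_apply Z L (Polynomial L), Polynomial.algebraMap_eq, Polynomial.aeval_C,
      ← IsScalarTower.algebraMap_apply]
  choose b hb0 Q hQ using hden
  refine ⟨θ, minpoly Z θ, ∏ i, b i, fun i => Polynomial.C (∏ j ∈ Finset.univ.erase i, b j) * Q i, minpoly.aeval _ _, ?_, ?_, ?_, ?_⟩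
  · intro h0
    have hd := minpoly.isIntegrallyClosed_dvd hθint h0
    have h1 : (Polynomial.derivative (minpoly Z θ)).degree < (minpoly Z θ).degree :=
      Polynomial.degree_derivative_lt (minpoly.ne_zero hθint)
    have h2 := Polynomial.eq_zero_of_dvd_of_degree_lt hd h1
    have h3 := Polynomial.derivative_eq_zero.1 h2
    exact (minpoly.natDegree_pos hθint).ne' h3
  · exact Finset.prod_ne_zero_iff.2 fun i _ => hb0 i
  · intro i
    rw [← Finset.mul_prod_erase _ _ (Finset.mem_univ i), map_mul, map_mul, Polynomial.aeval_C, ← hQ]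
    ring
  · intro P hP
    exact minpoly.isIntegrallyClosed_dvd hθint hP
end Rob

namespace Rob

lemma lemLift {Z W : Type*} [CommRing Z] [CommRing W] [IsDomain W] [Algebra Z W]
    {ι : Type*} (w : ι → W) (hw : Algebra.adjoin ℤ (Set.range w) = ⊤)
    (θ : W) (g : Polynomial Z) (h : Z) (a : ι → Polynomial Z) (hh : algebraMap Z W h ≠ 0)
    (ha : ∀ i, algebraMap Z W h * w i = Polynomial.aeval θ (a i))
    (hg : ∀ P : Polynomial Z, Polynomial.aeval θ P = 0 → g ∣ P)
    {C : Type*} [CommRing C] [IsDomain C] (η : Polynomial Z →+* C) (hηg : η g = 0)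
    (hηh : η (Polynomial.C h) ≠ 0) (b : ι → C) (hb : ∀ i, η (Polynomial.C h) * b i = η (a i)) :
    ∃ ψ : W →+* C, ∀ i, ψ (w i) = b i := by
  let H : Polynomial Z := Polynomial.C h
  let SH := Localization.Away H
  let e1 : Polynomial Z →+* FractionRing W := (algebraMap W (FractionRing W)).comp (Polynomial.aeval θ : Polynomial Z →ₐ[Z] W).toRingHom
  have he1 : e1 H = algebraMap W (FractionRing W) (algebraMap Z W h) := by
    simp [e1, H]
  have he1' : IsUnit (e1 H) := by
    rw [he1]
    apply IsUnit.mk0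
    simpa using hh
  let e2 : Polynomial Z →+* FractionRing C := (algebraMap C (FractionRing C)).comp η
  have he2' : IsUnit (e2 H) := by
    apply IsUnit.mk0
    simpa [e2] using hηh
  let f1 : SH →+* FractionRing W := IsLocalization.Away.lift H he1'
  let f2 : SH →+* FractionRing C := IsLocalization.Away.lift H he2'
  have hf1 : ∀ x, f1 (algebraMap _ SH x) = e1 x := fun x => IsLocalization.Away.lift_eq H he1' x
  have hf2 : ∀ x, f2 (algebraMap _ SH x) = e2 x := fun x => IsLocalization.Away.lift_eq H he2' x
  have hker : ∀ x, f1 x = 0 → f2 x = 0 := by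
    intro x hx
    obtain ⟨n, u, hu⟩ := IsLocalization.Away.surj H x
    have h1 : e1 u = 0 := by rw [← hf1, ← hu, map_mul, hx, zero_mul]
    have h2 : Polynomial.aeval θ u = 0 := by
      simpa [e1] using h1
    obtain ⟨q, rfl⟩ := hg u h2
    have h3 : e2 (g * q) = 0 := by simp [e2, hηg]
    rw [← hf2, ← hu, map_mul] at h3
    refine (mul_eq_zero.1 h3).resolve_right ?_
    rw [map_pow, hf2]
    exact pow_ne_zero _ he2'.ne_zero
  have hHu : IsUnit (algebraMap (Polynomial Z) SH H) := IsLocalization.Away.algebraMap_isUnit H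
  obtain ⟨U, hU⟩ := hHu
  let π : MvPolynomial ι ℤ →+* SH := (MvPolynomial.aeval (fun i => (↑U⁻¹ : SH) * algebraMap _ SH (a i)) : _ →ₐ[ℤ] SH).toRingHom
  have hπ : ∀ i, algebraMap _ SH H * π (MvPolynomial.X i) = algebraMap _ SH (a i) := by
    intro i
    rw [← hU]
    simp [π]
  have c1 : f1.comp π = (algebraMap W (FractionRing W)).comp (MvPolynomial.aeval w : _ →ₐ[ℤ] W).toRingHom := by
    apply MvPolynomial.ringHom_ext
    · intro r; simp
    · intro i
      have := congrArg f1 (hπ i)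
      rw [map_mul, hf1, hf1] at this
      apply he1'.mul_left_cancel
      simp only [RingHom.comp_apply]
      rw [this, he1]
      simp [e1, ← map_mul, ha]
  have c2 : f2.comp π = (algebraMap C (FractionRing C)).comp (MvPolynomial.aeval b : _ →ₐ[ℤ] C).toRingHom := by
    apply MvPolynomial.ringHom_ext
    · intro r; simp
    · intro i
      have := congrArg f2 (hπ i)
      rw [map_mul, hf2, hf2] at this
      apply he2'.mul_left_cancel
      simp only [RingHom.comp_apply]
      rw [this]
      simp [e2, H, ← map_mul, hb]
  have hk : ∀ Q : MvPolynomial ι ℤ, MvPolynomial.aeval w Q = 0 → MvPolynomial.aeval b Q = 0 := by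
    intro Q hQ
    have h1 := RingHom.congr_fun c1 Q
    have h2 := RingHom.congr_fun c2 Q
    simp only [RingHom.comp_apply, AlgHom.toRingHom_eq_coe, RingHom.coe_coe, hQ, map_zero] at h1 h2
    rw [hker _ h1] at h2
    exact (map_eq_zero_iff _ (IsFractionRing.injective C (FractionRing C))).1 h2.symm
  have hsurj : Function.Surjective (MvPolynomial.aeval w : MvPolynomial ι ℤ →ₐ[ℤ] W).toRingHom := by
    have := hw
    rw [Algebra.adjoin_range_eq_range_aeval] at this
    exact AlgHom.range_eq_top _ |>.1 this
  refine ⟨RingHom.liftOfSurjective _ hsurj ⟨(MvPolynomial.aeval b : MvPolynomial ι ℤ →ₐ[ℤ] C).toRingHom, ?_⟩, ?_⟩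
  · intro Q hQ; exact hk Q hQ
  · intro i
    have := RingHom.liftOfRightInverse_comp_apply (MvPolynomial.aeval w : MvPolynomial ι ℤ →ₐ[ℤ] W).toRingHom
      _ (Function.rightInverse_surjInv hsurj) ⟨(MvPolynomial.aeval b : MvPolynomial ι ℤ →ₐ[ℤ] C).toRingHom, fun Q hQ => hk Q hQ⟩ (MvPolynomial.X i)
    simpa using this

lemma lemS (W : Type u) [CommRing W] [IsDomain W] [CharZero W] {ι : Type*} [Finite ι] (w : ι → W)
    (hw : Algebra.adjoin ℤ (Set.range w) = ⊤) :
    ∃ (s : Type u) (_ : Finite s) (y : s → W) (θ : W) (g : Polynomial (MvPolynomial s ℤ))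
      (h : MvPolynomial s ℤ) (a : ι → Polynomial (MvPolynomial s ℤ)),
      Polynomial.eval₂ (MvPolynomial.aeval y).toRingHom θ g = 0 ∧
      Polynomial.eval₂ (MvPolynomial.aeval y).toRingHom θ (Polynomial.derivative g) ≠ 0 ∧
      MvPolynomial.aeval y h ≠ 0 ∧
      (∀ i, MvPolynomial.aeval y h * w i = Polynomial.eval₂ (MvPolynomial.aeval y).toRingHom θ (a i)) ∧
      (∀ {C : Type u} [CommRing C] [IsDomain C] (η : Polynomial (MvPolynomial s ℤ) →+* C) (_ : η g = 0)
        (_ : η (Polynomial.C h) ≠ 0) (b : ι → C) (_ : ∀ i, η (Polynomial.C h) * b i = η (a i)),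
        ∃ ψ : W →+* C, ∀ i, ψ (w i) = b i) := by
  have : Algebra.IsAlgebraic (Algebra.adjoin ℤ (Set.range w)) W := by
    rw [hw]
    exact ⟨fun x => isAlgebraic_algebraMap (⟨x, trivial⟩ : (⊤ : Subalgebra ℤ W))⟩
  obtain ⟨s, hs, htb⟩ := exists_isTranscendenceBasis_subset (R := ℤ) (Set.range w)
  have hfin : Finite s := ((Set.finite_range w).subset hs).to_subtype
  let y : s → W := Subtype.val
  let Z := MvPolynomial s ℤ
  let _ : Algebra Z W := (MvPolynomial.aeval y).toRingHom.toAlgebra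
  have hal : ∀ z : Z, algebraMap Z W z = MvPolynomial.aeval y z := fun z => rfl
  have hinj : Function.Injective (algebraMap Z W) := htb.1
  have halg : Algebra.IsAlgebraic Z W := by
    have h1 := htb.isAlgebraic
    constructor
    intro x
    obtain ⟨p, hp0, hp⟩ := h1.isAlgebraic x
    let E := htb.1.aevalEquiv
    refine ⟨p.map (E.symm : _ →+* Z), ?_, ?_⟩
    · rw [Ne, Polynomial.map_eq_zero_iff]
      · exact hp0
      · exact E.symm.injective
    · rw [Polynomial.aeval_def, Polynomial.eval₂_map]
      rw [Polynomial.aeval_def] at hp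
      convert hp using 2
      ext z
      have : E (E.symm z) = z := E.apply_symm_apply z
      exact (htb.1.algebraMap_aevalEquiv _).symm.trans (congrArg _ this)
  obtain ⟨θ, g, h, a, h1, h2, h3, h4, h5⟩ := lemS_core Z W hinj w hw
  have hh : algebraMap Z W h ≠ 0 := by
    rw [Ne, map_eq_zero_iff _ hinj]; exact h3
  refine ⟨s, hfin, y, θ, g, h, a, h1, h2, hh, h4, ?_⟩
  intro C _ _ η e1 e2 b e3
  exact lemLift w hw θ g h a hh h4 h5 η e1 e2 b e3
end Rob

namespace Rob

/-- evaluation of integer polynomial -/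
noncomputable abbrev ev1 {s R : Type*} [CommRing R] (y : s → R) : MvPolynomial s ℤ →+* R := (MvPolynomial.aeval y).toRingHom
noncomputable abbrev ev2 {s R : Type*} [CommRing R] (y : s → R) (θ : R) : Polynomial (MvPolynomial s ℤ) →+* R :=
  Polynomial.eval₂RingHom (ev1 y) θ

lemma map_ev1' {s R R' : Type*} [CommRing R] [CommRing R'] (f : R →+* R') (y : s → R) :
    f.comp (ev1 y) = ev1 (fun i => f (y i)) := by
  apply MvPolynomial.ringHom_ext
  · intro r; simp
  · intro i; simp

lemma map_ev1 {s R R' : Type*} [CommRing R] [CommRing R'] (f : R →+* R') (y : s → R) (P) :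
    f (ev1 y P) = ev1 (fun i => f (y i)) P := RingHom.congr_fun (map_ev1' f y) P

lemma map_ev2 {s R R' : Type*} [CommRing R] [CommRing R'] (f : R →+* R') (y : s → R) (θ : R) (P) :
    f (ev2 y θ P) = ev2 (fun i => f (y i)) (f θ) P := by
  simp only [ev2, Polynomial.coe_eval₂RingHom]
  rw [Polynomial.hom_eval₂, map_ev1']

lemma ev2_C {s R : Type*} [CommRing R] (y : s → R) (θ : R) (P) : ev2 y θ (Polynomial.C P) = ev1 y P := by
  simp

lemma fixpt {R : Type*} [CommRing R] (I : Ideal R) [IsAdicComplete I R] (x : R) (hx : x ∈ I) (Q : Polynomial R) :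
    ∃ z, z = x * Q.eval z := by
  let z : ℕ → R := fun n => Nat.rec 0 (fun _ z => x * Q.eval z) n
  have hz : ∀ n, z (n + 1) = x * Q.eval (z n) := fun n => rfl
  have hstep : ∀ n, z (n + 1) - z n ∈ I ^ n := by
    intro n
    induction n with
    | zero => simp
    | succ n ih =>
      rw [hz (n + 1), hz n, ← mul_sub, pow_succ']
      refine Ideal.mul_mem_mul hx ?_
      exact Ideal.mem_of_dvd _ (Polynomial.sub_dvd_eval_sub _ _ _) ih
  have hcauchy : ∀ {m n}, m ≤ n → z m ≡ z n [SMOD (I ^ m • ⊤ : Submodule R R)] := by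
    intro m n hmn
    induction n, hmn using Nat.le_induction with
    | base => rfl
    | succ n hmn ih =>
      refine ih.trans (SModEq.symm ?_)
      rw [SModEq.sub_mem, smul_eq_mul, Ideal.mul_top]
      exact Ideal.pow_le_pow_right hmn (hstep n)
  obtain ⟨L, hL⟩ := IsPrecomplete.prec (I := I) inferInstance hcauchy
  refine ⟨L, ?_⟩
  rw [← sub_eq_zero]
  apply IsHausdorff.haus (I := I) inferInstance
  intro n
  rw [SModEq.zero, smul_eq_mul, Ideal.mul_top]
  have h1 : ∀ n, z n - L ∈ I ^ n := by
    intro n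
    have := hL n
    rwa [SModEq.sub_mem, smul_eq_mul, Ideal.mul_top] at this
  have e : L - x * Q.eval L = -(z (n + 1) - L) + x * (Q.eval (z n) - Q.eval L) := by
    rw [hz]; ring
  rw [e]
  refine Ideal.add_mem _ (neg_mem (Ideal.pow_le_pow_right (Nat.le_succ n) (h1 (n + 1)))) ?_
  exact Ideal.mul_mem_left _ _ (Ideal.mem_of_dvd _ (Polynomial.sub_dvd_eval_sub _ _ _) (h1 n))

/-- the approximate solution data -/
def SD {s ι : Type*} (g : Polynomial (MvPolynomial s ℤ)) (h : MvPolynomial s ℤ) (a : ι → Polynomial (MvPolynomial s ℤ))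
    {R : Type*} [CommRing R] (Y : s → Polynomial R) (Θ α v q : Polynomial R) (b c : ι → Polynomial R) (vi : R) : Prop :=
  α.Monic ∧ v.coeff 0 * vi = 1 ∧ ev2 Y Θ g = α ^ 2 * q ∧
  ev2 Y Θ (Polynomial.derivative g) * ev1 Y h * Polynomial.X = α * v ∧
  ∀ i, ev2 Y Θ (a i) = ev1 Y h * b i + α ^ 2 * c i

lemma SD_up {s ι : Type*} {g : Polynomial (MvPolynomial s ℤ)} {h : MvPolynomial s ℤ} {a : ι → Polynomial (MvPolynomial s ℤ)}
    {R : Type*} [CommRing R] [IsDomain R] {Y : s → Polynomial R} {Θ α v q : Polynomial R} {b c : ι → Polynomial R} {vi : R}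
    (H : SD g h a Y Θ α v q b c vi) :
    ∃ (η : Polynomial (MvPolynomial s ℤ) →+* PowerSeries R) (bs : ι → PowerSeries R),
      η g = 0 ∧ η (Polynomial.C h) ≠ 0 ∧ (∀ i, η (Polynomial.C h) * bs i = η (a i)) ∧
      ∀ i, ∃ r, bs i = (b i : PowerSeries R) + PowerSeries.X ^ 2 * r := by
  obtain ⟨hmon, hv, h1, h2, h3⟩ := H
  let co : Polynomial R →+* PowerSeries R := Polynomial.coeToPowerSeries.ringHom
  let y : s → PowerSeries R := fun i => co (Y i)
  let t : PowerSeries R := co Θ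
  have hvu : IsUnit (co v) := by
    rw [PowerSeries.isUnit_iff_constantCoeff]
    refine IsUnit.of_mul_eq_one vi ?_
    simpa [co, ← PowerSeries.coeff_zero_eq_constantCoeff_apply] using hv
  obtain ⟨v', hv'⟩ := hvu.exists_left_inv
  have h1' := congrArg co h1
  have h2' := congrArg co h2
  have h3' := fun i => congrArg co (h3 i)
  simp only [map_mul, map_add, map_pow, map_ev2, map_ev1] at h1' h2' h3'
  have hcX : co Polynomial.X = PowerSeries.X := by simp [co]
  rw [hcX] at h2'
  change ev2 y t g = _ at h1'
  change ev2 y t (Polynomial.derivative g) * ev1 y h * _ = _ at h2'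
  change ∀ i, ev2 y t (a i) = ev1 y h * _ + _ at h3'
  set γ := ev2 y t (Polynomial.derivative g) with hγ
  set Hh := ev1 y h with hHh
  set δ := γ * Hh * PowerSeries.X with hδ
  have hα : co α = δ * v' := by rw [h2', mul_assoc, mul_comm (co v), hv', mul_one]
  have hα0 : co α ≠ 0 := by
    simpa [co] using hmon.ne_zero
  have hH0 : Hh ≠ 0 := by
    intro h0
    apply hα0
    rw [hα, hδ, h0]; ring
  -- Taylor expansion
  let G : Polynomial (PowerSeries R) := g.map (ev1 y)
  have hG : ∀ x, G.eval x = ev2 y x g := fun x => by simp [G, Polynomial.eval_map]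
  have hG' : ∀ x, (Polynomial.derivative G).eval x = ev2 y x (Polynomial.derivative g) := fun x => by
    simp [G, Polynomial.derivative_map, Polynomial.eval_map]
  obtain ⟨r, hr⟩ := Polynomial.binomExpansion (G.map Polynomial.C) (Polynomial.C t) (Polynomial.C δ * Polynomial.X)
  have hr' : ∀ z, G.eval (t + δ * z) = G.eval t + (Polynomial.derivative G).eval t * (δ * z) + r.eval z * (δ * z) ^ 2 := by
    intro z
    have key : ∀ (P : Polynomial (PowerSeries R)) (x : Polynomial (PowerSeries R)),
        ((P.map Polynomial.C).eval x).eval z = P.eval (x.eval z) := by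
      intro P x
      rw [← Polynomial.coe_evalRingHom z, Polynomial.eval_map, Polynomial.hom_eval₂]
      rw [show (Polynomial.evalRingHom z).comp Polynomial.C = RingHom.id _ by ext1 x; simp]
      rfl
    have := congrArg (Polynomial.eval z) hr
    simp only [Polynomial.derivative_map, Polynomial.eval_add, Polynomial.eval_mul, Polynomial.eval_pow,
      Polynomial.eval_C, Polynomial.eval_X, key] at this
    simpa using this
  obtain ⟨z, hz⟩ := fixpt (Ideal.span {(PowerSeries.X : PowerSeries R)}) PowerSeries.X (Ideal.mem_span_singleton_self _)
    (Polynomial.C (-Hh) * (Polynomial.C (v' ^ 2 * co q) + Polynomial.X ^ 2 * r))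
  simp only [Polynomial.eval_add, Polynomial.eval_mul, Polynomial.eval_pow, Polynomial.eval_C, Polynomial.eval_X] at hz
  set z' := -Hh * (v' ^ 2 * co q + z ^ 2 * r.eval z) with hz'
  let ts := t + δ * z
  have hroot : ev2 y ts g = 0 := by
    rw [← hG, hr', hG, hG', h1', ← hγ, hα]
    have : z + PowerSeries.X * Hh * (v' ^ 2 * co q + z ^ 2 * r.eval z) = 0 := by
      rw [show z + PowerSeries.X * Hh * (v' ^ 2 * co q + z ^ 2 * r.eval z) = z - PowerSeries.X * z' by rw [hz']; ring, ← hz, sub_self]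
    linear_combination (γ * δ) * this - (δ * v' ^ 2 * co q + δ * z ^ 2 * r.eval z) * hδ
  have hd : ∀ i, ∃ e, ev2 y ts (a i) = ev2 y t (a i) + δ * z * e := by
    intro i
    obtain ⟨e, he⟩ := Polynomial.sub_dvd_eval_sub ts t ((a i).map (ev1 y))
    refine ⟨e, ?_⟩
    rw [Polynomial.eval_map, Polynomial.eval_map] at he
    have : ts - t = δ * z := by simp [ts]
    rw [this] at he
    simp only [ev2, Polynomial.coe_eval₂RingHom]
    rw [← he]; ring
  choose e he using hd
  refine ⟨ev2 y ts, fun i => co (b i) + γ * PowerSeries.X * δ * v' ^ 2 * co (c i) + γ * PowerSeries.X * z * e i, hroot, ?_, ?_, ?_⟩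
  · rw [ev2_C]; exact hH0
  · intro i
    rw [ev2_C, he, h3', hα]
    linear_combination (- δ * v' ^ 2 * co (c i) - z * e i) * hδ
  · intro i
    refine ⟨γ * (γ * Hh) * v' ^ 2 * co (c i) + γ * z' * e i, ?_⟩
    have : (b i : PowerSeries R) = co (b i) := rfl
    rw [this]
    linear_combination (γ * PowerSeries.X * v' ^ 2 * co (c i)) * hδ + γ * PowerSeries.X * e i * hz
end Rob

namespace Rob

lemma ev2_mapPoly {s R R' : Type*} [CommRing R] [CommRing R'] (f : R →+* R') (Y : s → Polynomial R) (Θ : Polynomial R) (P) :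
    ev2 (fun i => (Y i).map f) (Θ.map f) P = (ev2 Y Θ P).map f := (map_ev2 (Polynomial.mapRingHom f) Y Θ P).symm

lemma ev1_mapPoly {s R R' : Type*} [CommRing R] [CommRing R'] (f : R →+* R') (Y : s → Polynomial R) (P) :
    ev1 (fun i => (Y i).map f) P = (ev1 Y P).map f := (map_ev1 (Polynomial.mapRingHom f) Y P).symm

lemma SD.map {s ι : Type*} {g : Polynomial (MvPolynomial s ℤ)} {h : MvPolynomial s ℤ} {a : ι → Polynomial (MvPolynomial s ℤ)}
    {R R' : Type*} [CommRing R] [CommRing R'] {Y : s → Polynomial R} {Θ α v q : Polynomial R} {b c : ι → Polynomial R} {vi : R}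
    (H : SD g h a Y Θ α v q b c vi) (f : R →+* R') :
    SD g h a (fun i => (Y i).map f) (Θ.map f) (α.map f) (v.map f) (q.map f) (fun i => (b i).map f) (fun i => (c i).map f) (f vi) := by
  obtain ⟨h0, h1, h2, h3, h4⟩ := H
  refine ⟨h0.map f, ?_, ?_, ?_, ?_⟩
  · rw [Polynomial.coeff_map, ← map_mul, h1, map_one]
  · rw [ev2_mapPoly, h2]; simp
  · rw [ev2_mapPoly, ev1_mapPoly, ← Polynomial.map_mul, ← Polynomial.map_X f, ← Polynomial.map_mul, h3]; simp
  · intro i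
    rw [ev2_mapPoly, ev1_mapPoly, h4]; simp

lemma SD.reflect {s ι : Type*} {g : Polynomial (MvPolynomial s ℤ)} {h : MvPolynomial s ℤ} {a : ι → Polynomial (MvPolynomial s ℤ)}
    {R R' : Type*} [CommRing R] [CommRing R'] {Y : s → Polynomial R} {Θ α v q : Polynomial R} {b c : ι → Polynomial R} {vi : R}
    (f : R →+* R') (hf : Function.Injective f)
    (H : SD g h a (fun i => (Y i).map f) (Θ.map f) (α.map f) (v.map f) (q.map f) (fun i => (b i).map f) (fun i => (c i).map f) (f vi)) :
    SD g h a Y Θ α v q b c vi := by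
  obtain ⟨h0, h1, h2, h3, h4⟩ := H
  have hf' := Polynomial.map_injective f hf
  refine ⟨(Function.Injective.monic_map_iff hf).2 h0, hf ?_, hf' ?_, hf' ?_, fun i => hf' ?_⟩
  · rw [Polynomial.coeff_map] at h1
    rw [map_mul, h1, map_one]
  · rw [← ev2_mapPoly, h2]; simp
  · rw [Polynomial.map_mul, Polynomial.map_mul, ← ev2_mapPoly, ← ev1_mapPoly, Polynomial.map_X, h3]; simp
  · rw [← ev2_mapPoly, h4, ev1_mapPoly]; simp

lemma dist_div {A : Type*} [CommRing A] {g : Polynomial A} {I : Ideal A} (H : g.IsDistinguishedAt I) [IsAdicComplete I A]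
    (f : PowerSeries A) : ∃ (r : Polynomial A), (g : PowerSeries A) ∣ (r : PowerSeries A) - f := by
  obtain ⟨z, hz⟩ := H.algEquivQuotient.surjective (Ideal.Quotient.mk _ f)
  obtain ⟨r, rfl⟩ := Ideal.Quotient.mk_surjective z
  refine ⟨r, ?_⟩
  rw [← Ideal.mem_span_singleton, ← Ideal.Quotient.mk_eq_mk_iff_sub_mem]
  exact hz

lemma dist_dvd {A : Type*} [CommRing A] {g : Polynomial A} {I : Ideal A} (H : g.IsDistinguishedAt I) [IsAdicComplete I A]
    (r : Polynomial A) (h : (g : PowerSeries A) ∣ (r : PowerSeries A)) : g ∣ r := by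
  have : H.algEquivQuotient (Ideal.Quotient.mk _ r) = H.algEquivQuotient 0 := by
    rw [map_zero]
    change Ideal.Quotient.mk _ (r : PowerSeries A) = 0
    rw [Ideal.Quotient.eq_zero_iff_mem, Ideal.mem_span_singleton]
    exact h
  have := H.algEquivQuotient.injective this
  rwa [Ideal.Quotient.eq_zero_iff_mem, Ideal.mem_span_singleton] at this

lemma ev_congr {s B : Type*} [CommRing B] (z : B) (y y' : s → B) (θ θ' : B) (hy : ∀ i, z ∣ y' i - y i) (hθ : z ∣ θ' - θ) (P) :
    z ∣ ev2 y' θ' P - ev2 y θ P := by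
  rw [← Ideal.mem_span_singleton, ← Ideal.Quotient.mk_eq_mk_iff_sub_mem, map_ev2, map_ev2]
  have h1 : (fun i => Ideal.Quotient.mk (Ideal.span {z}) (y' i)) = (fun i => Ideal.Quotient.mk (Ideal.span {z}) (y i)) := by
    funext i
    rw [Ideal.Quotient.mk_eq_mk_iff_sub_mem, Ideal.mem_span_singleton]; exact hy i
  have h2 : Ideal.Quotient.mk (Ideal.span {z}) θ' = Ideal.Quotient.mk (Ideal.span {z}) θ := by
    rw [Ideal.Quotient.mk_eq_mk_iff_sub_mem, Ideal.mem_span_singleton]; exact hθ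
  rw [h1, h2]

lemma SD_down {s ι : Type*} {g : Polynomial (MvPolynomial s ℤ)} {h : MvPolynomial s ℤ} {a : ι → Polynomial (MvPolynomial s ℤ)}
    {A : Type*} [CommRing A] [IsDomain A] [IsLocalRing A] [IsAdicComplete (IsLocalRing.maximalIdeal A) A]
    (y : s → PowerSeries A) (θ : PowerSeries A) (w : ι → PowerSeries A)
    (h1 : ev2 y θ g = 0) (h2 : ∀ i, ev1 y h * w i = ev2 y θ (a i))
    (h3 : (ev2 y θ (Polynomial.derivative g) * ev1 y h * PowerSeries.X).map (IsLocalRing.residue A) ≠ 0) :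
    ∃ (Y : s → Polynomial A) (Θ α v q : Polynomial A) (b c : ι → Polynomial A) (vi : A),
      SD g h a Y Θ α v q b c vi ∧ ∀ i (β : Polynomial A), (β : PowerSeries A) = w i → b i = β := by
  classical
  let co : Polynomial A →+* PowerSeries A := Polynomial.coeToPowerSeries.ringHom
  have hco : Function.Injective co := Polynomial.coe_injective A
  have hcX : co Polynomial.X = PowerSeries.X := by simp [co]
  obtain ⟨α, u, hα⟩ := PowerSeries.exists_isWeierstrassFactorization h3
  have hd := hα.isDistinguishedAt
  have hd2 : (α ^ 2).IsDistinguishedAt (IsLocalRing.maximalIdeal A) := by rw [pow_two]; exact hd.mul hd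
  have hu := hα.isUnit
  have he : ev2 y θ (Polynomial.derivative g) * ev1 y h * PowerSeries.X = co α * u := hα.eq_mul
  have hα0 : α.coeff 0 ∈ IsLocalRing.maximalIdeal A := by
    apply hd.mem
    rw [pos_iff_ne_zero]
    intro h0
    have : α = 1 := Polynomial.Monic.natDegree_eq_zero hd.monic |>.1 h0
    rw [this, map_one, one_mul] at he
    rw [← he, PowerSeries.isUnit_iff_constantCoeff] at hu
    simp at hu
  have hdv : ∀ f : PowerSeries A, ∃ r : Polynomial A, co α ^ 2 ∣ co r - f := by
    intro f
    obtain ⟨r, hr⟩ := dist_div hd2 f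
    refine ⟨r, ?_⟩
    rw [← map_pow]; exact hr
  choose Y hY using fun i => hdv (y i)
  obtain ⟨Θ, hΘ⟩ := hdv θ
  have hb : ∀ i, ∃ r : Polynomial A, co α ^ 2 ∣ co r - w i ∧ ∀ β : Polynomial A, (β : PowerSeries A) = w i → r = β := by
    intro i
    by_cases hi : ∃ β : Polynomial A, (β : PowerSeries A) = w i
    · obtain ⟨β, hβ⟩ := hi
      refine ⟨β, ?_, ?_⟩
      · rw [← hβ]; simp [co]
      · intro β' hβ'
        exact hco (hβ.trans hβ'.symm)
    · obtain ⟨r, hr⟩ := hdv (w i)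
      exact ⟨r, hr, fun β hβ => absurd ⟨β, hβ⟩ hi⟩
  choose b hb hb' using hb
  have hc := ev_congr _ _ _ _ _ hY hΘ
  have hc1 : ∀ P, co α ^ 2 ∣ ev1 (fun i => co (Y i)) P - ev1 y P := by
    intro P
    have := hc (Polynomial.C P)
    rwa [ev2_C, ev2_C] at this
  have hco2 : ∀ P, co (ev2 Y Θ P) = ev2 (fun i => co (Y i)) (co Θ) P := map_ev2 co Y Θ
  have hco1 : ∀ P, co (ev1 Y P) = ev1 (fun i => co (Y i)) P := map_ev1 co Y
  have hdvd2 : ∀ P, co α ^ 2 ∣ co P → α ^ 2 ∣ P := by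
    intro P hP
    apply dist_dvd hd2
    rw [← map_pow] at hP; exact hP
  have hdvd1 : ∀ P, co α ∣ co P → α ∣ P := fun P hP => dist_dvd hd P hP
  obtain ⟨q, hq⟩ : α ^ 2 ∣ ev2 Y Θ g := by
    apply hdvd2
    have := hc g
    rwa [h1, sub_zero, ← hco2] at this
  have hB : ∃ e, co (ev2 Y Θ (Polynomial.derivative g) * ev1 Y h * Polynomial.X) = co α * (u + co α * e) := by
    obtain ⟨e1, he1⟩ := hc (Polynomial.derivative g)
    obtain ⟨e2, he2⟩ := hc1 h
    rw [map_mul, map_mul, hcX, hco2, hco1]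
    refine ⟨(e1 * ev1 (fun i => co (Y i)) h + ev2 y θ (Polynomial.derivative g) * e2) * PowerSeries.X, ?_⟩
    linear_combination he + he1 * ev1 (fun i => co (Y i)) h * PowerSeries.X + he2 * ev2 y θ (Polynomial.derivative g) * PowerSeries.X
  obtain ⟨e, hB⟩ := hB
  obtain ⟨v, hv⟩ := hdvd1 _ ⟨_, hB⟩
  have hv1 : co v = u + co α * e := by
    rw [hv, map_mul] at hB
    refine mul_left_cancel₀ ?_ hB
    intro h0
    exact hd.monic.ne_zero (hco (by rw [h0, map_zero]))
  have hvu : IsUnit (v.coeff 0) := by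
    have h0 : v.coeff 0 = PowerSeries.constantCoeff u + α.coeff 0 * PowerSeries.constantCoeff e := by
      have := congrArg PowerSeries.constantCoeff hv1
      rw [map_add, map_mul] at this
      have hcc : ∀ P : Polynomial A, PowerSeries.constantCoeff (co P) = P.coeff 0 := by
        intro P
        rw [← PowerSeries.coeff_zero_eq_constantCoeff_apply]
        exact Polynomial.coeff_coe P 0
      rw [hcc, hcc] at this
      exact this
    rw [PowerSeries.isUnit_iff_constantCoeff] at hu
    by_contra hn
    have h4 : v.coeff 0 ∈ IsLocalRing.maximalIdeal A := hn
    rw [h0] at h4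
    have h5 : PowerSeries.constantCoeff u ∈ IsLocalRing.maximalIdeal A :=
      (Ideal.add_mem_iff_left _ (Ideal.mul_mem_right _ _ hα0)).1 h4
    exact h5 hu
  obtain ⟨vi, hvi⟩ := hvu.exists_right_inv
  have hci : ∀ i, ∃ c, ev2 Y Θ (a i) = ev1 Y h * b i + α ^ 2 * c := by
    intro i
    have : α ^ 2 ∣ ev2 Y Θ (a i) - ev1 Y h * b i := by
      apply hdvd2
      rw [map_sub, map_mul, hco2, hco1]
      obtain ⟨e1, he1⟩ := hc (a i)
      obtain ⟨e2, he2⟩ := hc1 h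
      obtain ⟨e3, he3⟩ := hb i
      refine ⟨e1 - e2 * co (b i) - ev1 y h * e3, ?_⟩
      linear_combination he1 - he2 * co (b i) - ev1 y h * he3 - h2 i
    obtain ⟨c, hc⟩ := this
    exact ⟨c, by rw [← hc]; ring⟩
  choose c hc using hci
  exact ⟨Y, Θ, α, v, q, b, c, vi, ⟨hd.monic, hvi, hq, hv, hc⟩, hb'⟩
end Rob

namespace Rob

lemma mem_span_X {K : Type*} [CommRing K] : ∀ (d : ℕ) (f : MvPowerSeries (Fin d) K), MvPowerSeries.constantCoeff f = 0 →
    f ∈ Ideal.span (Set.range (MvPowerSeries.X : Fin d → MvPowerSeries (Fin d) K)) := by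
  intro d
  induction d with
  | zero =>
    intro f hf
    have : f = 0 := by
      ext n
      rw [Subsingleton.elim n 0]
      simpa using hf
    rw [this]; exact zero_mem _
  | succ d ih =>
    intro f hf
    set e := MvPowerSeries.finSuccEquiv K d with he
    have h0 : PowerSeries.constantCoeff (e f) ∈ Ideal.span (Set.range (MvPowerSeries.X : Fin d → MvPowerSeries (Fin d) K)) := by
      apply ih
      rw [← PowerSeries.coeff_zero_eq_constantCoeff_apply, ← MvPowerSeries.coeff_zero_eq_constantCoeff_apply,
        MvPowerSeries.coeff_coeff_finSuccEquiv]
      simpa using hf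
    have h1 := PowerSeries.eq_X_mul_shift_add_const (e f)
    have h2 : f = MvPowerSeries.X 0 * e.symm (PowerSeries.mk fun p => PowerSeries.coeff (p + 1) (e f)) +
        e.symm (PowerSeries.C (PowerSeries.constantCoeff (e f))) := by
      apply e.injective
      rw [map_add, map_mul, he, MvPowerSeries.finSuccEquiv_X_zero, ← he, e.apply_symm_apply, e.apply_symm_apply]
      exact h1
    rw [h2]
    refine Ideal.add_mem _ (Ideal.mul_mem_right _ _ (Ideal.subset_span ⟨0, rfl⟩)) ?_
    have h3 := Ideal.mem_map_of_mem (e.symm.toRingEquiv.toRingHom.comp PowerSeries.C) h0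
    rw [Ideal.map_span, ← Set.range_comp] at h3
    refine Ideal.span_le.2 ?_ h3
    rintro _ ⟨j, rfl⟩
    apply Ideal.subset_span
    refine ⟨j.succ, ?_⟩
    apply e.injective
    rw [he, MvPowerSeries.finSuccEquiv_X_succ]
    exact (e.apply_symm_apply _).symm

lemma maxIdeal_eq {K : Type*} [Field K] (d : ℕ) : IsLocalRing.maximalIdeal (MvPowerSeries (Fin d) K) =
    Ideal.span (Set.range (MvPowerSeries.X : Fin d → MvPowerSeries (Fin d) K)) := by
  apply le_antisymm
  · intro f hf
    apply mem_span_X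
    by_contra h
    apply hf
    rw [MvPowerSeries.isUnit_iff_constantCoeff]
    exact isUnit_iff_ne_zero.2 h
  · rw [Ideal.span_le]
    rintro _ ⟨j, rfl⟩ hu
    rw [MvPowerSeries.isUnit_iff_constantCoeff] at hu
    simp at hu

lemma mvps_complete {K : Type*} [Field K] (d : ℕ) :
    IsAdicComplete (IsLocalRing.maximalIdeal (MvPowerSeries (Fin d) K)) (MvPowerSeries (Fin d) K) := by
  rw [maxIdeal_eq]; infer_instance

lemma homog_aeval {K : Type*} [Field K] {σ : Type*} [Fintype σ] (P : MvPolynomial σ K) (m : ℕ) (hP : ∀ e, P.coeff e ≠ 0 → e.degree = m)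
    {B : Type*} [CommRing B] [Algebra K B] (c : σ → K) (x : B) :
    MvPolynomial.aeval (fun i => algebraMap K B (c i) * x) P = algebraMap K B (MvPolynomial.eval c P) * x ^ m := by
  rw [MvPolynomial.aeval_def, MvPolynomial.eval₂_eq', MvPolynomial.eval_eq', map_sum, Finset.sum_mul]
  refine Finset.sum_congr rfl fun e he => ?_
  have h1 := hP e (MvPolynomial.mem_support_iff.1 he)
  have h2 : ∑ i, e i = m := by rw [← h1, Finsupp.degree_eq_sum]
  simp only [mul_pow, Finset.prod_mul_distrib, map_mul, map_prod, map_pow]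
  rw [Finset.prod_pow_eq_pow_sum, h2]
  ring

lemma coordChange {K : Type u} [Field K] [Infinite K] (d : ℕ) (Δ : MvPowerSeries (Fin (d + 1)) K) (hΔ : Δ ≠ 0) :
    ∃ (c : Fin d → K) (σ : MvPowerSeries (Fin (d + 1)) K →+* PowerSeries (MvPowerSeries (Fin d) K)),
      σ (MvPowerSeries.X 0) = PowerSeries.X ∧
      (∀ j, σ (MvPowerSeries.X (Fin.succ j)) = PowerSeries.C (MvPowerSeries.X j) + PowerSeries.C (MvPowerSeries.C (c j)) * PowerSeries.X) ∧
      (σ Δ).map (IsLocalRing.residue (MvPowerSeries (Fin d) K)) ≠ 0 := by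
  obtain ⟨m, hm⟩ : ∃ m : ℕ, Δ.order = m := ⟨_, ((MvPowerSeries.ne_zero_iff_order_finite).1 hΔ).symm⟩
  have hmm := MvPowerSeries.order_eq_nat.1 hm
  let P := MvPowerSeries.truncTotal (m + 1) Δ
  have hP : ∀ e, P.coeff e ≠ 0 → e.degree = m := by
    intro e he
    simp only [P, MvPowerSeries.coeff_truncTotal_eq_ite] at he
    split_ifs at he with h
    · by_contra hne
      exact he (hmm.2 e (by omega))
    · exact absurd rfl he
  have hP0 : P ≠ 0 := by
    obtain ⟨⟨e, he, he'⟩, _⟩ := hmm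
    intro h0
    have := congrArg (MvPolynomial.coeff e) h0
    simp only [P] at this
    rw [MvPowerSeries.coeff_truncTotal _ (by omega)] at this
    exact he (by simpa using this)
  have hR : ((m + 1 : ℕ) : ℕ∞) ≤ (Δ - (P : MvPowerSeries (Fin (d + 1)) K)).order := by
    apply MvPowerSeries.nat_le_order
    intro e he
    rw [map_sub, MvPolynomial.coeff_coe]
    simp only [P]
    rw [MvPowerSeries.coeff_truncTotal _ he, sub_self]
  obtain ⟨z, hz⟩ : ∃ z : Fin (d + 1) → K, MvPolynomial.eval z (MvPolynomial.X 0 * P) ≠ 0 := by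
    by_contra! hcon
    have : MvPolynomial.X 0 * P = 0 := MvPolynomial.funext (by simpa using hcon)
    rcases mul_eq_zero.1 this with h | h
    · exact MvPolynomial.X_ne_zero _ h
    · exact hP0 h
  rw [map_mul, MvPolynomial.eval_X] at hz
  have hz0 : z 0 ≠ 0 := left_ne_zero_of_mul hz
  let c' : Fin (d + 1) → K := fun i => z i * (z 0)⁻¹
  have hc'0 : c' 0 = 1 := mul_inv_cancel₀ hz0
  have hPc : MvPolynomial.eval c' P ≠ 0 := by
    have := homog_aeval P m hP (B := K) z (z 0)⁻¹
    simp only [Algebra.algebraMap_self, RingHom.id_apply, MvPolynomial.coe_aeval_eq_eval] at this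
    change MvPolynomial.eval c' P = _ at this
    rw [this]
    exact mul_ne_zero (right_ne_zero_of_mul hz) (pow_ne_zero _ (inv_ne_zero hz0))
  let a : Fin (d + 1) → MvPowerSeries (Fin (d + 1)) K :=
    Fin.cons (MvPowerSeries.X 0) (fun j => MvPowerSeries.X j.succ + MvPowerSeries.C (c' j.succ) * MvPowerSeries.X 0)
  have ha0 : ∀ i, MvPowerSeries.constantCoeff (a i) = 0 := by
    intro i
    refine Fin.cases ?_ ?_ i
    · simp [a]
    · intro j; simp [a]
  have ha : MvPowerSeries.HasSubst a := MvPowerSeries.hasSubst_of_constantCoeff_zero ha0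
  let e := MvPowerSeries.finSuccEquiv K d
  let σ : MvPowerSeries (Fin (d + 1)) K →+* PowerSeries (MvPowerSeries (Fin d) K) :=
    e.toRingEquiv.toRingHom.comp (MvPowerSeries.substAlgHom (R := K) ha).toRingHom
  have hσ : ∀ f, σ f = e (MvPowerSeries.substAlgHom (R := K) ha f) := fun f => rfl
  have hσ0 : σ (MvPowerSeries.X 0) = PowerSeries.X := by
    rw [hσ, MvPowerSeries.substAlgHom_X]
    simp [a, e]
  have hσs : ∀ j : Fin d, σ (MvPowerSeries.X (Fin.succ j)) = PowerSeries.C (MvPowerSeries.X j) + PowerSeries.C (MvPowerSeries.C (c' j.succ)) * PowerSeries.X := by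
    intro j
    rw [hσ, MvPowerSeries.substAlgHom_X]
    simp only [a, e, Fin.cons_succ, map_add, map_mul, MvPowerSeries.finSuccEquiv_X_succ, MvPowerSeries.finSuccEquiv_X_zero,
      MvPowerSeries.finSuccEquiv_C]
  refine ⟨fun j => c' j.succ, σ, hσ0, hσs, ?_⟩
  let τ : PowerSeries (MvPowerSeries (Fin d) K) →+* PowerSeries K := PowerSeries.map MvPowerSeries.constantCoeff
  have hcoeff : ∀ F, PowerSeries.coeff m (τ (e F)) = MvPowerSeries.coeff (Finsupp.cons m 0) F := by
    intro F
    simp only [τ, PowerSeries.coeff_map]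
    rw [← MvPowerSeries.coeff_zero_eq_constantCoeff_apply, MvPowerSeries.coeff_coeff_finSuccEquiv]
  have hdeg : (Finsupp.cons m (0 : Fin d →₀ ℕ)).degree = m := by
    rw [Finsupp.degree_eq_sum, Fin.sum_univ_succ]; simp
  have h1 : PowerSeries.coeff m (τ (σ (Δ - P))) = 0 := by
    rw [hσ, hcoeff]
    apply MvPowerSeries.coeff_of_lt_order
    rw [hdeg, MvPowerSeries.substAlgHom_apply]
    refine lt_of_lt_of_le ?_ (MvPowerSeries.le_order_subst ha _)
    have h2 : (1 : ℕ∞) ≤ ⨅ i, (a i).order := le_iInf fun i =>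
      MvPowerSeries.one_le_order_iff_constCoeff_eq_zero.2 (ha0 i)
    calc (m : ℕ∞) < ((m + 1 : ℕ) : ℕ∞) := by exact_mod_cast Nat.lt_succ_self m
      _ ≤ _ := hR
      _ = 1 * _ := (one_mul _).symm
      _ ≤ _ := mul_le_mul_left h2 _
  have h2 : τ (σ P) = PowerSeries.C (MvPolynomial.eval c' P) * PowerSeries.X ^ m := by
    rw [hσ, MvPowerSeries.substAlgHom_coe]
    let ρ : MvPowerSeries (Fin (d + 1)) K →ₐ[K] PowerSeries K :=
      { τ.comp e.toRingEquiv.toRingHom with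
        commutes' := by
          intro r
          change τ (e (algebraMap K _ r)) = _
          rw [MvPowerSeries.algebraMap_apply]
          simp [e, τ] }
    have := homog_aeval P m hP (B := PowerSeries K) c' PowerSeries.X
    change _ = PowerSeries.C (MvPolynomial.eval c' P) * PowerSeries.X ^ m at this
    rw [← this]
    change ρ _ = _
    rw [← AlgHom.comp_apply]
    congr 1
    apply MvPolynomial.algHom_ext
    intro i
    rw [AlgHom.comp_apply, MvPolynomial.aeval_X, MvPolynomial.aeval_X]
    change τ (e (a i)) = PowerSeries.C (c' i) * PowerSeries.X
    refine Fin.cases ?_ ?_ i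
    · rw [hc'0]; simp [a, e, τ]
    · intro j
      simp [a, e, τ, MvPowerSeries.finSuccEquiv_X_succ, MvPowerSeries.finSuccEquiv_X_zero, MvPowerSeries.finSuccEquiv_C]
  intro h0
  have h3 : PowerSeries.coeff m (τ (σ Δ)) ≠ 0 := by
    have : Δ = (Δ - P) + P := by ring
    rw [this, map_add, map_add, map_add, h1, h2, zero_add]
    rw [PowerSeries.coeff_C_mul, PowerSeries.coeff_X_pow_self, mul_one]
    exact hPc
  apply h3
  have h4 := congrArg (PowerSeries.coeff m) h0
  rw [PowerSeries.coeff_map, map_zero, IsLocalRing.residue_eq_zero_iff] at h4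
  simp only [τ, PowerSeries.coeff_map]
  by_contra h5
  apply h4
  rw [MvPowerSeries.isUnit_iff_constantCoeff]
  exact isUnit_iff_ne_zero.2 h5
end Rob

namespace Rob

lemma ideal_step {C : Type*} [CommRing C] {d : ℕ} (m : Ideal C) [m.IsMaximal] (x c : Fin d → C) (hx : Ideal.span (Set.range x) = m)
    (z : Fin (d + 1) → PowerSeries C) (h0 : ∃ r, z 0 = PowerSeries.X + PowerSeries.X ^ 2 * r)
    (hs : ∀ j : Fin d, ∃ r, z j.succ = PowerSeries.C (x j) + PowerSeries.C (c j) * PowerSeries.X + PowerSeries.X ^ 2 * r) :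
    (Ideal.span (Set.range z)).IsMaximal := by
  have hsurj : Function.Surjective (PowerSeries.constantCoeff (R := C)) := fun a => ⟨PowerSeries.C a, by simp⟩
  have : Ideal.span (Set.range z) = m.comap (PowerSeries.constantCoeff (R := C)) := by
    apply le_antisymm
    · rw [Ideal.span_le]
      rintro _ ⟨i, rfl⟩
      rw [SetLike.mem_coe, Ideal.mem_comap]
      refine Fin.cases ?_ ?_ i
      · obtain ⟨r, hr⟩ := h0
        rw [hr]; simp
      · intro j
        obtain ⟨r, hr⟩ := hs j
        rw [hr]
        simp only [map_add, map_mul, map_pow, PowerSeries.constantCoeff_X, PowerSeries.constantCoeff_C]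
        rw [← hx]
        simpa using Ideal.subset_span (Set.mem_range_self j)
    · have hX : PowerSeries.X ∈ Ideal.span (Set.range z) := by
        obtain ⟨r, hr⟩ := h0
        have hu : IsUnit (1 + PowerSeries.X * r) := by
          rw [PowerSeries.isUnit_iff_constantCoeff]; simp
        obtain ⟨v, hv⟩ := hu.exists_right_inv
        have : PowerSeries.X = z 0 * v := by
          rw [hr]; linear_combination (-PowerSeries.X) * hv
        rw [this]
        exact Ideal.mul_mem_right _ _ (Ideal.subset_span ⟨0, rfl⟩)
      have hj : m.map PowerSeries.C ≤ Ideal.span (Set.range z) := by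
        rw [← hx, Ideal.map_span, Ideal.span_le]
        rintro _ ⟨_, ⟨j, rfl⟩, rfl⟩
        obtain ⟨r, hr⟩ := hs j
        have : PowerSeries.C (x j) = z j.succ - PowerSeries.X * (PowerSeries.C (c j) + PowerSeries.X * r) := by
          rw [hr]; ring
        rw [SetLike.mem_coe, this]
        exact Ideal.sub_mem _ (Ideal.subset_span ⟨_, rfl⟩) (Ideal.mul_mem_right _ _ hX)
      intro f hf
      rw [PowerSeries.eq_X_mul_shift_add_const f]
      exact Ideal.add_mem _ (Ideal.mul_mem_right _ _ hX) (hj (Ideal.mem_map_of_mem _ hf))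
  rw [this]
  exact Ideal.comap_isMaximal_of_surjective _ hsurj

/-- conclusion of the Lefschetz type lemma -/
def LefC {d : ℕ} (W : Type u) [CommRing W] (ξ : Fin d → W) : Prop :=
  ∃ (p : ℕ) (_ : Fact p.Prime) (C : Type u) (_ : CommRing C) (_ : IsDomain C) (_ : IsNoetherianRing C) (_ : IsLocalRing C)
    (_ : CharP C p) (ψ : W →+* C), (d : WithBot ℕ∞) ≤ ringKrullDim C ∧ (Ideal.span (Set.range fun i => ψ (ξ i))).IsMaximal

lemma jacobson_int : IsJacobsonRing ℤ := by
  rw [isJacobsonRing_iff_prime_eq]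
  intro P hP
  by_cases h : P = ⊥
  · subst h
    rw [eq_bot_iff]
    intro x hx
    rw [Ideal.mem_jacobson_bot] at hx
    have := Int.isUnit_iff.1 (hx x)
    rcases this with h | h
    · have : x * x = 0 := by omega
      simpa using this
    · nlinarith
  · exact Ideal.jacobson_eq_self_of_isMaximal (H := hP.isMaximal h)

lemma lef_zero (W : Type u) [CommRing W] [Nontrivial W] [Algebra.FiniteType ℤ W] (ξ : Fin 0 → W) : LefC W ξ := by
  obtain ⟨M, hM⟩ := Ideal.exists_maximal W
  let F := W ⧸ M
  let _ : Field F := Ideal.Quotient.field M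
  have hF : Algebra.FiniteType ℤ F := Algebra.FiniteType.of_surjective (Ideal.Quotient.mkₐ ℤ M) (Ideal.Quotient.mkₐ_surjective _ _)
  have hJ := jacobson_int
  have hfin : Module.Finite ℤ F := finite_of_finite_type_of_isJacobsonRing ℤ F
  have hp : ringChar F ≠ 0 := by
    intro h0
    have : CharP F 0 := by rw [← h0]; infer_instance
    have : CharZero F := CharP.charP_to_charZero F
    have h1 : Algebra.IsIntegral ℤ F := inferInstance
    have h2 := isField_of_isIntegral_of_isField (R := ℤ) (S := F) (algebraMap ℤ F).injective_int (Field.toIsField F)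
    exact Int.not_isField h2
  have hpp : Fact (ringChar F).Prime := ⟨(CharP.char_is_prime_or_zero F (ringChar F)).resolve_right hp⟩
  refine ⟨ringChar F, hpp, F, inferInstance, inferInstance, inferInstance, inferInstance, inferInstance, Ideal.Quotient.mk M, ?_, ?_⟩
  · simp
  · rw [Set.range_eq_empty, Ideal.span_empty]
    exact Ideal.bot_isMaximal

lemma polyLift {R : Type*} [CommRing R] (W : Subring R) (P : Polynomial R) (h : ∀ n, P.coeff n ∈ W) :
    ∃ P' : Polynomial W, P'.map W.subtype = P := by
  have : P ∈ Polynomial.lifts W.subtype := by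
    rw [Polynomial.lifts_iff_coeff_lifts]
    intro n
    exact ⟨⟨_, h n⟩, rfl⟩
  exact (Polynomial.mem_lifts _).1 this

lemma adjoin_top {W : Type*} [CommRing W] {S : Set W} (h : Subring.closure S = ⊤) : Algebra.adjoin ℤ S = ⊤ := by
  rw [Algebra.adjoin_int, h]
  rfl

lemma closure_top {R : Type*} [CommRing R] (S : Set R) :
    Subring.closure (Set.range fun z : S => (⟨z.1, Subring.subset_closure z.2⟩ : Subring.closure S)) = ⊤ := by
  rw [eq_top_iff]
  rintro ⟨x, hx⟩ -
  induction hx using Subring.closure_induction with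
  | mem x h => exact Subring.subset_closure ⟨⟨x, h⟩, rfl⟩
  | zero => exact zero_mem _
  | one => exact one_mem _
  | add x y hx hy h1 h2 => exact add_mem h1 h2
  | neg x hx h1 => exact neg_mem h1
  | mul x y hx hy h1 h2 => exact mul_mem h1 h2

lemma lef (K : Type u) [Field K] [CharZero K] : ∀ (d : ℕ) (W : Type u) [CommRing W] (S : Set W) (_ : S.Finite) (_ : Subring.closure S = ⊤)
    (vl : W →+* MvPowerSeries (Fin d) K) (_ : Function.Injective vl) (ξ : Fin d → W) (_ : ∀ i, vl (ξ i) = MvPowerSeries.X i),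
    LefC W ξ := by
  intro d
  induction d with
  | zero =>
    intro W _ S hS hgen vl hvl ξ hξ
    have : Nontrivial W := vl.domain_nontrivial
    have : Algebra.FiniteType ℤ W := ⟨⟨hS.toFinset, by rw [hS.coe_toFinset]; exact adjoin_top hgen⟩⟩
    exact lef_zero _ _
  | succ d ih =>
    intro W _ S hS hgen vl hvl ξ hξ
    have hdA : IsDomain (MvPowerSeries (Fin (d + 1)) K) := NoZeroDivisors.to_isDomain _
    have hdA' : IsDomain (MvPowerSeries (Fin d) K) := NoZeroDivisors.to_isDomain _
    have : Infinite K := CharZero.infinite K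
    have : Finite S := hS.to_subtype
    have hczA : CharZero (MvPowerSeries (Fin (d + 1)) K) :=
      charZero_of_injective_ringHom (f := MvPowerSeries.C) MvPowerSeries.C_injective
    have hcz : CharZero W := ⟨fun m n h => by
      have := congrArg vl h
      simpa using this⟩
    have hdom : IsDomain W := hvl.isDomain vl
    let w : S ⊕ Fin (d + 1) → W := Sum.elim (fun z => z.1) ξ
    have hw : Algebra.adjoin ℤ (Set.range w) = ⊤ := by
      rw [eq_top_iff, ← adjoin_top hgen]
      apply Algebra.adjoin_mono
      intro z hz
      exact ⟨Sum.inl ⟨z, hz⟩, rfl⟩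
    obtain ⟨s, hs, y, θ, g, h, a, e1, e2, e3, e4, lift⟩ := lemS W w hw
    let Δ : MvPowerSeries (Fin (d + 1)) K := vl (ev2 y θ (Polynomial.derivative g) * ev1 y h * ξ 0)
    have hΔ : Δ ≠ 0 := by
      rw [Ne, map_eq_zero_iff vl hvl]
      refine mul_ne_zero (mul_ne_zero e2 e3) ?_
      intro h0
      have := congrArg vl h0
      rw [hξ, map_zero] at this
      have h1 := MvPowerSeries.coeff_index_single_self_X (R := K) (0 : Fin (d + 1))
      rw [this, map_zero] at h1
      exact zero_ne_one h1
    obtain ⟨c, σ, hσ0, hσs, hσΔ⟩ := coordChange d Δ hΔ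
    have hcomp := mvps_complete (K := K) d
    let ρ : W →+* PowerSeries (MvPowerSeries (Fin d) K) := σ.comp vl
    have hρ0 : ρ (ξ 0) = PowerSeries.X := by
      rw [← hσ0, ← hξ]; rfl
    obtain ⟨Y, Θ, α, v, q, b, cc, vi, hSD, hb⟩ := SD_down (g := g) (h := h) (a := a) (fun i => ρ (y i)) (ρ θ) (fun i => ρ (w i))
      (by rw [← map_ev2]; exact (congrArg ρ e1).trans (map_zero _))
      (by
        intro i
        rw [← map_ev2, ← map_ev1, ← map_mul]
        exact congrArg ρ (e4 i))
      (by
        rw [← map_ev2, ← map_ev1, ← hρ0, ← map_mul, ← map_mul]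
        exact hσΔ)
    let PP : Set (Polynomial (MvPowerSeries (Fin d) K)) := Set.range Y ∪ {Θ, α, v, q, Polynomial.C vi} ∪ Set.range b ∪ Set.range cc ∪
      Set.range (fun j : Fin d => Polynomial.C (MvPowerSeries.X j)) ∪ Set.range (fun j : Fin d => Polynomial.C (MvPowerSeries.C (c j)))
    have hPP : PP.Finite := by
      refine ((((((Set.finite_range _).union ?_).union (Set.finite_range _)).union (Set.finite_range _)).union (Set.finite_range _)).union (Set.finite_range _))
      exact Set.toFinite _
    let S' : Set (MvPowerSeries (Fin d) K) := ⋃ P ∈ PP, (P.coeffs : Set (MvPowerSeries (Fin d) K))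
    have hS' : S'.Finite := hPP.biUnion fun P _ => P.coeffs.finite_toSet
    have : Finite S' := hS'.to_subtype
    let W' := Subring.closure S'
    have hco : ∀ P ∈ PP, ∀ n, P.coeff n ∈ W' := by
      intro P hP n
      by_cases h0 : P.coeff n = 0
      · rw [h0]; exact zero_mem _
      · apply Subring.subset_closure
        exact Set.mem_biUnion hP (Polynomial.coeff_mem_coeffs h0)
    have hlift : ∀ P ∈ PP, ∃ P' : Polynomial W', P'.map W'.subtype = P := fun P hP => polyLift W' P (hco P hP)
    have hX' : ∀ j, MvPowerSeries.X j ∈ W' := by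
      intro j
      have := hco (Polynomial.C (MvPowerSeries.X j)) (by simp [PP]) 0
      simpa using this
    have hc' : ∀ j, MvPowerSeries.C (c j) ∈ W' := by
      intro j
      have := hco (Polynomial.C (MvPowerSeries.C (c j))) (by simp [PP]) 0
      simpa using this
    have hvi' : vi ∈ W' := by
      have := hco (Polynomial.C vi) (by simp [PP]) 0
      simpa using this
    choose Y' hY' using fun i => hlift (Y i) (by simp [PP])
    obtain ⟨Θ', hΘ'⟩ := hlift Θ (by simp [PP])
    obtain ⟨α', hα'⟩ := hlift α (by simp [PP])
    obtain ⟨v', hv'⟩ := hlift v (by simp [PP])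
    obtain ⟨q', hq'⟩ := hlift q (by simp [PP])
    choose b' hb' using fun i => hlift (b i) (by simp [PP])
    choose cc' hcc' using fun i => hlift (cc i) (by simp [PP])
    have hSD' : SD g h a Y' Θ' α' v' q' b' cc' ⟨vi, hvi'⟩ := by
      apply SD.reflect W'.subtype Subtype.val_injective
      simp only [hY', hΘ', hα', hv', hq', hb', hcc']
      exact hSD
    have hb0 : b' (Sum.inr 0) = Polynomial.X := by
      apply Polynomial.map_injective W'.subtype Subtype.val_injective
      rw [hb', Polynomial.map_X]
      apply hb
      rw [Polynomial.coe_X]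
      exact hρ0.symm
    have hbs : ∀ j : Fin d, b' (Sum.inr j.succ) = Polynomial.C ⟨MvPowerSeries.X j, hX' j⟩ +
        Polynomial.C ⟨MvPowerSeries.C (c j), hc' j⟩ * Polynomial.X := by
      intro j
      apply Polynomial.map_injective W'.subtype Subtype.val_injective
      rw [hb', Polynomial.map_add, Polynomial.map_mul, Polynomial.map_X, Polynomial.map_C, Polynomial.map_C]
      apply hb
      rw [Polynomial.coe_add, Polynomial.coe_mul, Polynomial.coe_X, Polynomial.coe_C, Polynomial.coe_C]
      change _ = σ (vl (ξ j.succ))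
      rw [hξ]; exact (hσs j).symm
    obtain ⟨p, hp, C, i1, i2, i3, i4, i5, ψ', hdim, hmax⟩ := ih W' _ (Set.finite_range fun z : S' => (⟨z.1, Subring.subset_closure z.2⟩ : W'))
      (closure_top S') W'.subtype Subtype.val_injective (fun j => ⟨MvPowerSeries.X j, hX' j⟩) (fun j => rfl)
    obtain ⟨η, bs, hη1, hη2, hη3, hη4⟩ := SD_up (hSD'.map ψ')
    obtain ⟨ψ, hψ⟩ := lift η hη1 hη2 bs hη3
    refine ⟨p, hp, PowerSeries C, inferInstance, inferInstance, inferInstance, inferInstance, ?_, ψ, ?_, ?_⟩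
    · exact charP_of_injective_ringHom (f := PowerSeries.C) PowerSeries.C_injective p
    · refine le_trans ?_ ringKrullDim_succ_le_ringKrullDim_powerseries
      push_cast
      gcongr
    · refine ideal_step (Ideal.span (Set.range fun i => ψ' ⟨MvPowerSeries.X i, hX' i⟩)) _ (fun j => ψ' ⟨MvPowerSeries.C (c j), hc' j⟩) rfl _ ?_ ?_
      · obtain ⟨r, hr⟩ := hη4 (Sum.inr 0)
        refine ⟨r, ?_⟩
        have h5 := hψ (Sum.inr 0)
        rw [hr, hb0, Polynomial.map_X, Polynomial.coe_X] at h5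
        exact h5
      · intro j
        obtain ⟨r, hr⟩ := hη4 (Sum.inr j.succ)
        refine ⟨r, ?_⟩
        have h5 := hψ (Sum.inr j.succ)
        rw [hr, hbs, Polynomial.map_add, Polynomial.map_mul, Polynomial.map_X, Polynomial.map_C, Polynomial.map_C,
          Polynomial.coe_add, Polynomial.coe_mul, Polynomial.coe_X, Polynomial.coe_C, Polynomial.coe_C] at h5
        exact h5
end Rob

namespace Rob

lemma bc_inj {R S C : Type*} [CommRing R] [CommRing S] [CommRing C] [Algebra R S] [Algebra R C] [IsDomain C]
    [Algebra.IsIntegral R S] (hinj : Function.Injective (algebraMap R S)) :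
    Function.Injective (algebraMap C (C ⊗[R] S)) := by
  let P : Ideal R := RingHom.ker (algebraMap R C)
  have hP : P.IsPrime := RingHom.ker_isPrime _
  obtain ⟨⟨Q, hQ⟩, hQP⟩ := RingHom.IsIntegral.comap_surjective (algebraMap_isIntegral_iff.2 ‹_›) hinj ⟨P, hP⟩
  have hQP' : P = Q.comap (algebraMap R S) := (congrArg PrimeSpectrum.asIdeal hQP).symm
  let κ := FractionRing C
  let k := P.ResidueField
  let L := Q.ResidueField
  let f1 : k →+* κ := Ideal.ResidueField.lift P (algebraMap R κ) (by
      intro x hx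
      rw [RingHom.mem_ker, IsScalarTower.algebraMap_apply R C κ, (RingHom.mem_ker).1 hx, map_zero])
    (by
      intro x hx
      rw [Submonoid.mem_comap, IsUnit.mem_submonoid_iff]
      apply IsUnit.mk0
      rw [IsScalarTower.algebraMap_apply R C κ]
      intro h0
      apply hx
      exact (map_eq_zero_iff _ (IsFractionRing.injective C κ)).1 h0)
  let f2 : k →+* L := Ideal.ResidueField.map P Q (algebraMap R S) hQP'
  let _ : Algebra k κ := f1.toAlgebra
  let _ : Algebra k L := f2.toAlgebra
  let Z := κ ⊗[k] L
  let g1 : C →+* Z := (algebraMap κ Z).comp (algebraMap C κ)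
  have hg1 : Function.Injective g1 := (algebraMap κ Z).injective.comp (IsFractionRing.injective C κ)
  let g2 : S →+* Z := (Algebra.TensorProduct.includeRight (R := k) (A := κ) (B := L)).toRingHom.comp (algebraMap S L)
  have hcomp : ∀ r, g1 (algebraMap R C r) = g2 (algebraMap R S r) := by
    intro r
    have e1 : algebraMap C κ (algebraMap R C r) = algebraMap k κ (algebraMap R k r) := by
      change _ = f1 _
      simp only [f1]
      rw [Ideal.ResidueField.lift_algebraMap, ← IsScalarTower.algebraMap_apply]
    have e2 : algebraMap S L (algebraMap R S r) = algebraMap k L (algebraMap R k r) := by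
      change _ = f2 _
      simp only [f2]
      rw [Ideal.ResidueField.map_algebraMap]
    change algebraMap κ Z (algebraMap C κ (algebraMap R C r)) = Algebra.TensorProduct.includeRight (algebraMap S L (algebraMap R S r))
    rw [e1, e2, AlgHom.commutes]
    rfl
  let _ : Algebra R Z := (g1.comp (algebraMap R C)).toAlgebra
  let G1 : C →ₐ[R] Z := { g1 with commutes' := fun r => rfl }
  let G2 : S →ₐ[R] Z := { g2 with commutes' := fun r => (hcomp r).symm }
  let F : C ⊗[R] S →ₐ[R] Z := Algebra.TensorProduct.productMap G1 G2
  have : ∀ c, F (algebraMap C _ c) = g1 c := by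
    intro c
    change F (c ⊗ₜ 1) = _
    rw [Algebra.TensorProduct.productMap_apply_tmul, map_one, mul_one]
    rfl
  intro a b hab
  apply hg1
  rw [← this, ← this, hab]

theorem char0 {K : Type u} [Field K] [CharZero K] {d : ℕ} {T : Type u} [CommRing T] [Algebra (MvPowerSeries (Fin d) K) T]
    [Module.Finite (MvPowerSeries (Fin d) K) T] (hinj : Function.Injective (algebraMap (MvPowerSeries (Fin d) K) T))
    {t h : ℕ} (H : QLD (fun i => algebraMap (MvPowerSeries (Fin d) K) T (MvPowerSeries.X i)) t h) : t ^ d ≤ h := by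
  obtain ⟨m, c, e, u, v, h1, h2, h3⟩ := H
  let A := MvPowerSeries (Fin d) K
  let E : Set T := Set.range m ∪ Set.range (fun z : Fin h × Fin d × Fin h => c z.1 z.2.1 z.2.2) ∪
    Set.range (fun z : Fin h × Fin d × Fin d => e z.1 z.2.1 z.2.2) ∪ Set.range u ∪ Set.range v
  have hE : E.Finite := ((((Set.finite_range _).union (Set.finite_range _)).union (Set.finite_range _)).union (Set.finite_range _)).union (Set.finite_range _)
  have hintg : ∀ y : T, ∃ P : Polynomial A, P.Monic ∧ Polynomial.eval₂ (algebraMap A T) y P = 0 := fun y =>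
    (inferInstance : Algebra.IsIntegral A T).isIntegral y
  choose P hPm hP0 using hintg
  let S : Set A := (⋃ y ∈ E, ((P y).coeffs : Set A)) ∪ Set.range (fun i : Fin d => (MvPowerSeries.X i : A))
  have hS : S.Finite := (hE.biUnion fun y _ => (P y).coeffs.finite_toSet).union (Set.finite_range _)
  have : Finite S := hS.to_subtype
  let W : Subring A := Subring.closure S
  have hX : ∀ i, (MvPowerSeries.X i : A) ∈ W := fun i => Subring.subset_closure (Or.inr ⟨i, rfl⟩)
  obtain ⟨p, hp, C, i1, i2, i3, i4, i5, ψ, hdim, hmax⟩ := lef K d W _ (Set.finite_range fun z : S => (⟨z.1, Subring.subset_closure z.2⟩ : W))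
      (closure_top S) W.subtype Subtype.val_injective (fun j => ⟨MvPowerSeries.X j, hX j⟩) (fun j => rfl)
  have hEint : ∀ y ∈ E, IsIntegral W y := by
    intro y hy
    obtain ⟨P', hP'⟩ := polyLift W (P y) (by
      intro n
      by_cases h0 : (P y).coeff n = 0
      · rw [h0]; exact zero_mem _
      · apply Subring.subset_closure
        exact Or.inl (Set.mem_biUnion hy (Polynomial.coeff_mem_coeffs h0)))
    refine ⟨P', ?_, ?_⟩
    · apply Polynomial.monic_of_injective (f := W.subtype) Subtype.val_injective
      rw [hP']; exact hPm y
    · have := hP0 y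
      rw [← hP', Polynomial.eval₂_map] at this
      exact this
  let V := Algebra.adjoin W E
  have hVfin : Module.Finite W V := Algebra.finite_adjoin_of_finite_of_isIntegral hE hEint
  have hWV : Function.Injective (algebraMap W V) := by
    intro a b hab
    have : algebraMap A T a = algebraMap A T b := congrArg Subtype.val hab
    exact Subtype.val_injective (hinj this)
  have hEV : ∀ y ∈ E, y ∈ V := fun y hy => Algebra.subset_adjoin hy
  have HV : QLD (fun i => algebraMap W V ⟨MvPowerSeries.X i, hX i⟩) t h := by
    refine ⟨fun i => ⟨m i, hEV _ (by simp [E])⟩, fun i j l => ⟨c i j l, hEV _ (by simp [E])⟩, fun i j l => ⟨e i j l, hEV _ (by simp [E])⟩,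
      fun i => ⟨u i, hEV _ (by simp [E])⟩, fun i => ⟨v i, hEV _ (by simp [E])⟩, ?_, ?_, ?_⟩
    · intro i j l hl
      exact Subtype.ext (h1 i j l hl)
    · intro i j
      apply Subtype.ext
      push_cast
      exact h2 i j
    · apply Subtype.ext
      push_cast
      exact h3
  let _ : Algebra W C := ψ.toAlgebra
  have hi := bc_inj (C := C) hWV
  have hcp : CharP (C ⊗[W] V) p := charP_of_injective_ringHom hi p
  refine charp (D := C) (T := C ⊗[W] V) hi p hdim (fun i => ψ ⟨MvPowerSeries.X i, hX i⟩) ?_ (t := t) (h := h) ?_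
  · rw [hmax.isPrime.radical]; exact hmax
  · have := HV.map (Algebra.TensorProduct.includeRight (R := W) (A := C) (B := V)).toRingHom
    convert this using 2 with i
    exact (AlgHom.commutes (Algebra.TensorProduct.includeRight (R := W) (A := C) (B := V)) _).symm
end Rob

namespace Rob

lemma precomplete_pi {A : Type*} [CommRing A] (I : Ideal A) [IsPrecomplete I A] (n : ℕ) : IsPrecomplete I (Fin n → A) := by
  have key : ∀ (J : Ideal A) (v : Fin n → A), v ∈ (J • ⊤ : Submodule A (Fin n → A)) ↔ ∀ i, v i ∈ (J • ⊤ : Submodule A A) := by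
    intro J v
    constructor
    · intro hv i
      have : (J • ⊤ : Submodule A (Fin n → A)) ≤ (J • ⊤ : Submodule A A).comap (LinearMap.proj i) := by
        rw [Submodule.smul_le]
        intro r hr x _
        exact Submodule.smul_mem_smul hr trivial
      exact this hv
    · intro hv
      rw [pi_eq_sum_univ v]
      refine Submodule.sum_mem _ fun i _ => Submodule.smul_mem_smul ?_ trivial
      simpa using hv i
  constructor
  intro f hf
  have : ∀ i : Fin n, ∃ L : A, ∀ m, f m i ≡ L [SMOD (I ^ m • ⊤ : Submodule A A)] := by
    intro i
    refine IsPrecomplete.prec ‹_› ?_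
    intro a b hab
    have := hf hab
    rw [SModEq.sub_mem] at this ⊢
    exact (key _ _).1 this i
  choose L hL using this
  refine ⟨L, fun m => ?_⟩
  rw [SModEq.sub_mem, key]
  intro i
  have := hL i m
  rwa [SModEq.sub_mem] at this

/-- a finiteness criterion over complete rings -/
lemma finite_of_complete {A D : Type*} [CommRing A] [CommRing D] [Algebra A D] (I : Ideal A) [IsPrecomplete I A]
    [IsHausdorff (I.map (algebraMap A D)) D] (F : Submodule A D) (hF : F.FG)
    (h : ∀ z, ∃ f ∈ F, z - f ∈ I.map (algebraMap A D)) : Module.Finite A D := by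
  have hFf : Module.Finite A F := Module.Finite.iff_fg.2 hF
  obtain ⟨n, g, hg⟩ := Module.Finite.exists_fin' A F
  have := precomplete_pi I n
  have hH : IsHausdorff I D := IsHausdorff.map_algebraMap_iff.mp ‹_›
  have : Function.Surjective (F.subtype ∘ₗ g) := by
    apply surjective_of_mkQ_comp_surjective (I := I)
    intro z
    obtain ⟨z, rfl⟩ := Submodule.mkQ_surjective _ z
    obtain ⟨f, hf, hz⟩ := h z
    obtain ⟨v, hv⟩ := hg ⟨f, hf⟩
    refine ⟨v, ?_⟩
    symm
    change Submodule.Quotient.mk z = Submodule.Quotient.mk (g v).1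
    rw [Submodule.Quotient.eq, hv, Ideal.smul_top_eq_map]
    exact hz
  exact Module.Finite.of_surjective _ this

lemma span_approx {K D : Type*} [CommRing K] [CommRing D] [Algebra K D] (m : Ideal D) (hm : m.FG)
    (h : ∀ z : D, ∃ a : K, z - algebraMap K D a ∈ m) (n : ℕ) :
    ∃ F : Submodule K D, F.FG ∧ ∀ z, ∃ f ∈ F, z - f ∈ m ^ n := by
  obtain ⟨G, hG⟩ := hm
  induction n with
  | zero => exact ⟨⊥, Submodule.fg_bot, fun z => ⟨0, zero_mem _, by simp⟩⟩
  | succ n ih =>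
    obtain ⟨F, hF, hz⟩ := ih
    refine ⟨1 ⊔ F * Submodule.span K (G : Set D), ?_, ?_⟩
    · refine Submodule.FG.sup ?_ (hF.mul ⟨G, rfl⟩)
      rw [Submodule.one_eq_span]; exact Submodule.fg_span_singleton _
    · intro z
      obtain ⟨a, ha⟩ := h z
      rw [← hG] at ha
      obtain ⟨b, hb, hbz⟩ := (Submodule.mem_span_finset).1 ha
      choose f hf hfm using hz
      refine ⟨algebraMap K D a + ∑ g ∈ G, f (b g) * g, ?_, ?_⟩
      · refine Submodule.add_mem _ (Submodule.mem_sup_left (Submodule.algebraMap_mem a)) (Submodule.mem_sup_right ?_)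
        refine Submodule.sum_mem _ fun g hg => Submodule.mul_mem_mul (hf _) (Submodule.subset_span hg)
      · rw [← sub_sub, ← hbz, ← Finset.sum_sub_distrib]
        refine Ideal.sum_mem _ fun g hg => ?_
        rw [smul_eq_mul, ← sub_mul, pow_succ]
        refine Ideal.mul_mem_mul (hfm _) ?_
        rw [← hG]; exact Submodule.subset_span hg

lemma ps_map {K D : Type*} [CommRing K] [CommRing D] (s : K →+* D) (m : Ideal D) [IsAdicComplete m D] {d : ℕ} (x : Fin d → D)
    (hx : ∀ i, x i ∈ m) : ∃ φ : MvPowerSeries (Fin d) K →+* D, (∀ i, φ (MvPowerSeries.X i) = x i) ∧ ∀ a, φ (MvPowerSeries.C a) = s a := by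
  let I := MvPolynomial.idealOfVars (Fin d) K
  let E : MvPolynomial (Fin d) K →+* D := MvPolynomial.eval₂Hom s x
  have hE : I ≤ m.comap E := by
    refine Ideal.span_le.2 ?_
    rintro _ ⟨i, rfl⟩
    simp [E, hx]
  have hEn : ∀ n, I ^ n ≤ (m ^ n).comap E := fun n => (Ideal.pow_right_mono hE n).trans (Ideal.le_comap_pow _ _)
  let f : (n : ℕ) → MvPowerSeries (Fin d) K →+* D ⧸ m ^ n := fun n =>
    ((Ideal.quotientMap (m ^ n) E (hEn n)).comp (AdicCompletion.evalₐ I n : AdicCompletion I (MvPolynomial (Fin d) K) →+* _)).comp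
      (MvPowerSeries.toAdicCompletionAlgEquiv (Fin d) K : MvPowerSeries (Fin d) K →+* _)
  have hf : ∀ {a b : ℕ} (hle : a ≤ b), (Ideal.Quotient.factorPow m hle).comp (f b) = f a := by
    intro a b hle
    ext z
    obtain ⟨y, hy⟩ := AdicCompletion.mk_surjective I _ (MvPowerSeries.toAdicCompletionAlgEquiv (Fin d) K z)
    simp only [f, RingHom.comp_apply, RingHom.coe_coe]
    rw [← hy, AdicCompletion.evalₐ_mk, AdicCompletion.evalₐ_mk, Ideal.quotientMap_mk, Ideal.quotientMap_mk]
    change Ideal.Quotient.mk (m ^ a) (E _) = _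
    rw [Ideal.Quotient.mk_eq_mk_iff_sub_mem, ← map_sub]
    apply hEn
    have := y.2 hle
    rw [SModEq.sub_mem] at this
    rw [← neg_mem_iff, neg_sub]
    simpa using this
  have hpol : ∀ q : MvPolynomial (Fin d) K, IsAdicComplete.liftRingHom m f hf q = E q := by
    intro q
    apply (IsHausdorff.eq_iff_smodEq (I := m)).2
    intro n
    rw [SModEq.sub_mem]
    have h1 := IsAdicComplete.mk_liftRingHom m f hf n q
    have h2 : f n q = Ideal.Quotient.mk _ (E q) := by
      simp only [f, RingHom.comp_apply, RingHom.coe_coe]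
      rw [MvPowerSeries.toAdicCompletionAlgEquiv_apply, MvPowerSeries.toAdicCompletion_coe, AdicCompletion.evalₐ_of, Ideal.quotientMap_mk]
    rw [h2, Ideal.Quotient.mk_eq_mk_iff_sub_mem] at h1
    simpa using h1
  refine ⟨IsAdicComplete.liftRingHom m f hf, ?_, ?_⟩
  · intro i
    rw [← MvPolynomial.coe_X, hpol]; simp [E]
  · intro a
    rw [← MvPolynomial.coe_C, hpol]; simp [E]

lemma dim_le_of_integral {A D : Type*} [CommRing A] [CommRing D] [Algebra A D] [Algebra.IsIntegral A D] : ringKrullDim D ≤ ringKrullDim A := by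
  refine Order.krullDim_le_of_strictMono (PrimeSpectrum.comap (algebraMap A D)) ?_
  intro P Q hPQ
  exact Ideal.IsIntegral.comap_lt_comap (R := A) (I := P.asIdeal) (J := Q.asIdeal) hPQ

lemma dim_mvps (K : Type*) [Field K] (d : ℕ) : ringKrullDim (MvPowerSeries (Fin d) K) ≤ d := by
  rw [← IsLocalRing.maximalIdeal_height_eq_ringKrullDim]
  have h1 := Ideal.height_le_card_of_mem_minimalPrimes_span (p := IsLocalRing.maximalIdeal (MvPowerSeries (Fin d) K))
    (s := Set.range (fun i : Fin d => (MvPowerSeries.X i : MvPowerSeries (Fin d) K))) (Set.finite_range _) (by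
      have := maxIdeal_eq (K := K) d
      rw [← this, Ideal.minimalPrimes_eq_subsingleton_self]
      rfl)
  have h2 : (Set.range (fun i : Fin d => (MvPowerSeries.X i : MvPowerSeries (Fin d) K))).ncard ≤ d := by
    have := Set.ncard_image_le (f := (fun i : Fin d => (MvPowerSeries.X i : MvPowerSeries (Fin d) K))) (s := Set.univ) Set.finite_univ
    rw [Set.image_univ, Set.ncard_univ] at this
    simpa using this
  exact_mod_cast h1.trans (by exact_mod_cast h2)

theorem cohen {D : Type u} [CommRing D] [IsDomain D] [IsNoetherianRing D] [IsLocalRing D] [IsAdicComplete (IsLocalRing.maximalIdeal D) D]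
    [Algebra ℚ D] {d : ℕ} (hd : ringKrullDim D = d) (x : Fin d → D) (hx : (Ideal.span (Set.range x)).radical.IsMaximal) :
    ∃ (K : Type u) (_ : Field K) (_ : CharZero K) (φ : MvPowerSeries (Fin d) K →+* D), (∀ i, φ (MvPowerSeries.X i) = x i) ∧
      φ.Finite ∧ Function.Injective φ := by
  let m := IsLocalRing.maximalIdeal D
  let K := IsLocalRing.ResidueField D
  let _ : Field K := inferInstance
  have hK : CharZero K := algebraRat.charZero K
  have hsm : Algebra.FormallySmooth ℚ K := by
    obtain ⟨v, hv⟩ := exists_isTranscendenceBasis ℚ K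
    have h1 : Algebra.IsAlgebraic (IntermediateField.adjoin ℚ (Set.range ((↑) : v → K))) K := hv.isAlgebraic_field
    exact Algebra.FormallySmooth.of_algebraicIndependent_of_isSeparable hv.1
  obtain ⟨s, hs⟩ := Algebra.FormallySmooth.exists_mkₐ_comp_eq_of_isAdicComplete (R := ℚ) (A := K) (S := D) (I := m)
    (RingHom.toRatAlgHom (R := K) (S := D ⧸ m) (RingHom.id K))
  have hs' : ∀ a : K, IsLocalRing.residue D (s a) = a := fun a => DFunLike.congr_fun hs a
  have hxm' : ∀ i, x i ∈ m := fun i => by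
    change x i ∈ IsLocalRing.maximalIdeal D
    rw [← IsLocalRing.eq_maximalIdeal hx]
    exact Ideal.le_radical (Ideal.subset_span ⟨i, rfl⟩)
  obtain ⟨φ, hφX, hφC⟩ := ps_map s.toRingHom m x hxm'
  let A := MvPowerSeries (Fin d) K
  let _ : Algebra A D := φ.toAlgebra
  have hAD : algebraMap A D = φ := rfl
  let _ : Algebra K D := s.toRingHom.toAlgebra
  have hmapX : (IsLocalRing.maximalIdeal A).map (algebraMap A D) = Ideal.span (Set.range x) := by
    rw [maxIdeal_eq, Ideal.map_span, ← Set.range_comp]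
    congr 2
    ext i
    exact hφX i
  have hne : Ideal.span (Set.range x) ≠ ⊤ := by
    intro h
    rw [h] at hx
    exact hx.ne_top (Ideal.radical_top _)
  obtain ⟨n, hn⟩ := Ideal.exists_pow_le_of_le_radical_of_fg (I := m) (J := Ideal.span (Set.range x)) (by rw [IsLocalRing.eq_maximalIdeal hx])
    (IsNoetherian.noetherian m)
  obtain ⟨F, ⟨G, hG⟩, hFz⟩ := span_approx (K := K) m (IsNoetherian.noetherian m) (by
    intro z
    refine ⟨IsLocalRing.residue D z, ?_⟩
    rw [← IsLocalRing.residue_eq_zero_iff, map_sub, sub_eq_zero]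
    exact (hs' _).symm) n
  have hfin : Module.Finite A D := by
    have hc := mvps_complete (K := K) d
    have hH : IsHausdorff ((IsLocalRing.maximalIdeal A).map (algebraMap A D)) D := by
      rw [hmapX]; exact IsHausdorff.of_isLocalRing _ _ hne
    refine finite_of_complete (IsLocalRing.maximalIdeal A) (Submodule.span A (G : Set D)) ⟨G, rfl⟩ ?_
    intro z
    obtain ⟨f, hf, hz⟩ := hFz z
    refine ⟨f, ?_, ?_⟩
    · rw [← hG] at hf
      obtain ⟨b, hb, hbz⟩ := (Submodule.mem_span_finset).1 hf
      rw [← hbz]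
      refine Submodule.sum_mem _ fun g hg => ?_
      have : b g • g = (MvPowerSeries.C (b g) : A) • g := by
        rw [Algebra.smul_def, Algebra.smul_def]
        congr 1
        exact (hφC _).symm
      rw [this]
      exact Submodule.smul_mem _ _ (Submodule.subset_span hg)
    · rw [hmapX]; exact hn hz
  refine ⟨K, inferInstance, hK, φ, hφX, hfin, ?_⟩
  rw [injective_iff_map_eq_zero]
  intro a ha
  by_contra ha0
  have hdA : IsDomain A := NoZeroDivisors.to_isDomain _
  let B := A ⧸ Ideal.span {a}
  let φ' : B →+* D := Ideal.Quotient.lift _ φ (by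
    intro b hb
    obtain ⟨c, rfl⟩ := Ideal.mem_span_singleton'.1 hb
    rw [map_mul, ha, mul_zero])
  let _ : Algebra B D := φ'.toAlgebra
  have htow : IsScalarTower A B D := @IsScalarTower.of_algebraMap_eq A B D _ _ _ (Ideal.Quotient.algebra A) _ _ (fun b => rfl)
  have : Module.Finite B D := Module.Finite.of_restrictScalars_finite A B D
  have h1 : ringKrullDim D ≤ ringKrullDim B := dim_le_of_integral
  have h2 : ringKrullDim B + 1 ≤ ringKrullDim A := ringKrullDim_quotient_succ_le_of_nonZeroDivisor (mem_nonZeroDivisors_of_ne_zero ha0)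
  have h3 := dim_mvps K d
  have h4 : (d : WithBot ℕ∞) + 1 ≤ d := by
    rw [← hd]
    calc ringKrullDim D + 1 ≤ ringKrullDim B + 1 := by gcongr
      _ ≤ ringKrullDim A := h2
      _ ≤ d := h3
      _ = _ := hd.symm
  have h5 : d + 1 ≤ d := by exact_mod_cast h4
  omega
end Rob

namespace Rob

theorem adic_noeth (R : Type u) [CommRing R] [IsNoetherianRing R] (I : Ideal R) :
    IsNoetherianRing (AdicCompletion I R) := by
  have fg : I.FG := IsNoetherian.noetherian I
  obtain ⟨r, f, hf⟩ := Submodule.fg_iff_exists_fin_generating_family.mp fg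
  have hf' : Ideal.span (Set.range f) = I := hf
  haveI := AdicCompletion.isAdicComplete_self I fg
  obtain ⟨φ, hφX, hφC⟩ := ps_map (algebraMap R (AdicCompletion I R))
    (I.map (algebraMap R (AdicCompletion I R)))
    (fun i => algebraMap R (AdicCompletion I R) (f i))
    (fun i => Ideal.mem_map_of_mem _ (hf' ▸ Ideal.subset_span ⟨i, rfl⟩))
  have hJ : (Ideal.span (Set.range (MvPowerSeries.X : Fin r → MvPowerSeries (Fin r) R))).map φ
      = I.map (algebraMap R (AdicCompletion I R)) := by
    refine Eq.trans ?_ (congrArg (Ideal.map (algebraMap R (AdicCompletion I R))) hf')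
    rw [Ideal.map_span, Ideal.map_span, ← Set.range_comp, ← Set.range_comp]
    congr 2
    funext i
    exact hφX i
  have hs : Function.Surjective φ := by
    haveI : IsHausdorff ((Ideal.span (Set.range (MvPowerSeries.X : Fin r → MvPowerSeries (Fin r) R))).map φ)
      (AdicCompletion I R) := by rw [hJ]; infer_instance
    refine surjective_of_mk_map_comp_surjective (I := Ideal.span (Set.range (MvPowerSeries.X : Fin r → MvPowerSeries (Fin r) R))) φ ?_
    intro y
    obtain ⟨y, rfl⟩ := Ideal.Quotient.mk_surjective y
    obtain ⟨a, ha⟩ := Ideal.Quotient.mk_surjective (AdicCompletion.evalOneₐ I y)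
    refine ⟨MvPowerSeries.C a, ?_⟩
    rw [RingHom.comp_apply, hφC, Ideal.Quotient.eq, hJ, ← AdicCompletion.ker_evalOneₐ_eq_map I fg]
    rw [RingHom.mem_ker, map_sub, sub_eq_zero]
    exact ha
  exact isNoetherianRing_of_surjective _ _ φ hs

theorem complete_of_surj {B D : Type u} [CommRing B] [CommRing D] [IsLocalRing B] [IsLocalRing D]
    [IsNoetherianRing B] [IsNoetherianRing D]
    [IsAdicComplete (IsLocalRing.maximalIdeal B) B] (π : B →+* D) (hπ : Function.Surjective π) :
    IsAdicComplete (IsLocalRing.maximalIdeal D) D := by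
  letI := π.toAlgebra
  have hm : IsLocalRing.maximalIdeal D = (IsLocalRing.maximalIdeal B).map (algebraMap B D) := by
    symm
    have h1 : IsLocalRing.maximalIdeal B = (IsLocalRing.maximalIdeal D).comap (algebraMap B D) := by
      haveI : ((IsLocalRing.maximalIdeal D).comap (algebraMap B D)).IsMaximal :=
        Ideal.comap_isMaximal_of_surjective _ hπ
      exact (IsLocalRing.eq_maximalIdeal this).symm
    rw [h1]
    exact Ideal.map_comap_of_surjective _ hπ _
  have hp : IsPrecomplete (IsLocalRing.maximalIdeal B) D := by
    rw [← AdicCompletion.of_surjective_iff]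
    have h2 := (AdicCompletion.map_surjective (IsLocalRing.maximalIdeal B)
      (f := (Algebra.ofId B D).toLinearMap) hπ).comp
      (AdicCompletion.of_surjective (IsLocalRing.maximalIdeal B) B)
    intro y
    obtain ⟨b, hb⟩ := h2 y
    exact ⟨π b, hb⟩
  have hp' : IsPrecomplete (IsLocalRing.maximalIdeal D) D := by
    rw [hm]; exact IsPrecomplete.map_algebraMap_iff.mpr hp
  haveI : IsHausdorff (IsLocalRing.maximalIdeal D) D := inferInstance
  exact { }

end Rob

namespace Rob

theorem cld_facts {R : Type u} [CommRing R] [IsNoetherianRing R] {D : Type u} [CommRing D]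
    [Algebra R D] (h : IsCompleteLocalDomainOf R D) :
    IsDomain D ∧ IsNoetherianRing D ∧ ∃ _ : IsLocalRing D,
      IsAdicComplete (IsLocalRing.maximalIdeal D) D := by
  obtain ⟨m, hm, q, hq, e, -⟩ := h
  haveI : m.IsPrime := hm.isPrime
  haveI : IsNoetherianRing (Localization.AtPrime m) :=
    IsLocalization.isNoetherianRing m.primeCompl _ inferInstance
  haveI hq' : q.IsPrime := hq.1.1
  haveI hB := adic_noeth (Localization.AtPrime m) (IsLocalRing.maximalIdeal (Localization.AtPrime m))
  have hdom : IsDomain D := e.toMulEquiv.isDomain _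
  set B := AdicCompletion (IsLocalRing.maximalIdeal (Localization.AtPrime m))
    (Localization.AtPrime m) with hBdef
  let π : B →+* D := e.symm.toRingHom.comp (Ideal.Quotient.mk q)
  have hπ : Function.Surjective π := e.symm.surjective.comp Ideal.Quotient.mk_surjective
  have hn : IsNoetherianRing D := isNoetherianRing_of_surjective _ _ π hπ
  have hl : IsLocalRing D := IsLocalRing.of_surjective' π hπ
  exact ⟨hdom, hn, hl, complete_of_surj π hπ⟩

theorem qld_of_filtration {T : Type u} [CommRing T] {d t h : ℕ} (x : Fin d → T)
    (H : HasQLFiltration T (Ideal.span (Set.range x))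
      (T ⧸ Ideal.span (Set.range fun i => x i ^ t)) h) : QLD x t h := by
  obtain ⟨c, hmono, h0, hlast, hc⟩ := H
  choose m' hm' using fun i => (hc i).1
  choose m hm using fun i => Ideal.Quotient.mk_surjective (m' i)
  have key : ∀ k : Fin (h + 1), ∀ z ∈ c k, ∃ a : Fin h → T, (∀ l : Fin h, k ≤ l.castSucc → a l = 0) ∧
      z = ∑ l, a l • m' l := by
    intro k
    induction k using Fin.induction with
    | zero =>
      intro z hz
      rw [h0, Submodule.mem_bot] at hz
      exact ⟨0, fun _ _ => rfl, by simp [hz]⟩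
    | succ i ih =>
      intro z hz
      rw [hm' i] at hz
      obtain ⟨y, hy, w, hw, rfl⟩ := Submodule.mem_sup.mp hz
      obtain ⟨b, rfl⟩ := Submodule.mem_span_singleton.mp hw
      obtain ⟨a, ha, rfl⟩ := ih y hy
      refine ⟨a + Pi.single i b, ?_, ?_⟩
      · intro l hl
        have hil : i < l := by
          rw [Fin.le_def] at hl; rw [Fin.lt_def]; simp at hl; omega
        have h1 : a l = 0 := ha l (by rw [Fin.le_def]; simpa using hil.le)
        rw [Pi.add_apply, h1, Pi.single_eq_of_ne hil.ne', add_zero]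
      · simp only [Pi.add_apply, add_smul, Finset.sum_add_distrib]
        congr 1
        rw [Finset.sum_eq_single i]
        · simp
        · intro j _ hj; simp [Pi.single_eq_of_ne hj]
        · simp
  have lift : ∀ (z : T) (a : Fin h → T),
      Ideal.Quotient.mk (Ideal.span (Set.range fun i => x i ^ t)) z = ∑ l, a l • m' l →
      ∃ e : Fin d → T, z = ∑ l, a l * m l + ∑ s, e s * x s ^ t := by
    intro z a hz
    have h1 : Ideal.Quotient.mk (Ideal.span (Set.range fun i => x i ^ t)) z =
        Ideal.Quotient.mk (Ideal.span (Set.range fun i => x i ^ t)) (∑ l, a l * m l) := by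
      rw [hz, map_sum]
      refine Finset.sum_congr rfl fun l _ => ?_
      rw [map_mul, hm, Algebra.smul_def]; rfl
    rw [Ideal.Quotient.eq] at h1
    obtain ⟨e, he⟩ := Ideal.mem_span_range_iff_exists_fun.mp h1
    exact ⟨e, by rw [he]; ring⟩
  have hA : ∀ (i : Fin h) (j : Fin d), ∃ (a : Fin h → T) (e : Fin d → T), (∀ l, i ≤ l → a l = 0) ∧
      x j * m i = ∑ l, a l * m l + ∑ s, e s * x s ^ t := by
    intro i j
    have h1 : m' i ∈ c i.succ := by
      rw [hm' i]; exact Submodule.mem_sup_right (Submodule.mem_span_singleton_self _)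
    have h2 := (hc i).2 (x j) (Ideal.subset_span ⟨j, rfl⟩) _ h1
    obtain ⟨a, ha, hz⟩ := key _ _ h2
    obtain ⟨e, he⟩ := lift (x j * m i) a (by
      rw [← hz, map_mul, hm, Algebra.smul_def]; rfl)
    exact ⟨a, e, fun l hl => ha l (by rw [Fin.le_def]; simpa using hl), he⟩
  choose cc ee hcc hee using hA
  obtain ⟨a, -, hz⟩ := key (Fin.last h) (Ideal.Quotient.mk _ 1) (by rw [hlast]; trivial)
  obtain ⟨v, hv⟩ := lift 1 a hz
  exact ⟨m, cc, ee, a, v, hcc, hee, hv⟩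

theorem finite_robust {D : Type u} [CommRing D] [IsDomain D] [IsNoetherianRing D] [IsLocalRing D]
    [IsAdicComplete (IsLocalRing.maximalIdeal D) D] (K : Type u) [Field K] (f : K →+* D)
    (T : Type u) [CommRing T] [Algebra D T] [Module.Finite D T]
    (hinj : Function.Injective (algebraMap D T)) : IsRobustOver D T := by
  intro d x hd hx
  refine ⟨?_, ?_⟩
  · intro htop
    have hle : Ideal.span (Set.range x) ≤ IsLocalRing.maximalIdeal D :=
      Ideal.le_radical.trans (IsLocalRing.le_maximalIdeal hx.ne_top)
    have hI : Algebra.IsIntegral D T := inferInstance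
    obtain ⟨Q, hQ⟩ := RingHom.IsIntegral.comap_surjective
      (algebraMap_isIntegral_iff.mpr hI) hinj
      ⟨IsLocalRing.maximalIdeal D, inferInstance⟩
    have hQ' : Q.asIdeal.comap (algebraMap D T) = IsLocalRing.maximalIdeal D :=
      congrArg PrimeSpectrum.asIdeal hQ
    apply Q.2.ne_top
    rw [eq_top_iff, ← htop, Ideal.span_le]
    rintro _ ⟨i, rfl⟩
    have : x i ∈ Q.asIdeal.comap (algebraMap D T) := by
      rw [hQ']; exact hle (Ideal.subset_span ⟨i, rfl⟩)
    exact this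
  · intro t _
    refine le_sInf ?_
    rintro _ ⟨h, rfl, H⟩
    have H := qld_of_filtration _ H
    suffices t ^ d ≤ h by exact_mod_cast this
    obtain ⟨p, hp⟩ := CharP.exists K
    rcases CharP.char_is_prime_or_zero K p with hpp | rfl
    · haveI : Fact p.Prime := ⟨hpp⟩
      haveI : Nontrivial T := hinj.nontrivial
      haveI : CharP T p := charP_of_injective_ringHom ((algebraMap D T).comp f).injective p
      exact charp hinj p hd.ge x hx H
    · haveI : CharZero K := CharP.charP_to_charZero K
      letI : Algebra ℚ D := (f.comp (algebraMap ℚ K)).toAlgebra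
      obtain ⟨L, _, _, φ, hφX, hφf, hφi⟩ := cohen hd x hx
      letI : Algebra (MvPowerSeries (Fin d) L) T := ((algebraMap D T).comp φ).toAlgebra
      have hfin : ((algebraMap D T).comp φ).Finite :=
        RingHom.Finite.comp (RingHom.finite_algebraMap.mpr inferInstance) hφf
      haveI : Module.Finite (MvPowerSeries (Fin d) L) T := hfin
      refine char0 (K := L) (T := T) (hinj.comp hφi) (t := t) ?_
      convert H using 2 with i
      exact congrArg (algebraMap D T) (hφX i)

theorem field_to_cld {R : Type u} [CommRing R] {D : Type u} [CommRing D] [IsDomain D]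
    [Algebra R D] (hfield : ∃ K : Subring (R ⧸ nilradical R), IsField K) :
    ∃ (K : Type u) (_ : Field K), Nonempty (K →+* D) := by
  obtain ⟨K, hK⟩ := hfield
  have hl : ∀ a ∈ nilradical R, algebraMap R D a = 0 := fun a ha =>
    ((mem_nilradical.mp ha).map (algebraMap R D)).eq_zero
  let g : (R ⧸ nilradical R) →+* D := Ideal.Quotient.lift (nilradical R) (algebraMap R D) hl
  exact ⟨K, hK.toField, ⟨g.comp K.subtype⟩⟩

end Rob

/-- If `R` is a Noetherian ring such that `R/√(0)` contains a field,
then every module-finite extension `S` of `R` is a robust `R`-algebra; consequently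
`IS ∩ R` is contained in the robust closure of `I` for every ideal `I` of `R`. -/
theorem moduleFinite_extension_isRobust
    (R : Type u) [CommRing R] [IsNoetherianRing R]
    (hfield : ∃ K : Subring (R ⧸ nilradical R), IsField K)
    (S : Type u) [CommRing S] [Algebra R S] [Module.Finite R S]
    (hinj : Function.Injective (algebraMap R S)) :
    IsRobustAlgebra R S ∧
    ∀ (I : Ideal R) (r : R), algebraMap R S r ∈ I.map (algebraMap R S) →
      MemRobustClosure R R I r := by
  have main : IsRobustAlgebra R S := by
    intro D _ _ hD
    obtain ⟨_, _, _, _⟩ := Rob.cld_facts hD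
    obtain ⟨K, _, ⟨f⟩⟩ := Rob.field_to_cld (D := D) hfield
    exact Rob.finite_robust K f (D ⊗[R] S) (Rob.bc_inj hinj)
  refine ⟨main, fun I r hr D _ _ hD => ?_⟩
  have hrob := main D hD
  have hgen : ∀ s ∈ I.map (algebraMap R S),
      ((1 : D) ⊗ₜ[R] s) ⊗ₜ[D] ((1 : D) ⊗ₜ[R] (1 : R)) ∈
        (Submodule.baseChange D I).baseChange (D ⊗[R] S) := by
    intro s hs
    refine Submodule.span_induction ?_ ?_ ?_ ?_ hs
    · rintro _ ⟨a, ha, rfl⟩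
      have h1 : ((1 : D) ⊗ₜ[R] (algebraMap R S a)) ⊗ₜ[D] ((1 : D) ⊗ₜ[R] (1 : R)) =
          (1 : D ⊗[R] S) ⊗ₜ[D] ((1 : D) ⊗ₜ[R] a) := by
        have e1 : ((1 : D) ⊗ₜ[R] (algebraMap R S a)) = (algebraMap R D a) • (1 : D ⊗[R] S) := by
          rw [Algebra.TensorProduct.one_def, TensorProduct.smul_tmul', Algebra.algebraMap_eq_smul_one,
            ← TensorProduct.smul_tmul, Algebra.algebraMap_eq_smul_one, smul_eq_mul, mul_one]
        have e2 : ((1 : D) ⊗ₜ[R] a) = (algebraMap R D a) • ((1 : D) ⊗ₜ[R] (1 : R)) := by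
          rw [TensorProduct.smul_tmul', Algebra.algebraMap_eq_smul_one, smul_eq_mul, mul_one,
            TensorProduct.smul_tmul, smul_eq_mul, mul_one]
        rw [e1, e2, TensorProduct.smul_tmul]
      rw [h1]
      exact Submodule.tmul_mem_baseChange_of_mem _ (Submodule.tmul_mem_baseChange_of_mem _ ha)
    · simp
    · intro a b _ _ ha hb
      rw [TensorProduct.tmul_add, TensorProduct.add_tmul]
      exact add_mem ha hb
    · intro c a _ ha
      have h1 : ((1 : D) ⊗ₜ[R] (c • a)) ⊗ₜ[D] ((1 : D) ⊗ₜ[R] (1 : R)) =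
        ((1 : D) ⊗ₜ[R] c : D ⊗[R] S) • (((1 : D) ⊗ₜ[R] a) ⊗ₜ[D] ((1 : D) ⊗ₜ[R] (1 : R))) := by
        rw [TensorProduct.smul_tmul', smul_eq_mul, smul_eq_mul,
          Algebra.TensorProduct.tmul_mul_tmul, mul_one]
      rw [h1]
      exact Submodule.smul_mem _ _ ha
  have hforce : IsForcingAlgebra D (D ⊗[R] R) (Submodule.baseChange D I) ((1 : D) ⊗ₜ[R] r)
      (D ⊗[R] S) := by
    have h2 := hgen _ hr
    have h1 : ((1 : D) ⊗ₜ[R] (algebraMap R S r)) ⊗ₜ[D] ((1 : D) ⊗ₜ[R] (1 : R)) =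
          (1 : D ⊗[R] S) ⊗ₜ[D] ((1 : D) ⊗ₜ[R] r) := by
      have e1 : ((1 : D) ⊗ₜ[R] (algebraMap R S r)) = (algebraMap R D r) • (1 : D ⊗[R] S) := by
        rw [Algebra.TensorProduct.one_def, TensorProduct.smul_tmul', Algebra.algebraMap_eq_smul_one,
          ← TensorProduct.smul_tmul, Algebra.algebraMap_eq_smul_one, smul_eq_mul, mul_one]
      have e2 : ((1 : D) ⊗ₜ[R] r) = (algebraMap R D r) • ((1 : D) ⊗ₜ[R] (1 : R)) := by
        rw [TensorProduct.smul_tmul', Algebra.algebraMap_eq_smul_one, smul_eq_mul, mul_one,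
          TensorProduct.smul_tmul, smul_eq_mul, mul_one]
      rw [e1, e2, TensorProduct.smul_tmul]
    rw [h1] at h2
    exact h2
  have himm : (1 : D) ⊗ₜ[R] r ∈ immediateRobustClosure D (D ⊗[R] R) (Submodule.baseChange D I) :=
    Submodule.mem_sup_right (Submodule.subset_span ⟨D ⊗[R] S, inferInstance, inferInstance, hforce, hrob⟩)
  exact (le_iSup (fun j : ℕ => (immediateRobustClosure D (D ⊗[R] R))^[j] (Submodule.baseChange D I)) 1) himm
end
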